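/- For every integer d ≥ 1 there exist constants c, C > 0 such that for every integer N ≥ 2, every set A ⊆ [N] containing no non-trivial solutions to the equation x₁ + x₂ + d·x₃ + d·x₄ = 2y₁ + 2d·y₂ satisfies |A| ≤ C · e^{−c·(log N)^{1/9}} · N^{1/2}. -/

import Mathlib

/-!
If `A₁` and `A₂` are the two halves of `A`, the equation makes `(x, y) ↦ x + d * y` injective on
`A₁ × A₂`, with an image free of three-term arithmetic progressions. Thus about `|A| ^ 2 / 4`
integers in `[(d + 1) * N]` contain no three-term progression, and the theorem follows from the
Kelley–Meka bound with the exponent of Bloom and Sisask.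

That bound is a density increment over Bohr sets. If `f` has density `α ≈ exp (-L)` with respect to
a Bohr set and its support is free of progressions, then `∑ f x * f z` over `x + z = 2 * y` almost
vanishes on average over `y` in the support, so by Hölder the convolution of `f` deviates from its
mean in a moment of order about `L`. Spectral positivity turns this into a large moment of the
autocorrelation of `f`. Sifting (dependent random choice) produces a set of relative density
`exp (-O(L ^ 2))` whose difference set mostly lies where the autocorrelation is large. Croot–Sisask
almost periodicity together with Chang's theorem makes this structure invariant under a Bohr set
with `O(L ^ 6)` new frequencies, and hence the density of `f` on a translate of it exceeds `α` by a
constant factor. There is room for only `O(L)` such increments.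

Bohr sets are replaced throughout by the probability measures proportional to `exp (-ℓ)`, where the
length `ℓ` is a combination of the functions `t ↦ ‖1 - γ t‖`. A translation by `t` changes such a
measure by a factor of at most `exp (ℓ t)`, so every Bohr set is automatically regular.
-/

namespace KelleyMeka

open Finset Real
open scoped Pointwise ComplexConjugate

section Correlations

variable {G : Type*} [AddCommGroup G] [Fintype G]

/-- The average of `f` around `y` with weights `φ`; for a probability measure `φ` this is the
convolution of `f` with the reflection of `φ`. -/
def weightedAvg (φ f : G → ℝ) (y : G) : ℝ := ∑ s, φ s * f (y + s)

/-- The autocorrelation `f ∘ f` of a real function on a finite group. -/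
def autocorr (f : G → ℝ) (t : G) : ℝ := ∑ x, f x * f (x + t)

/-- The convolution `f * f` of a real function with itself. -/
def selfConv (f : G → ℝ) (t : G) : ℝ := ∑ x, f x * f (t - x)

/-- The expectation of `F (u - v)` for `u` and `v` drawn independently with weights `φ`. -/
def diffAvg (φ F : G → ℝ) : ℝ := ∑ u, ∑ v, φ u * φ v * F (u - v)

/-- The weights `η` multiplied by the translates of `a` by `x₁, …, xₖ`. When `a` is the indicator
function of `A` this conditions `η` on the event `u ∈ ⋂ᵢ (A - xᵢ)`. -/
def tilt {k : ℕ} (η a : G → ℝ) (x : Fin k → G) (u : G) : ℝ := η u * ∏ i, a (x i + u)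

variable {φ F F' : G → ℝ}

lemma diffAvg_nonneg (hφ : ∀ s, 0 ≤ φ s) (hF : ∀ t, 0 ≤ F t) : 0 ≤ diffAvg φ F :=
  sum_nonneg fun u _ => sum_nonneg fun v _ => mul_nonneg (mul_nonneg (hφ u) (hφ v)) (hF _)

lemma diffAvg_mono (hφ : ∀ s, 0 ≤ φ s) (hF : ∀ t, F t ≤ F' t) : diffAvg φ F ≤ diffAvg φ F' :=
  sum_le_sum fun u _ => sum_le_sum fun v _ =>
    mul_le_mul_of_nonneg_left (hF _) (mul_nonneg (hφ u) (hφ v))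

lemma diffAvg_add (φ F F' : G → ℝ) :
    diffAvg φ (fun t => F t + F' t) = diffAvg φ F + diffAvg φ F' := by
  simp only [diffAvg, mul_add, sum_add_distrib]

lemma diffAvg_const_mul (φ F : G → ℝ) (c : ℝ) :
    diffAvg φ (fun t => c * F t) = c * diffAvg φ F := by
  simp only [diffAvg, mul_sum, mul_left_comm c]

lemma diffAvg_const (φ : G → ℝ) (c : ℝ) : diffAvg φ (fun _ => c) = (∑ s, φ s) ^ 2 * c := by
  simp only [diffAvg, ← sum_mul, ← mul_sum, sq]

lemma diffAvg_sum {ι : Type*} (s : Finset ι) (φ : G → ℝ) (F : ι → G → ℝ) :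
    diffAvg φ (fun t => ∑ i ∈ s, F i t) = ∑ i ∈ s, diffAvg φ (F i) := by
  simp only [diffAvg, mul_sum]
  rw [sum_comm]
  simp_rw [sum_comm (s := s)]
  exact sum_comm

lemma autocorr_nonneg {f : G → ℝ} (hf : ∀ x, 0 ≤ f x) (t : G) : 0 ≤ autocorr f t :=
  sum_nonneg fun x _ => mul_nonneg (hf x) (hf _)

lemma autocorr_sub (f : G → ℝ) (u v : G) : autocorr f (u - v) = ∑ x, f (x + u) * f (x + v) := by
  rw [autocorr, ← Equiv.sum_comp (Equiv.addRight v)]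
  refine sum_congr rfl fun x _ => ?_
  rw [Equiv.coe_addRight, mul_comm, add_assoc, add_sub_cancel]

lemma autocorr_comp_neg (f : G → ℝ) (t : G) : autocorr (fun x => f (-x)) t = autocorr f t := by
  rw [autocorr, ← Equiv.sum_comp (Equiv.subLeft (-t))]
  refine sum_congr rfl fun x _ => ?_
  rw [Equiv.subLeft_apply, mul_comm, show -(-t - x + t) = x by abel,
    show -(-t - x) = x + t by abel]

lemma selfConv_sub (f : G → ℝ) (u v : G) :
    selfConv f (u - v) = ∑ x, f (x + u) * f (-(x + v)) := by
  rw [selfConv, ← Equiv.sum_comp (Equiv.addRight u)]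
  refine sum_congr rfl fun x _ => ?_
  rw [Equiv.coe_addRight, show u - v - (x + u) = -(x + v) by abel]

lemma diffAvg_pow_mul_eq_sum_tilt (η f g T Y : G → ℝ) (k : ℕ)
    (hT : ∀ u v, T (u - v) = ∑ x, f (x + u) * g (x + v)) :
    diffAvg η (fun t => T t ^ k * Y t) =
      ∑ x : Fin k → G, ∑ u, ∑ v, tilt η f x u * tilt η g x v * Y (u - v) := by
  simp_rw [diffAvg, tilt, hT, Fintype.sum_pow, sum_mul, mul_sum, prod_mul_distrib]
  rw [sum_comm (s := univ (α := Fin k → G))]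
  refine sum_congr rfl fun u _ => ?_
  rw [sum_comm (s := univ (α := Fin k → G))]
  exact sum_congr rfl fun v _ => sum_congr rfl fun x _ => by ring

lemma diffAvg_pow_eq_sum_tilt (η f g T : G → ℝ) (k : ℕ)
    (hT : ∀ u v, T (u - v) = ∑ x, f (x + u) * g (x + v)) :
    diffAvg η (fun t => T t ^ k) =
      ∑ x : Fin k → G, (∑ u, tilt η f x u) * ∑ v, tilt η g x v := by
  simpa only [mul_one, ← sum_mul_sum] using diffAvg_pow_mul_eq_sum_tilt η f g T (fun _ => 1) k hT

lemma diffAvg_autocorr_pow_mul (η f Y : G → ℝ) (k : ℕ) :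
    diffAvg η (fun t => autocorr f t ^ k * Y t) =
      ∑ x : Fin k → G, diffAvg (tilt η f x) Y :=
  diffAvg_pow_mul_eq_sum_tilt η f f (autocorr f) Y k (autocorr_sub f)

lemma diffAvg_autocorr_pow (η f : G → ℝ) (k : ℕ) :
    diffAvg η (fun t => autocorr f t ^ k) = ∑ x : Fin k → G, (∑ u, tilt η f x u) ^ 2 := by
  simp_rw [diffAvg_pow_eq_sum_tilt η f f (autocorr f) k (autocorr_sub f), sq]

lemma diffAvg_autocorr_pow_nonneg (η f : G → ℝ) (k : ℕ) :
    0 ≤ diffAvg η (fun t => autocorr f t ^ k) := by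
  rw [diffAvg_autocorr_pow]; positivity

lemma diffAvg_selfConv_pow_le (η f : G → ℝ) (k : ℕ) :
    diffAvg η (fun t => selfConv f t ^ k) ≤ diffAvg η (fun t => autocorr f t ^ k) := by
  rw [diffAvg_pow_eq_sum_tilt η f (fun x => f (-x)) (selfConv f) k (selfConv_sub f)]
  have hneg : diffAvg η (fun t => autocorr f t ^ k) =
      ∑ x : Fin k → G, (∑ u, tilt η (fun x => f (-x)) x u) ^ 2 := by
    simp_rw [← diffAvg_autocorr_pow, autocorr_comp_neg]
  calc ∑ x : Fin k → G, (∑ u, tilt η f x u) * ∑ v, tilt η (fun x => f (-x)) x v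
      ≤ ∑ x : Fin k → G,
          ((∑ u, tilt η f x u) ^ 2 + (∑ u, tilt η (fun x => f (-x)) x u) ^ 2) / 2 :=
        sum_le_sum fun x _ => by
          linarith [two_mul_le_add_sq (∑ u, tilt η f x u) (∑ v, tilt η (fun x => f (-x)) x v)]
    _ = diffAvg η (fun t => autocorr f t ^ k) := by
        rw [← sum_div, sum_add_distrib, ← diffAvg_autocorr_pow, ← hneg]; ring

lemma eight_pow_le_choose (p : ℕ) : 8 ^ p ≤ (8 * p).choose p := by
  have h : ∏ i ∈ range p, 8 * (p - i) ≤ ∏ i ∈ range p, (8 * p - i) :=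
    prod_le_prod' fun i hi => by have := mem_range.1 hi; omega
  rw [prod_mul_distrib, ← Nat.descFactorial_eq_prod_range, ← Nat.descFactorial_eq_prod_range,
    Nat.descFactorial_self, prod_const, card_range,
    Nat.descFactorial_eq_factorial_mul_choose, mul_comm] at h
  exact Nat.le_of_mul_le_mul_left h (Nat.factorial_pos p)

/- All moments of an autocorrelation are nonnegative, so the `p`-th term of the binomial expansion
bounds the whole `8p`-th moment from below. -/
lemma le_diffAvg_const_add_autocorr_pow (η g : G → ℝ) (p : ℕ) {c : ℝ} (hc : 0 < c)
    (h : (c / 4) ^ p ≤ diffAvg η (fun t => autocorr g t ^ p)) :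
    2 ^ p * c ^ (8 * p) ≤ diffAvg η (fun t => (c + autocorr g t) ^ (8 * p)) := by
  have hexpand : diffAvg η (fun t => (c + autocorr g t) ^ (8 * p)) = ∑ k ∈ range (8 * p + 1),
      c ^ (8 * p - k) * (8 * p).choose k * diffAvg η (fun t => autocorr g t ^ k) := by
    simp_rw [← diffAvg_const_mul, ← diffAvg_sum, add_comm c, add_pow]
    congr! 3
    ring
  have hchoose : (8 : ℝ) ^ p ≤ (8 * p).choose p := by exact_mod_cast eight_pow_le_choose p
  have hsplit : c ^ (8 * p) = c ^ (8 * p - p) * c ^ p := by rw [← pow_add]; congr 1; omega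
  calc (2 : ℝ) ^ p * c ^ (8 * p) = c ^ (8 * p - p) * 8 ^ p * (c / 4) ^ p := by
        rw [hsplit, div_pow, show (8 : ℝ) = 2 * 4 by norm_num, mul_pow]; field_simp
    _ ≤ c ^ (8 * p - p) * (8 * p).choose p * diffAvg η (fun t => autocorr g t ^ p) := by gcongr
    _ ≤ diffAvg η (fun t => (c + autocorr g t) ^ (8 * p)) := by
        rw [hexpand]
        refine single_le_sum (f := fun k => c ^ (8 * p - k) * (8 * p).choose k *
          diffAvg η (fun t => autocorr g t ^ k)) (fun k _ => ?_) (mem_range.2 (by omega))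
        have := diffAvg_autocorr_pow_nonneg η g k
        positivity

/- Jensen's inequality for the even power `p` and the probability weights `W i * X i / β`. -/
lemma mul_pow_le_sum_mul_pow {ι : Type*} {s : Finset ι} {W X h : ι → ℝ} (hW : ∀ i ∈ s, 0 ≤ W i)
    (hX0 : ∀ i ∈ s, 0 ≤ X i) (hX1 : ∀ i ∈ s, X i ≤ 1) {p : ℕ} (hp : Even p) {v β : ℝ} (hv : 0 ≤ v)
    (hβ : 0 < β) (hs : ∑ i ∈ s, W i * X i = β) (hh : ∑ i ∈ s, W i * X i * h i ≤ -(v * β)) :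
    β * v ^ p ≤ ∑ i ∈ s, W i * h i ^ p := by
  have hjensen : (∑ i ∈ s, W i * X i / β * h i) ^ p ≤ ∑ i ∈ s, W i * X i / β * h i ^ p := by
    simpa only [smul_eq_mul] using (hp.convexOn_pow (𝕜 := ℝ)).map_sum_le
      (w := fun i => W i * X i / β) (p := h)
      (fun i hi => div_nonneg (mul_nonneg (hW i hi) (hX0 i hi)) hβ.le)
      (by rw [← sum_div, hs, div_self hβ.ne']) (fun _ _ => trivial)
  simp_rw [div_mul_eq_mul_div, ← sum_div] at hjensen
  have hmean : v ≤ -((∑ i ∈ s, W i * X i * h i) / β) := by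
    rw [← neg_div, le_div_iff₀ hβ]; linarith
  calc β * v ^ p ≤ β * ((∑ i ∈ s, W i * X i * h i) / β) ^ p := by
        rw [← hp.neg_pow ((∑ i ∈ s, W i * X i * h i) / β)]; gcongr
    _ ≤ ∑ i ∈ s, W i * X i * h i ^ p := by rwa [← le_div_iff₀' hβ]
    _ ≤ ∑ i ∈ s, W i * h i ^ p := sum_le_sum fun i hi =>
        mul_le_mul_of_nonneg_right (mul_le_of_le_one_right (hW i hi) (hX1 i hi)) (hp.pow_nonneg _)

end Correlations

section WeightedDensity

variable {G : Type*} [AddCommGroup G]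

/-- A group seminorm, unbundled (compare `AddGroupSeminorm`) since lengths are rescaled by real
constants and manipulated pointwise throughout. -/
structure IsLength (ℓ : G → ℝ) : Prop where
  map_zero : ℓ 0 = 0
  map_neg : ∀ x, ℓ (-x) = ℓ x
  map_add_le : ∀ x y, ℓ (x + y) ≤ ℓ x + ℓ y

lemma IsLength.map_sub_le {ℓ : G → ℝ} (hℓ : IsLength ℓ) (x y : G) : ℓ (x - y) ≤ ℓ x + ℓ y := by
  simpa only [sub_eq_add_neg, hℓ.map_neg] using hℓ.map_add_le x (-y)

lemma IsLength.nonneg {ℓ : G → ℝ} (hℓ : IsLength ℓ) (x : G) : 0 ≤ ℓ x := by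
  have h := hℓ.map_sub_le x x
  rw [sub_self, hℓ.map_zero] at h
  linarith

lemma IsLength.const_mul {ℓ : G → ℝ} (hℓ : IsLength ℓ) {k : ℝ} (hk : 0 ≤ k) :
    IsLength (fun x => k * ℓ x) where
  map_zero := by rw [hℓ.map_zero, mul_zero]
  map_neg x := by rw [hℓ.map_neg]
  map_add_le x y := by
    rw [← mul_add]
    exact mul_le_mul_of_nonneg_left (hℓ.map_add_le x y) hk

variable [Fintype G]

/-- `w²` is a symmetric positive probability measure on `G` which varies slowly at the scale
measured by the length `l`. Such measures replace the uniform measures on Bohr sets. -/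
structure IsSlowWeight (w l : G → ℝ) : Prop where
  isLength : IsLength l
  pos : ∀ x, 0 < w x
  map_neg : ∀ x, w (-x) = w x
  sum_sq : ∑ x, w x ^ 2 = 1
  le_exp_mul : ∀ x t, w (x + t) ≤ exp (l t) * w x

/-- `f : G → [0, 1]` has positive density `α` with respect to the slowly varying measure `w²`. -/
structure WeightedDensity (f w l : G → ℝ) (α : ℝ) : Prop extends IsSlowWeight w l where
  f_nonneg : ∀ x, 0 ≤ f x
  f_le_one : ∀ x, f x ≤ 1
  sum_eq : ∑ x, f x * w x ^ 2 = α
  density_pos : 0 < α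

/-- The balanced function of `f`, weighted by `w`. -/
def balanced (f w : G → ℝ) (α : ℝ) (x : G) : ℝ := (f x - α) * w x

variable {f w l : G → ℝ} {α : ℝ}

lemma two_sub_exp_le_exp_neg (t : ℝ) : 2 - exp t ≤ exp (-t) := by
  rw [exp_neg, inv_eq_one_div, le_div_iff₀ (exp_pos t)]
  nlinarith [sq_nonneg (exp t - 1)]

namespace IsSlowWeight

lemma exp_neg_mul_le (hw : IsSlowWeight w l) (x t : G) : exp (-l t) * w x ≤ w (x + t) := by
  have h := hw.le_exp_mul (x + t) (-t)
  rwa [add_neg_cancel_right, hw.isLength.map_neg, ← inv_mul_le_iff₀ (exp_pos _), ← exp_neg] at h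

lemma autocorr_le_one (hw : IsSlowWeight w l) (t : G) : autocorr w t ≤ 1 := by
  have hshift : ∑ x, w (x + t) ^ 2 = 1 :=
    (Equiv.sum_comp (Equiv.addRight t) fun x => w x ^ 2).trans hw.sum_sq
  calc ∑ x, w x * w (x + t) ≤ ∑ x, (w x ^ 2 + w (x + t) ^ 2) / 2 :=
        sum_le_sum fun x _ => by linarith [two_mul_le_add_sq (w x) (w (x + t))]
    _ = 1 := by rw [← sum_div, sum_add_distrib, hw.sum_sq, hshift]; norm_num

lemma exp_neg_le_autocorr (hw : IsSlowWeight w l) (t : G) : exp (-l t) ≤ autocorr w t := by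
  calc exp (-l t) = ∑ x, exp (-l t) * w x ^ 2 := by rw [← mul_sum, hw.sum_sq, mul_one]
    _ ≤ autocorr w t := sum_le_sum fun x _ => by
      nlinarith [hw.exp_neg_mul_le x t, hw.pos x]

end IsSlowWeight

namespace WeightedDensity

lemma weighted_nonneg (h : WeightedDensity f w l α) (x : G) : 0 ≤ (f * w) x :=
  mul_nonneg (h.f_nonneg x) (h.pos x).le

lemma weighted_le (h : WeightedDensity f w l α) (x : G) : (f * w) x ≤ w x :=
  mul_le_of_le_one_left (h.pos x).le (h.f_le_one x)

lemma sum_mul_translate_le (h : WeightedDensity f w l α) (t : G) :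
    ∑ x, f x * w x * w (x + t) ≤ exp (l t) * α := by
  rw [← h.sum_eq, mul_sum]
  refine sum_le_sum fun x _ => ?_
  have hx := mul_le_mul_of_nonneg_left (h.le_exp_mul x t) (h.weighted_nonneg x)
  rw [Pi.mul_apply] at hx
  linarith

lemma le_sum_mul_translate (h : WeightedDensity f w l α) (t : G) :
    exp (-l t) * α ≤ ∑ x, f x * w x * w (x + t) := by
  rw [← h.sum_eq, mul_sum]
  refine sum_le_sum fun x _ => ?_
  have hx := mul_le_mul_of_nonneg_left (h.exp_neg_mul_le x t) (h.weighted_nonneg x)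
  rw [Pi.mul_apply] at hx
  linarith

end WeightedDensity

lemma autocorr_balanced (f w : G → ℝ) (α : ℝ) (t : G) :
    autocorr (balanced f w α) t = autocorr (f * w) t
      - α * (∑ x, f x * w x * w (x + t) + ∑ x, f x * w x * w (x + -t))
      + α ^ 2 * autocorr w t := by
  have hshift : ∑ x, f x * w x * w (x + -t) = ∑ x, f (x + t) * w (x + t) * w x := by
    rw [← Equiv.sum_comp (Equiv.addRight t)]
    simp only [Equiv.coe_addRight, add_neg_cancel_right]
  rw [hshift, ← sum_add_distrib, autocorr, autocorr, autocorr, mul_sum, mul_sum,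
    ← sum_sub_distrib, ← sum_add_distrib]
  exact sum_congr rfl fun x _ => by simp only [balanced, Pi.mul_apply]; ring

lemma selfConv_balanced (hw : ∀ x, w (-x) = w x) (f : G → ℝ) (α : ℝ) (t : G) :
    selfConv (balanced f w α) t = selfConv (f * w) t
      - 2 * α * ∑ x, f x * w x * w (x + -t) + α ^ 2 * autocorr w (-t) := by
  have hneg (x : G) : w (t - x) = w (x + -t) := by rw [← hw, neg_sub, sub_eq_add_neg]
  have hreflect : ∑ x, f x * w x * w (x + -t) = ∑ x, f (t - x) * w (t - x) * w x := by
    rw [← Equiv.sum_comp (Equiv.subLeft t)]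
    simp only [Equiv.subLeft_apply, ← hneg, sub_sub_cancel]
  have htwo : 2 * α * ∑ x, f x * w x * w (x + -t) =
      α * ∑ x, (f x * w x * w (x + -t) + f (t - x) * w (t - x) * w x) := by
    rw [sum_add_distrib, ← hreflect]; ring
  rw [htwo, selfConv, selfConv, autocorr, mul_sum, mul_sum, ← sum_sub_distrib, ← sum_add_distrib]
  exact sum_congr rfl fun x _ => by simp only [balanced, Pi.mul_apply, ← hneg]; ring

namespace WeightedDensity

lemma abs_sq_add_autocorr_balanced_le (h : WeightedDensity f w l α) (t : G) :
    |α ^ 2 + autocorr (balanced f w α) t| ≤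
      autocorr (f * w) t + 3 * α ^ 2 * (exp (l t) - 1) := by
  have hα := h.density_pos
  have hnonneg : 0 ≤ autocorr (f * w) t := autocorr_nonneg h.weighted_nonneg t
  have hle := h.sum_mul_translate_le t
  have hge := h.le_sum_mul_translate t
  have hle' := h.sum_mul_translate_le (-t)
  have hge' := h.le_sum_mul_translate (-t)
  rw [h.isLength.map_neg] at hle' hge'
  have hw_le := mul_le_mul_of_nonneg_left (h.autocorr_le_one t) (sq_nonneg α)
  have hw_ge := mul_le_mul_of_nonneg_left (h.exp_neg_le_autocorr t) (sq_nonneg α)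
  have hexp_sq := mul_le_mul_of_nonneg_left (two_sub_exp_le_exp_neg (l t)) (sq_nonneg α)
  have hcross_le := mul_le_mul_of_nonneg_left (add_le_add hle hle') hα.le
  have hcross_ge := mul_le_mul_of_nonneg_left (add_le_add hge hge') hα.le
  rw [autocorr_balanced, abs_le]
  constructor <;>
    nlinarith [mul_nonneg (sq_nonneg α) (sub_nonneg.2 (one_le_exp (h.isLength.nonneg t)))]

lemma selfConv_balanced_le (h : WeightedDensity f w l α) (t : G) :
    selfConv (balanced f w α) t ≤ selfConv (f * w) t - α ^ 2 * (1 - 2 * l t) := by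
  have hcross := h.le_sum_mul_translate (-t)
  rw [h.isLength.map_neg] at hcross
  have hw_le := mul_le_mul_of_nonneg_left (h.autocorr_le_one (-t)) (sq_nonneg α)
  have hexp := mul_le_mul_of_nonneg_left (add_one_le_exp (-l t)) (sq_nonneg α)
  rw [selfConv_balanced h.map_neg]
  nlinarith [mul_le_mul_of_nonneg_left hcross h.density_pos.le]

end WeightedDensity

end WeightedDensity

section Moments

variable {G : Type*} [AddCommGroup G] [Fintype G] {f w l : G → ℝ} {α : ℝ}

lemma add_pow_le_scaled_pow_add_scaled_pow {K e : ℝ} (hK : 0 ≤ K) (he : 0 ≤ e) (P : ℕ) :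
    (K + e) ^ P ≤ (20 / 19) ^ P * K ^ P + (20 * e) ^ P := by
  rw [← mul_pow]
  rcases le_total (19 * e) K with hc | hc
  · exact (pow_le_pow_left₀ (by positivity) (by linarith) P).trans
      (le_add_of_nonneg_right (by positivity))
  · exact (pow_le_pow_left₀ (by positivity) (by linarith) P).trans
      (le_add_of_nonneg_left (by positivity))

lemma mul_exp_sub_one_le_exp (x : ℝ) : 120 * (exp x - 1) ≤ exp (120 * x) := by
  have h := one_add_mul_le_pow (a := exp x - 1) (by linarith [exp_pos x]) 120
  rw [add_sub_cancel, ← exp_nat_mul] at h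
  push_cast at h
  linarith

lemma scaled_pow_add_one_le_two_pow {p : ℕ} (hp : 20 ≤ p) :
    (20 / 19 * 1.03 : ℝ) ^ (8 * p) + 1 ≤ 2 ^ p := by
  have hbase : (20 / 19 * 1.03 : ℝ) ^ (8 * p) ≤ 1.91 ^ p := by
    rw [pow_mul]; exact pow_le_pow_left₀ (by positivity) (by norm_num) _
  have hratio : (1.91 / 2 : ℝ) ^ p ≤ 1 / 2 :=
    (pow_le_pow_of_le_one (by norm_num) (by norm_num) hp).trans (by norm_num)
  rw [div_pow, div_le_iff₀ (by positivity)] at hratio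
  have htwo : (2 : ℝ) ≤ 2 ^ p := le_self_pow₀ (by norm_num) (by omega)
  linarith

namespace WeightedDensity

lemma sq_add_autocorr_balanced_pow_le (h : WeightedDensity f w l α) {P : ℕ} (hP : Even P) (t : G) :
    (α ^ 2 + autocorr (balanced f w α) t) ^ P ≤
      (20 / 19) ^ P * autocorr (f * w) t ^ P + (α ^ 2 / 2) ^ P * exp (120 * P * l t) := by
  have hK : 0 ≤ autocorr (f * w) t := autocorr_nonneg h.weighted_nonneg t
  have he : 0 ≤ 3 * α ^ 2 * (exp (l t) - 1) :=
    mul_nonneg (by positivity) (by linarith [one_le_exp (h.isLength.nonneg t)])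
  have herror : 20 * (3 * α ^ 2 * (exp (l t) - 1)) ≤ α ^ 2 / 2 * exp (120 * l t) := by
    nlinarith [mul_exp_sub_one_le_exp (l t), sq_nonneg α]
  calc (α ^ 2 + autocorr (balanced f w α) t) ^ P
      ≤ (autocorr (f * w) t + 3 * α ^ 2 * (exp (l t) - 1)) ^ P := by
        rw [← hP.pow_abs]
        exact pow_le_pow_left₀ (abs_nonneg _) (h.abs_sq_add_autocorr_balanced_le t) P
    _ ≤ (20 / 19) ^ P * autocorr (f * w) t ^ P + (20 * (3 * α ^ 2 * (exp (l t) - 1))) ^ P :=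
        add_pow_le_scaled_pow_add_scaled_pow hK he P
    _ ≤ (20 / 19) ^ P * autocorr (f * w) t ^ P + (α ^ 2 / 2 * exp (120 * l t)) ^ P := by gcongr
    _ = _ := by rw [mul_pow (α ^ 2 / 2), ← exp_nat_mul]; ring_nf

lemma pow_le_diffAvg_autocorr_pow (h : WeightedDensity f w l α) {η : G → ℝ} (hη : ∀ u, 0 ≤ η u)
    {p : ℕ} (hp : 20 ≤ p) (hE : diffAvg η (fun t => exp (120 * (8 * p : ℕ) * l t)) ≤ 2)
    (hg : (α ^ 2 / 4) ^ p ≤ diffAvg η (fun t => autocorr (balanced f w α) t ^ p)) :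
    (1.03 * α ^ 2) ^ (8 * p) ≤ diffAvg η (fun t => autocorr (f * w) t ^ (8 * p)) := by
  have hα2 : 0 < α ^ 2 := pow_pos h.density_pos 2
  set S := diffAvg η (fun t => autocorr (f * w) t ^ (8 * p))
  have herror : (α ^ 2 / 2) ^ (8 * p) * 2 ≤ (α ^ 2) ^ (8 * p) := by
    rw [div_pow, div_mul_eq_mul_div, div_le_iff₀ (by positivity)]
    gcongr
    exact le_self_pow₀ (by norm_num) (by omega)
  have hupper : 2 ^ p * (α ^ 2) ^ (8 * p) ≤ (20 / 19) ^ (8 * p) * S + (α ^ 2) ^ (8 * p) := by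
    calc 2 ^ p * (α ^ 2) ^ (8 * p)
        ≤ diffAvg η (fun t => (α ^ 2 + autocorr (balanced f w α) t) ^ (8 * p)) :=
          le_diffAvg_const_add_autocorr_pow η _ p hα2 hg
      _ ≤ diffAvg η (fun t => (20 / 19) ^ (8 * p) * autocorr (f * w) t ^ (8 * p) +
            (α ^ 2 / 2) ^ (8 * p) * exp (120 * (8 * p : ℕ) * l t)) :=
          diffAvg_mono hη fun t =>
            h.sq_add_autocorr_balanced_pow_le ((by decide : Even 8).mul_right p) t
      _ ≤ (20 / 19) ^ (8 * p) * S + (α ^ 2 / 2) ^ (8 * p) * 2 := by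
          rw [diffAvg_add, diffAvg_const_mul, diffAvg_const_mul]; gcongr
      _ ≤ _ := by gcongr
  have hscaled : (20 / 19) ^ (8 * p) * (1.03 * α ^ 2) ^ (8 * p) ≤ (20 / 19) ^ (8 * p) * S := by
    rw [← mul_pow, ← mul_assoc, mul_pow]
    nlinarith [scaled_pow_add_one_le_two_pow hp, pow_pos hα2 (8 * p)]
  exact le_of_mul_le_mul_left hscaled (by positivity)

end WeightedDensity

lemma selfConv_add_self_of_threeAPFree {a : G → ℝ} (ha : ThreeAPFree (Function.support a)) {y : G}
    (hy : a y ≠ 0) : selfConv a (y + y) = a y ^ 2 := by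
  classical
  rw [selfConv, sum_eq_single y (fun x _ hx => ?_) (by simp), add_sub_cancel_right, sq]
  by_contra hne
  obtain ⟨hx₁, hx₂⟩ := mul_ne_zero_iff.1 hne
  exact hx (ha hx₁ hy hx₂ (add_sub_cancel x (y + y)))

namespace WeightedDensity

/- On the event `f (t / 2) ≠ 0` the convolution `(f w) * (f w)` sees only trivial progressions, so
the balanced convolution is about `-α²` there. Hölder's inequality turns this into a large `p`-th
moment. -/
lemma pow_le_diffAvg_autocorr_balanced_pow (h : WeightedDensity f w l α)
    (hfree : ThreeAPFree (Function.support f)) {η : G → ℝ} (hη : ∀ u, 0 ≤ η u)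
    {p : ℕ} (hp : Even p) {half : G → G} (hhalf : ∀ t, half t + half t = t)
    (hβ : (1 / 2) ^ p ≤ diffAvg η (fun t => f (half t))) (hw : ∀ x, w x ^ 2 ≤ α ^ 2 / 4)
    (hl : diffAvg η l ≤ diffAvg η (fun t => f (half t)) / 8) :
    (α ^ 2 / 4) ^ p ≤ diffAvg η (fun t => autocorr (balanced f w α) t ^ p) := by
  set β := diffAvg η (fun t => f (half t)) with hβdef
  have hselfConv (t : G) (ht : f (half t) ≠ 0) : selfConv (f * w) t ≤ α ^ 2 / 4 := by
    have hsupp : Function.support (f * w) ⊆ Function.support f := fun x hx =>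
      left_ne_zero_of_mul hx
    have hconv := selfConv_add_self_of_threeAPFree (hfree.mono hsupp)
      (mul_ne_zero ht (h.pos (half t)).ne')
    rw [hhalf] at hconv
    rw [hconv]
    exact (pow_le_pow_left₀ (h.weighted_nonneg _) (h.weighted_le _) 2).trans (hw _)
  have hpoint (t : G) : f (half t) * selfConv (balanced f w α) t ≤
      -(3 * α ^ 2 / 4) * f (half t) + 2 * α ^ 2 * l t := by
    have hl0 : 0 ≤ 2 * α ^ 2 * l t := mul_nonneg (by positivity) (h.isLength.nonneg t)
    by_cases ht : f (half t) = 0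
    · simpa [ht] using hl0
    · have hbal := mul_le_mul_of_nonneg_left
        ((h.selfConv_balanced_le t).trans (sub_le_sub_right (hselfConv t ht) _))
        (h.f_nonneg (half t))
      nlinarith [h.f_le_one (half t)]
  have hcorr : diffAvg η (fun t => f (half t) * selfConv (balanced f w α) t) ≤
      -(α ^ 2 / 2 * β) := by
    refine (diffAvg_mono hη hpoint).trans ?_
    rw [diffAvg_add, diffAvg_const_mul, diffAvg_const_mul, ← hβdef]
    nlinarith [mul_le_mul_of_nonneg_left hl (sq_nonneg α)]
  have hholder := mul_pow_le_sum_mul_pow (s := univ) (W := fun i : G × G => η i.1 * η i.2)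
    (X := fun i => f (half (i.1 - i.2)))
    (h := fun i => selfConv (balanced f w α) (i.1 - i.2)) (v := α ^ 2 / 2) (β := β)
    (fun _ _ => mul_nonneg (hη _) (hη _)) (fun _ _ => h.f_nonneg _) (fun _ _ => h.f_le_one _)
    hp (by positivity) (lt_of_lt_of_le (by positivity) hβ) (Fintype.sum_prod_type _)
    (by simpa only [Fintype.sum_prod_type, mul_assoc, diffAvg] using hcorr)
  rw [Fintype.sum_prod_type] at hholder
  calc (α ^ 2 / 4) ^ p = (1 / 2) ^ p * (α ^ 2 / 2) ^ p := by rw [← mul_pow]; ring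
    _ ≤ β * (α ^ 2 / 2) ^ p := by gcongr
    _ ≤ diffAvg η (fun t => selfConv (balanced f w α) t ^ p) := hholder
    _ ≤ _ := diffAvg_selfConv_pow_le η _ p

end WeightedDensity

end Moments

section Sifting

variable {G : Type*} [AddCommGroup G] {f w l : G → ℝ} {α : ℝ} {η a : G → ℝ}

lemma tilt_nonneg (hη : ∀ u, 0 ≤ η u) (ha : ∀ x, 0 ≤ a x) {k : ℕ} (x : Fin k → G) (u : G) :
    0 ≤ tilt η a x u :=
  mul_nonneg (hη u) (prod_nonneg fun _ _ => ha _)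

lemma tilt_le_mul_exp (hη : ∀ u, 0 ≤ η u) (ha : ∀ x, 0 ≤ a x) (haw : ∀ x, a x ≤ w x)
    (hw : ∀ x t, w (x + t) ≤ exp (l t) * w x) {k : ℕ} (x : Fin k → G) (s : G) :
    tilt η a x s ≤ η s * exp (k * l s) * ∏ i, w (x i) := by
  rw [tilt, mul_assoc]
  refine mul_le_mul_of_nonneg_left ?_ (hη s)
  calc ∏ i, a (x i + s) ≤ ∏ i, exp (l s) * w (x i) :=
        prod_le_prod (fun _ _ => ha _) fun _ _ => (haw _).trans (hw _ _)
    _ = exp (k * l s) * ∏ i, w (x i) := by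
        rw [prod_mul_distrib, prod_const, card_univ, Fintype.card_fin, ← exp_nat_mul]

variable [Fintype G]

lemma sum_prod_mul_sum_tilt_le (hη : η ∈ stdSimplex ℝ G) (hw : ∀ x, 0 ≤ w x) (ha : ∀ x, 0 ≤ a x)
    (hwa : ∀ u, ∑ x, w x * a (x + u) ≤ 1) (k : ℕ) :
    ∑ x : Fin k → G, (∏ i, w (x i)) * ∑ u, tilt η a x u ≤ 1 := by
  have hfactor : ∑ x : Fin k → G, (∏ i, w (x i)) * ∑ u, tilt η a x u =
      ∑ u, η u * (∑ x, w x * a (x + u)) ^ k := by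
    simp_rw [Fintype.sum_pow, mul_sum, tilt, prod_mul_distrib]
    rw [sum_comm]
    exact sum_congr rfl fun u _ => sum_congr rfl fun x _ => by ring
  rw [hfactor, ← hη.2]
  exact sum_le_sum fun u _ => mul_le_of_le_one_right (hη.1 u)
    (pow_le_one₀ (sum_nonneg fun x _ => mul_nonneg (hw x) (ha _)) (hwa u))

lemma sum_diffAvg_tilt_indicator_le (hη : η ∈ stdSimplex ℝ G) (ha : ∀ x, 0 ≤ a x) (c : ℝ)
    (k : ℕ) :
    ∑ x : Fin k → G, diffAvg (tilt η a x) ({t | autocorr a t ≤ c}.indicator 1) ≤ |c| ^ k := by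
  classical
  rw [← diffAvg_autocorr_pow_mul]
  calc diffAvg η (fun t => autocorr a t ^ k * {t | autocorr a t ≤ c}.indicator 1 t)
      ≤ diffAvg η (fun _ => |c| ^ k) := by
        refine diffAvg_mono hη.1 fun t => ?_
        by_cases ht : autocorr a t ≤ c
        · rw [Set.indicator_of_mem (by exact ht), Pi.one_apply, mul_one]
          exact pow_le_pow_left₀ (autocorr_nonneg ha t) (ht.trans (le_abs_self c)) k
        · rw [Set.indicator_of_notMem (by exact ht), mul_zero]
          positivity
    _ = |c| ^ k := by rw [diffAvg_const, hη.2, one_pow, one_mul]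

/- If no index were good, each `m i ^ 2` would be dominated by the mass of `W i * m i` or by the bad
mass, and both are too small in total. -/
lemma exists_large_of_sum_bad_le {ι : Type*} [Fintype ι] {m W bad : ι → ℝ} {κ : ℝ}
    (hm : ∀ i, 0 ≤ m i) (hW : ∀ i, 0 ≤ W i) (hbad : ∀ i, 0 ≤ bad i) (hκ : 0 ≤ κ)
    (hpos : 0 < ∑ i, m i ^ 2) (hκm : κ ≤ (∑ i, m i ^ 2) / 4) (hWm : ∑ i, W i * m i ≤ 1)
    (hbadm : ∑ i, bad i ≤ (∑ i, m i ^ 2) / 4000) :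
    ∃ i, κ * W i ≤ m i ∧ bad i ≤ m i ^ 2 / 1000 := by
  by_contra! hcon
  have hpoint (i : ι) : m i ^ 2 ≤ κ * (W i * m i) + 1000 * bad i := by
    rcases le_or_gt (κ * W i) (m i) with hi | hi
    · linarith [hcon i hi, mul_nonneg hκ (mul_nonneg (hW i) (hm i))]
    · nlinarith [hm i, hbad i]
  have hsum := sum_le_sum fun i (_ : i ∈ univ) => hpoint i
  rw [sum_add_distrib, ← mul_sum, ← mul_sum] at hsum
  linarith [mul_le_mul_of_nonneg_left hWm hκ]

lemma diffAvg_div (φ F : G → ℝ) (c : ℝ) :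
    diffAvg (fun s => φ s / c) F = diffAvg φ F / c ^ 2 := by
  simp only [diffAvg, sum_div]
  exact sum_congr rfl fun u _ => sum_congr rfl fun v _ => by rw [sq, div_mul_div_comm]; ring

lemma ratio_pow_le {P : ℕ} (hP : 1000 ≤ P) : (102 / 103 : ℝ) ^ P ≤ 1 / 4000 :=
  calc (102 / 103 : ℝ) ^ P ≤ (102 / 103) ^ 1000 :=
        pow_le_pow_of_le_one (by norm_num) (by norm_num) hP
    _ = ((102 / 103) ^ 100) ^ 10 := by rw [← pow_mul]
    _ ≤ 0.4 ^ 10 := pow_le_pow_left₀ (by positivity) (by norm_num) _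
    _ ≤ 1 / 4000 := by norm_num

/- Dependent random choice: `φ` is `η` conditioned on `P` random translates of `f w`. -/
lemma WeightedDensity.exists_sifted (h : WeightedDensity f w l α) (hη : η ∈ stdSimplex ℝ G)
    {P : ℕ} (hP : 1000 ≤ P) {κ : ℝ} (hκ : 0 < κ) (hκ' : κ ≤ (1.03 * α ^ 2) ^ P / 4)
    (hm : (1.03 * α ^ 2) ^ P ≤ diffAvg η (fun t => autocorr (f * w) t ^ P)) :
    ∃ φ ∈ stdSimplex ℝ G, (∀ s, φ s ≤ κ⁻¹ * (η s * exp (P * l s))) ∧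
      diffAvg φ ({t | autocorr (f * w) t ≤ 1.02 * α ^ 2}.indicator 1) ≤ 1 / 1000 := by
  have ha := h.weighted_nonneg
  have hα := h.density_pos
  set m : (Fin P → G) → ℝ := fun x => ∑ u, tilt η (f * w) x u
  set bad : (Fin P → G) → ℝ := fun x =>
    diffAvg (tilt η (f * w) x) ({t | autocorr (f * w) t ≤ 1.02 * α ^ 2}.indicator 1)
  have hm_large : (1.03 * α ^ 2) ^ P ≤ ∑ x, m x ^ 2 := by rwa [diffAvg_autocorr_pow] at hm
  have hbad : ∑ x, bad x ≤ (∑ x, m x ^ 2) / 4000 :=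
    calc ∑ x, bad x ≤ |1.02 * α ^ 2| ^ P := sum_diffAvg_tilt_indicator_le hη ha _ P
      _ = (102 / 103) ^ P * (1.03 * α ^ 2) ^ P := by
          rw [abs_of_nonneg (by positivity), ← mul_pow]; ring
      _ ≤ 1 / 4000 * ∑ x, m x ^ 2 := by gcongr; exact ratio_pow_le hP
      _ = (∑ x, m x ^ 2) / 4000 := by ring
  have hmass : ∑ x : Fin P → G, (∏ i, w (x i)) * m x ≤ 1 :=
    sum_prod_mul_sum_tilt_le hη (fun x => (h.pos x).le) ha (fun u => (sum_le_sum fun x _ =>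
      mul_le_mul_of_nonneg_left (h.weighted_le _) (h.pos x).le).trans (h.autocorr_le_one u)) P
  obtain ⟨x, hx_mass, hx_bad⟩ := exists_large_of_sum_bad_le
    (fun x => sum_nonneg fun u _ => tilt_nonneg hη.1 ha x u)
    (fun x => (prod_pos fun _ _ => h.pos _).le)
    (fun x => diffAvg_nonneg (tilt_nonneg hη.1 ha x) (Set.indicator_nonneg fun _ _ => zero_le_one))
    hκ.le (lt_of_lt_of_le (by positivity) hm_large)
    (hκ'.trans (by linarith)) hmass hbad
  have hWx : 0 < ∏ i, w (x i) := prod_pos fun _ _ => h.pos _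
  have hmx : 0 < m x := (mul_pos hκ hWx).trans_le hx_mass
  refine ⟨fun s => tilt η (f * w) x s / m x, ⟨fun s => ?_, ?_⟩, fun s => ?_, ?_⟩
  · exact div_nonneg (tilt_nonneg hη.1 ha x s) hmx.le
  · rw [← sum_div]; exact div_self hmx.ne'
  · have hη_exp : 0 ≤ η s * exp (P * l s) := mul_nonneg (hη.1 s) (exp_pos _).le
    rw [div_le_iff₀ hmx]
    calc tilt η (f * w) x s ≤ η s * exp (P * l s) * ∏ i, w (x i) :=
          tilt_le_mul_exp hη.1 ha h.weighted_le h.le_exp_mul x s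
      _ = κ⁻¹ * (η s * exp (P * l s)) * (κ * ∏ i, w (x i)) := by field_simp
      _ ≤ κ⁻¹ * (η s * exp (P * l s)) * m x := by gcongr
  · rw [diffAvg_div, div_le_iff₀ (by positivity)]
    exact hx_bad.trans_eq (by ring)

end Sifting

section Hoeffding

variable {ι : Type*} [Fintype ι] {φ X : ι → ℝ}

lemma prod_mem_stdSimplex (hφ : φ ∈ stdSimplex ℝ ι) (k : ℕ) :
    (fun s : Fin k → ι => ∏ i, φ (s i)) ∈ stdSimplex ℝ (Fin k → ι) :=
  ⟨fun _ => prod_nonneg fun _ _ => hφ.1 _, by rw [← Fintype.sum_pow, hφ.2, one_pow]⟩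

lemma sum_mul_exp_le_of_mean_zero (hφ : φ ∈ stdSimplex ℝ ι) (hX : ∀ s, |X s| ≤ 1)
    (hmean : ∑ s, φ s * X s = 0) {θ : ℝ} (hθ : |θ| ≤ 1) :
    ∑ s, φ s * exp (θ * X s) ≤ exp (θ ^ 2) := by
  have hexp (s : ι) : exp (θ * X s) ≤ 1 + θ * X s + θ ^ 2 := by
    have hx : |θ * X s| ≤ 1 := by
      rw [abs_mul]; exact mul_le_one₀ hθ (abs_nonneg _) (hX s)
    have hsq : (θ * X s) ^ 2 ≤ θ ^ 2 := by
      rw [mul_pow]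
      exact mul_le_of_le_one_right (sq_nonneg θ) ((sq_le_one_iff_abs_le_one _).2 (hX s))
    linarith [(abs_le.1 (abs_exp_sub_one_sub_id_le hx)).2]
  calc ∑ s, φ s * exp (θ * X s) ≤ ∑ s, φ s * (1 + θ * X s + θ ^ 2) :=
        sum_le_sum fun s _ => mul_le_mul_of_nonneg_left (hexp s) (hφ.1 s)
    _ = ∑ s, φ s + θ * ∑ s, φ s * X s + θ ^ 2 * ∑ s, φ s := by
        simp only [mul_sum, ← sum_add_distrib]
        exact sum_congr rfl fun s _ => by ring
    _ = θ ^ 2 + 1 := by rw [hφ.2, hmean]; ring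
    _ ≤ exp (θ ^ 2) := add_one_le_exp _

lemma sum_prod_mul_indicator_lt_sum_le (hφ : φ ∈ stdSimplex ℝ ι) (hX : ∀ s, |X s| ≤ 1)
    (hmean : ∑ s, φ s * X s = 0) {ε : ℝ} (hε : 0 ≤ ε) (hε' : ε ≤ 1) (k : ℕ) :
    ∑ s : Fin k → ι, (∏ i, φ (s i)) *
      {s : Fin k → ι | k * ε < ∑ i, X (s i)}.indicator (1 : (Fin k → ι) → ℝ) s ≤
      exp (-(k * ε ^ 2 / 4)) := by
  have hmarkov (s : Fin k → ι) :
      {s : Fin k → ι | k * ε < ∑ i, X (s i)}.indicator (1 : (Fin k → ι) → ℝ) s ≤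
        exp (ε / 2 * ∑ i, X (s i)) * exp (-(ε / 2 * (k * ε))) := by
    refine Set.indicator_apply_le' (fun hs => ?_) (fun _ => by positivity)
    rw [← exp_add]
    refine one_le_exp ?_
    nlinarith [show k * ε < ∑ i, X (s i) from hs]
  calc ∑ s : Fin k → ι, (∏ i, φ (s i)) *
        {s : Fin k → ι | k * ε < ∑ i, X (s i)}.indicator (1 : (Fin k → ι) → ℝ) s
      ≤ ∑ s : Fin k → ι, (∏ i, φ (s i)) *
          (exp (ε / 2 * ∑ i, X (s i)) * exp (-(ε / 2 * (k * ε)))) :=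
        sum_le_sum fun s _ =>
          mul_le_mul_of_nonneg_left (hmarkov s) ((prod_mem_stdSimplex hφ k).1 s)
    _ = (∑ s, φ s * exp (ε / 2 * X s)) ^ k * exp (-(ε / 2 * (k * ε))) := by
        simp_rw [Fintype.sum_pow, sum_mul, prod_mul_distrib, mul_sum, exp_sum, mul_assoc]
    _ ≤ exp ((ε / 2) ^ 2) ^ k * exp (-(ε / 2 * (k * ε))) := by
        have hmgf0 : 0 ≤ ∑ s, φ s * exp (ε / 2 * X s) :=
          sum_nonneg fun s _ => mul_nonneg (hφ.1 s) (exp_pos _).le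
        gcongr
        refine sum_mul_exp_le_of_mean_zero hφ hX hmean ?_
        rw [abs_of_nonneg (by positivity)]; linarith
    _ = exp (-(k * ε ^ 2 / 4)) := by rw [← exp_nat_mul, ← exp_add]; ring_nf

lemma sum_prod_mul_indicator_lt_abs_sum_le (hφ : φ ∈ stdSimplex ℝ ι) (hX : ∀ s, |X s| ≤ 1)
    (hmean : ∑ s, φ s * X s = 0) {ε : ℝ} (hε : 0 ≤ ε) (hε' : ε ≤ 1) (k : ℕ) :
    ∑ s : Fin k → ι, (∏ i, φ (s i)) *
      {s : Fin k → ι | k * ε < |∑ i, X (s i)|}.indicator (1 : (Fin k → ι) → ℝ) s ≤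
      2 * exp (-(k * ε ^ 2 / 4)) := by
  have hupper := sum_prod_mul_indicator_lt_sum_le hφ hX hmean hε hε' k
  have hlower := sum_prod_mul_indicator_lt_sum_le (X := -X) hφ (by simpa using hX)
    (by simpa using hmean) hε hε' k
  refine le_trans ?_ ((add_le_add hupper hlower).trans_eq (two_mul _).symm)
  rw [← sum_add_distrib]
  refine sum_le_sum fun s _ => ?_
  rw [← mul_add]
  refine mul_le_mul_of_nonneg_left ?_ ((prod_mem_stdSimplex hφ k).1 s)
  simp only [Set.indicator_apply, Set.mem_ofPred_eq, lt_abs, Pi.neg_apply, sum_neg_distrib,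
    Pi.one_apply]
  split_ifs <;> first | tauto | norm_num

lemma half_le_sum_mul_indicator_le (hφ : φ ∈ stdSimplex ℝ ι) (hX : ∀ s, 0 ≤ X s) {c : ℝ}
    (hc : 0 < c) (hmean : ∑ s, φ s * X s ≤ c / 2) :
    1 / 2 ≤ ∑ s, φ s * {s | X s ≤ c}.indicator (1 : ι → ℝ) s := by
  have hpoint (s : ι) : φ s - c⁻¹ * (φ s * X s) ≤ φ s * {s | X s ≤ c}.indicator (1 : ι → ℝ) s := by
    have hφs := hφ.1 s
    have hXs := hX s
    by_cases hs : X s ≤ c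
    · rw [Set.indicator_of_mem (by exact hs), Pi.one_apply, mul_one]
      linarith [show 0 ≤ c⁻¹ * (φ s * X s) by positivity]
    · rw [Set.indicator_of_notMem (by exact hs), mul_zero, sub_nonpos, ← div_eq_inv_mul,
        le_div_iff₀ hc]
      exact mul_le_mul_of_nonneg_left (not_le.1 hs).le hφs
  calc 1 / 2 = 1 - c⁻¹ * (c / 2) := by field_simp; norm_num
    _ ≤ ∑ s, φ s - c⁻¹ * ∑ s, φ s * X s := by rw [hφ.2]; gcongr
    _ ≤ _ := by
        rw [mul_sum, ← sum_sub_distrib]; exact sum_le_sum fun s _ => hpoint s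

end Hoeffding

section AlmostPeriodicity

variable {G : Type*} [AddCommGroup G]

/-- The set `m(T - T)` of sums of `m` differences of elements of `T`. -/
def iterDiff (T : Set G) : ℕ → Set G
  | 0 => {0}
  | m + 1 => iterDiff T m + (T - T)

lemma IsLength.le_of_mem_iterDiff {h : G → ℝ} (hh : IsLength h) {T : Set G} {c : ℝ}
    (hT : ∀ t ∈ T, h t ≤ c) {m : ℕ} {z : G} (hz : z ∈ iterDiff T m) : h z ≤ 2 * m * c := by
  induction m generalizing z with
  | zero => simp [Set.mem_singleton_iff.1 hz, hh.map_zero]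
  | succ m ih =>
    obtain ⟨z', hz', _, ⟨t, ht, t', ht', rfl⟩, rfl⟩ := hz
    push_cast
    linarith [ih hz', hh.map_add_le z' (t - t'), hh.map_sub_le t t', hT t ht, hT t' ht']

/-- The empirical version of `weightedAvg φ Y` for a sample `u` drawn from `φ`. -/
noncomputable def sampleAvg {k : ℕ} (u : Fin k → G) (Y : G → ℝ) (y : G) : ℝ :=
  (∑ i, Y (y + u i)) / k

lemma sampleAvg_mem_Icc {Y : G → ℝ} (hY : ∀ t, Y t ∈ Set.Icc 0 1) {k : ℕ} (u : Fin k → G) (y : G) :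
    sampleAvg u Y y ∈ Set.Icc 0 1 := by
  refine ⟨div_nonneg (sum_nonneg fun i _ => (hY _).1) k.cast_nonneg,
    div_le_one_of_le₀ ?_ k.cast_nonneg⟩
  simpa using sum_le_sum fun i (_ : i ∈ univ) => (hY (y + u i)).2

lemma sampleAvg_translate {k : ℕ} (u : Fin k → G) (Y : G → ℝ) (t y : G) :
    sampleAvg (fun i => u i + t) Y y = sampleAvg u Y (y + t) := by
  simp only [sampleAvg, ← add_assoc, add_right_comm]

variable [Fintype G]

/-- The points around which the sample `u` does not estimate `weightedAvg φ Y` to accuracy `ε`. -/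
def badPoints {k : ℕ} (φ Y : G → ℝ) (ε : ℝ) (u : Fin k → G) : Set G :=
  {y | ε < |sampleAvg u Y y - weightedAvg φ Y y|}

/-- A nonnegative measure on `G` of total mass at most `2` which varies slowly at the scale measured
by the length `ℓ`. -/
structure IsSlowMeasure (σ ℓ : G → ℝ) : Prop where
  isLength : IsLength ℓ
  nonneg : ∀ x, 0 ≤ σ x
  sum_le_two : ∑ x, σ x ≤ 2
  le_exp_mul : ∀ x t, σ (x + t) ≤ exp (ℓ t) * σ x

variable {φ ω h Y μ : G → ℝ} {ε κ : ℝ}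

lemma weightedAvg_mem_Icc (hφ : φ ∈ stdSimplex ℝ G) (hY : ∀ t, Y t ∈ Set.Icc 0 1) (y : G) :
    weightedAvg φ Y y ∈ Set.Icc 0 1 := by
  refine ⟨sum_nonneg fun s _ => mul_nonneg (hφ.1 s) (hY _).1, ?_⟩
  rw [← hφ.2]
  exact sum_le_sum fun s _ => mul_le_of_le_one_right (hφ.1 s) (hY _).2

lemma abs_sub_sampleAvg_le (hφ : φ ∈ stdSimplex ℝ G) (hY : ∀ t, Y t ∈ Set.Icc 0 1) (hε : 0 ≤ ε)
    {k : ℕ} (u : Fin k → G) (y : G) :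
    |weightedAvg φ Y y - sampleAvg u Y y| ≤ ε + (badPoints φ Y ε u).indicator 1 y := by
  obtain ⟨hF₀, hF₁⟩ := weightedAvg_mem_Icc hφ hY y
  obtain ⟨hS₀, hS₁⟩ := sampleAvg_mem_Icc hY u y
  by_cases hy : y ∈ badPoints φ Y ε u
  · rw [Set.indicator_of_mem hy, Pi.one_apply, abs_le]
    constructor <;> linarith
  · rw [Set.indicator_of_notMem hy, add_zero, abs_sub_comm]
    exact not_lt.1 hy

lemma sum_prod_mul_indicator_badPoints_le (hφ : φ ∈ stdSimplex ℝ G) (hY : ∀ t, Y t ∈ Set.Icc 0 1)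
    (hε : 0 ≤ ε) (hε' : ε ≤ 1) {k : ℕ} (hk : 0 < k) (y : G) :
    ∑ u : Fin k → G, (∏ i, φ (u i)) * (badPoints φ Y ε u).indicator 1 y ≤
      2 * exp (-(k * ε ^ 2 / 4)) := by
  have hk' : (0 : ℝ) < k := by exact_mod_cast hk
  obtain ⟨hF₀, hF₁⟩ := weightedAvg_mem_Icc hφ hY y
  refine le_trans (le_of_eq ?_) (sum_prod_mul_indicator_lt_abs_sum_le hφ
    (X := fun s => Y (y + s) - weightedAvg φ Y y) (fun s => ?_) ?_ hε hε' k)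
  · have hmean (u : Fin k → G) : ∑ i, (Y (y + u i) - weightedAvg φ Y y) =
        k * (sampleAvg u Y y - weightedAvg φ Y y) := by
      rw [sum_sub_distrib, sum_const, card_univ, Fintype.card_fin, nsmul_eq_mul, mul_sub, sampleAvg,
        mul_div_cancel₀ _ hk'.ne']
    refine sum_congr rfl fun u _ => congrArg _ ?_
    simp only [Set.indicator_apply, badPoints, Set.mem_ofPred_eq, hmean, abs_mul, abs_of_pos hk',
      mul_lt_mul_iff_right₀ hk', Pi.one_apply]
  · rw [abs_le]
    constructor <;> linarith [(hY (y + s)).1, (hY (y + s)).2]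
  · simp only [mul_sub, sum_sub_distrib, ← sum_mul, hφ.2, one_mul]
    exact sub_self _

lemma sum_prod_mul_badPoints_mass_le (hφ : φ ∈ stdSimplex ℝ G) (hω : ∀ x, 0 ≤ ω x)
    (hω₂ : ∑ x, ω x ≤ 2) (hY : ∀ t, Y t ∈ Set.Icc 0 1) (hε : 0 ≤ ε) (hε' : ε ≤ 1) {k : ℕ}
    (hk : 0 < k) :
    ∑ u : Fin k → G, (∏ i, φ (u i)) * ∑ x, ω x * (badPoints φ Y ε u).indicator 1 (-x) ≤
      4 * exp (-(k * ε ^ 2 / 4)) := by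
  calc ∑ u : Fin k → G, (∏ i, φ (u i)) * ∑ x, ω x * (badPoints φ Y ε u).indicator 1 (-x)
      = ∑ x, ω x * ∑ u : Fin k → G, (∏ i, φ (u i)) * (badPoints φ Y ε u).indicator 1 (-x) := by
        simp only [mul_sum, mul_left_comm (ω _)]
        exact sum_comm
    _ ≤ ∑ x, ω x * (2 * exp (-(k * ε ^ 2 / 4))) := sum_le_sum fun x _ =>
        mul_le_mul_of_nonneg_left (sum_prod_mul_indicator_badPoints_le hφ hY hε hε' hk _) (hω x)
    _ = (∑ x, ω x) * (2 * exp (-(k * ε ^ 2 / 4))) := (sum_mul ..).symm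
    _ ≤ 2 * (2 * exp (-(k * ε ^ 2 / 4))) := by gcongr
    _ = 4 * exp (-(k * ε ^ 2 / 4)) := by ring

lemma prod_translate_le (hφ : ∀ s, 0 ≤ φ s) (hω : IsSlowMeasure ω h) (hκ : 0 < κ)
    (hφω : ∀ s, φ s ≤ κ⁻¹ * ω s) {k : ℕ} (u : Fin k → G) (t : G) :
    ∏ i, φ (u i + t) ≤ κ⁻¹ ^ k * exp (k * h t) * ∏ i, ω (u i) := by
  calc ∏ i, φ (u i + t) ≤ ∏ i, κ⁻¹ * (exp (h t) * ω (u i)) :=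
        prod_le_prod (fun i _ => hφ _) fun i _ =>
          (hφω _).trans (mul_le_mul_of_nonneg_left (hω.le_exp_mul _ _) (by positivity))
    _ = κ⁻¹ ^ k * exp (k * h t) * ∏ i, ω (u i) := by
        rw [prod_mul_distrib, prod_mul_distrib, prod_const, prod_const, card_univ,
          Fintype.card_fin, ← exp_nat_mul, mul_assoc]

/- The diagonal translation by a `μ`-random `t` changes the law `φᵏ` of the sample only by the
density factor `κ⁻ᵏ exp (k h t)`, so some sample has many good translates. -/
lemma exists_many_translates_mem (hφ : φ ∈ stdSimplex ℝ G) (hω : IsSlowMeasure ω h) (hκ : 0 < κ)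
    (hφω : ∀ s, φ s ≤ κ⁻¹ * ω s) (hμ : μ ∈ stdSimplex ℝ G) {k : ℕ} {S : Set (Fin k → G)}
    (hS : 1 / 2 ≤ ∑ u : Fin k → G, (∏ i, φ (u i)) * S.indicator 1 u) :
    ∃ u : Fin k → G, (κ / 2) ^ k / 4 ≤
      ∑ t, μ t * exp (k * h t) * {t | (fun i => u i + t) ∈ S}.indicator 1 t := by
  set g : (Fin k → G) → ℝ := fun u =>
    ∑ t, μ t * exp (k * h t) * {t | (fun i => u i + t) ∈ S}.indicator 1 t
  by_contra! hsmall
  have hωprod (u : Fin k → G) : 0 ≤ ∏ i, ω (u i) := prod_nonneg fun i _ => hω.nonneg _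
  have hω₀ : 0 ≤ ∑ s, ω s := sum_nonneg fun s _ => hω.nonneg s
  have htranslate (t : G) : ∑ u : Fin k → G, (∏ i, φ (u i)) * S.indicator 1 u ≤
      ∑ u : Fin k → G, κ⁻¹ ^ k * exp (k * h t) * (∏ i, ω (u i)) *
        {t | (fun i => u i + t) ∈ S}.indicator 1 t := by
    rw [← Equiv.sum_comp (Equiv.addRight fun _ : Fin k => t)]
    exact sum_le_sum fun u _ => mul_le_mul_of_nonneg_right (prod_translate_le hφ.1 hω hκ hφω u t)
      (Set.indicator_nonneg (fun _ _ => zero_le_one) _)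
  have hbound : ∑ u : Fin k → G, (∏ i, φ (u i)) * S.indicator 1 u ≤ 1 / 4 :=
    calc ∑ u : Fin k → G, (∏ i, φ (u i)) * S.indicator 1 u
        = ∑ t, μ t * ∑ u : Fin k → G, (∏ i, φ (u i)) * S.indicator 1 u := by
          rw [← sum_mul, hμ.2, one_mul]
      _ ≤ ∑ t, μ t * ∑ u : Fin k → G, κ⁻¹ ^ k * exp (k * h t) * (∏ i, ω (u i)) *
            {t | (fun i => u i + t) ∈ S}.indicator 1 t :=
          sum_le_sum fun t _ => mul_le_mul_of_nonneg_left (htranslate t) (hμ.1 t)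
      _ = ∑ u : Fin k → G, κ⁻¹ ^ k * (∏ i, ω (u i)) * g u := by
          simp only [g, mul_sum]
          rw [sum_comm]
          exact sum_congr rfl fun u _ => sum_congr rfl fun t _ => by ring
      _ ≤ ∑ u : Fin k → G, κ⁻¹ ^ k * (∏ i, ω (u i)) * ((κ / 2) ^ k / 4) :=
          sum_le_sum fun u _ => mul_le_mul_of_nonneg_left (hsmall u).le
            (mul_nonneg (by positivity) (hωprod u))
      _ = κ⁻¹ ^ k * (∑ s, ω s) ^ k * ((κ / 2) ^ k / 4) := by
          rw [Fintype.sum_pow, mul_sum, sum_mul]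
      _ ≤ κ⁻¹ ^ k * 2 ^ k * ((κ / 2) ^ k / 4) := by gcongr; exact hω.sum_le_two
      _ = 1 / 4 := by rw [div_pow, inv_pow]; field_simp
  linarith

lemma sum_mul_indicator_translate_le (hω : IsSlowMeasure ω h) (hκ : 0 < κ)
    (hφω : ∀ s, φ s ≤ κ⁻¹ * ω s) {S : Set G} (hS : ∑ x, ω x * S.indicator 1 (-x) ≤ κ * ε) {v : G}
    (hv : h v ≤ 1) : ∑ x, φ x * S.indicator 1 (v - x) ≤ 3 * ε := by
  have hind : ∀ y, 0 ≤ S.indicator (1 : G → ℝ) y := Set.indicator_nonneg fun _ _ => zero_le_one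
  calc ∑ x, φ x * S.indicator 1 (v - x) = ∑ x, φ (x + v) * S.indicator 1 (-x) := by
        rw [← Equiv.sum_comp (Equiv.addRight v)]; simp
    _ ≤ ∑ x, κ⁻¹ * (3 * ω x) * S.indicator 1 (-x) := by
        refine sum_le_sum fun x _ => mul_le_mul_of_nonneg_right ((hφω _).trans ?_) (hind _)
        refine mul_le_mul_of_nonneg_left ((hω.le_exp_mul x v).trans ?_) (by positivity)
        exact mul_le_mul_of_nonneg_right ((exp_le_exp.2 hv).trans exp_one_lt_three.le) (hω.nonneg x)
    _ = κ⁻¹ * 3 * ∑ x, ω x * S.indicator 1 (-x) := by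
        rw [mul_sum]; exact sum_congr rfl fun x _ => by ring
    _ ≤ κ⁻¹ * 3 * (κ * ε) := by gcongr
    _ = 3 * ε := by field_simp

/-- The translations which turn `u` into a sample estimating `weightedAvg φ Y` well at most points
`-x`, where `x` is distributed according to `ω`. -/
def goodTranslates {k : ℕ} (φ Y ω : G → ℝ) (κ ε : ℝ) (u : Fin k → G) : Set G :=
  {t | ∑ x, ω x * (badPoints φ Y ε fun i => u i + t).indicator 1 (-x) ≤ κ * ε}

/- Both averages are close to the average of `Y` over the sample `u` around `z - x + t`. -/
lemma sum_abs_weightedAvg_sub_le (hφ : φ ∈ stdSimplex ℝ G) (hω : IsSlowMeasure ω h) (hκ : 0 < κ)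
    (hφω : ∀ s, φ s ≤ κ⁻¹ * ω s) (hY : ∀ t, Y t ∈ Set.Icc 0 1) (hε : 0 ≤ ε) {k : ℕ}
    {u : Fin k → G} {t t' z : G} (ht : t ∈ goodTranslates φ Y ω κ ε u)
    (ht' : t' ∈ goodTranslates φ Y ω κ ε u) (hz : h z ≤ 1) (hz' : h (z + (t - t')) ≤ 1) :
    ∑ x, φ x * |weightedAvg φ Y (z + (t - t') - x) - weightedAvg φ Y (z - x)| ≤ 8 * ε := by
  have hpoint (x : G) : |weightedAvg φ Y (z + (t - t') - x) - weightedAvg φ Y (z - x)| ≤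
      2 * ε + (badPoints φ Y ε fun i => u i + t').indicator 1 (z + (t - t') - x) +
        (badPoints φ Y ε fun i => u i + t).indicator 1 (z - x) := by
    have h₁ := abs_sub_sampleAvg_le hφ hY hε (fun i => u i + t') (z + (t - t') - x)
    have h₂ := abs_sub_sampleAvg_le hφ hY hε (fun i => u i + t) (z - x)
    rw [sampleAvg_translate] at h₁ h₂
    rw [show z + (t - t') - x + t' = z - x + t by abel] at h₁
    rw [abs_sub_comm] at h₂
    linarith [abs_sub_le (weightedAvg φ Y (z + (t - t') - x)) (sampleAvg u Y (z - x + t))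
      (weightedAvg φ Y (z - x))]
  refine (sum_le_sum fun x _ => mul_le_mul_of_nonneg_left (hpoint x) (hφ.1 x)).trans ?_
  simp only [mul_add, sum_add_distrib, ← sum_mul, hφ.2, one_mul]
  linarith [sum_mul_indicator_translate_le hω hκ hφω ht' hz',
    sum_mul_indicator_translate_le hω hκ hφω ht hz]

lemma diffAvg_translate (φ Y : G → ℝ) (z : G) :
    diffAvg φ (fun t => Y (t + z)) = ∑ x, φ x * weightedAvg φ Y (z - x) := by
  rw [diffAvg, sum_comm]
  refine sum_congr rfl fun x _ => ?_
  rw [weightedAvg, mul_sum]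
  refine sum_congr rfl fun s _ => ?_
  rw [show s - x + z = z - x + s by abel]; ring

lemma sum_abs_weightedAvg_sub_le_of_mem_iterDiff (hφ : φ ∈ stdSimplex ℝ G)
    (hω : IsSlowMeasure ω h) (hκ : 0 < κ) (hφω : ∀ s, φ s ≤ κ⁻¹ * ω s)
    (hY : ∀ t, Y t ∈ Set.Icc 0 1) (hε : 0 ≤ ε) {k : ℕ} {u : Fin k → G} {T : Set G}
    (hT : T ⊆ goodTranslates φ Y ω κ ε u) {m : ℕ} (hm : ∀ j ≤ m, ∀ z ∈ iterDiff T j, h z ≤ 1)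
    {z : G} (hz : z ∈ iterDiff T m) :
    ∑ x, φ x * |weightedAvg φ Y (z - x) - weightedAvg φ Y (-x)| ≤ 8 * m * ε := by
  induction m generalizing z with
  | zero => simp [Set.mem_singleton_iff.1 hz]
  | succ m ih =>
    have hz₁ := hm _ le_rfl z hz
    obtain ⟨z', hz', _, ⟨t, ht, t', ht', rfl⟩, rfl⟩ := hz
    have hprev := ih (fun j hj => hm j (by omega)) hz'
    have hstep := sum_abs_weightedAvg_sub_le hφ hω hκ hφω hY hε (hT ht) (hT ht')
      (hm m (by omega) z' hz') hz₁
    calc ∑ x, φ x * |weightedAvg φ Y (z' + (t - t') - x) - weightedAvg φ Y (-x)|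
        ≤ ∑ x, (φ x * |weightedAvg φ Y (z' + (t - t') - x) - weightedAvg φ Y (z' - x)| +
            φ x * |weightedAvg φ Y (z' - x) - weightedAvg φ Y (-x)|) :=
          sum_le_sum fun x _ => by
            rw [← mul_add]; exact mul_le_mul_of_nonneg_left (abs_sub_le _ _ _) (hφ.1 x)
      _ ≤ 8 * (m + 1 : ℕ) * ε := by rw [sum_add_distrib]; push_cast; linarith

/- Almost periodicity after Croot and Sisask. -/
theorem exists_almostPeriods (hφ : φ ∈ stdSimplex ℝ G) (hω : IsSlowMeasure ω h) (hκ : 0 < κ)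
    (hφω : ∀ s, φ s ≤ κ⁻¹ * ω s) (hY : ∀ t, Y t ∈ Set.Icc 0 1) (hμ : μ ∈ stdSimplex ℝ G) {m k : ℕ}
    (hm : 0 < m) (hk : 0 < k) (hε : 0 < ε) (hmε : 8 * m * ε ≤ 1 / 1000)
    (hkε : exp (-(k * ε ^ 2 / 4)) ≤ κ * ε / 8)
    (htail : ∑ t, μ t * exp (k * h t) * {t | 1 < 2 * m * h t}.indicator 1 t ≤ (κ / 2) ^ k / 8) :
    ∃ T : Set G, (κ / 2) ^ k / 8 ≤ ∑ t, μ t * exp (k * h t) * T.indicator 1 t ∧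
      ∀ z ∈ iterDiff T m, diffAvg φ Y - 1 / 1000 ≤ diffAvg φ (fun t => Y (t + z)) := by
  classical
  have hm₁ : (1 : ℝ) ≤ m := by exact_mod_cast hm
  have hmass := half_le_sum_mul_indicator_le (prod_mem_stdSimplex hφ k)
    (fun u => sum_nonneg fun x _ => mul_nonneg (hω.nonneg x)
      (Set.indicator_nonneg (fun _ _ => zero_le_one) _)) (c := κ * ε) (by positivity)
    ((sum_prod_mul_badPoints_mass_le hφ hω.nonneg hω.sum_le_two hY hε.le (by nlinarith) hk).trans
      (by linarith))
  obtain ⟨u, hu⟩ := exists_many_translates_mem hφ hω hκ hφω hμ hmass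
  refine ⟨goodTranslates φ Y ω κ ε u ∩ {t | 2 * m * h t ≤ 1}, ?_, fun z hz => ?_⟩
  · have hsplit : ∑ t, μ t * exp (k * h t) * (goodTranslates φ Y ω κ ε u).indicator 1 t ≤
        ∑ t, μ t * exp (k * h t) *
          (goodTranslates φ Y ω κ ε u ∩ {t | 2 * m * h t ≤ 1}).indicator 1 t +
        ∑ t, μ t * exp (k * h t) * {t | 1 < 2 * m * h t}.indicator 1 t := by
      rw [← sum_add_distrib]
      refine sum_le_sum fun t _ => ?_
      rw [← mul_add]
      refine mul_le_mul_of_nonneg_left ?_ (mul_nonneg (hμ.1 t) (exp_pos _).le)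
      simp only [Set.indicator_apply, Set.mem_inter_iff, Set.mem_ofPred_eq, ← not_le, Pi.one_apply]
      split_ifs <;> first | tauto | norm_num
    have hgood : (κ / 2) ^ k / 4 ≤
        ∑ t, μ t * exp (k * h t) * (goodTranslates φ Y ω κ ε u).indicator 1 t := hu
    linarith
  · have hshort (j : ℕ) (hj : j ≤ m) (z : G)
        (hz : z ∈ iterDiff (goodTranslates φ Y ω κ ε u ∩ {t | 2 * m * h t ≤ 1}) j) : h z ≤ 1 := by
      refine (hω.isLength.le_of_mem_iterDiff (c := 1 / (2 * m)) (fun t ht => ?_) hz).trans ?_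
      · rw [le_div_iff₀ (by positivity), mul_comm]; exact ht.2
      · rw [mul_one_div, div_le_one (by positivity)]; gcongr
    have hclose := sum_abs_weightedAvg_sub_le_of_mem_iterDiff hφ hω hκ hφω hY hε.le
      Set.inter_subset_left hshort hz
    have hbase : diffAvg φ Y = ∑ x, φ x * weightedAvg φ Y (-x) := by
      simpa only [add_zero, zero_sub] using diffAvg_translate φ Y 0
    rw [hbase, diffAvg_translate, sub_le_comm, ← sum_sub_distrib]
    refine (sum_le_sum fun x _ => ?_).trans (hclose.trans hmε)
    rw [← mul_sub, abs_sub_comm]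
    exact mul_le_mul_of_nonneg_left (le_abs_self _) (hφ.1 x)

end AlmostPeriodicity

section Fourier

variable {G : Type*} [AddCommGroup G]

/-- The distance from `γ t` to `1`, as a function of `t`. Sublevel sets of sums of these lengths are
Bohr sets. -/
noncomputable def charLength (γ : AddChar G ℂ) (t : G) : ℝ := ‖1 - γ t‖

lemma isLength_charLength [Finite G] (γ : AddChar G ℂ) : IsLength (charLength γ) where
  map_zero := by simp [charLength]
  map_neg x := by
    rw [charLength, charLength, AddChar.map_neg_eq_conj, ← Complex.norm_conj, map_sub, map_one,
      Complex.conj_conj]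
  map_add_le x y := by
    rw [charLength, AddChar.map_add_eq_mul,
      show 1 - γ x * γ y = (1 - γ x) + γ x * (1 - γ y) by ring]
    refine (norm_add_le _ _).trans_eq ?_
    rw [norm_mul, AddChar.norm_apply, one_mul, charLength, charLength]

lemma abs_translate_sub_le {ℓ ν : G → ℝ} (hℓ : ∀ t, ℓ (-t) = ℓ t) (hν : ∀ x, 0 ≤ ν x)
    (hνℓ : ∀ x t, ν (x + t) ≤ exp (ℓ t) * ν x) (x t : G) :
    |ν (x + t) - ν x| ≤ (exp (ℓ t) - 1) * ν x := by
  have hback := hνℓ (x + t) (-t)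
  rw [hℓ, add_neg_cancel_right] at hback
  rw [abs_le]
  refine ⟨?_, by linarith [hνℓ x t]⟩
  have hlower : exp (-ℓ t) * ν x ≤ ν (x + t) := by
    rw [exp_neg, ← div_eq_inv_mul]; exact (div_le_iff₀' (exp_pos _)).2 hback
  have hconv : 2 - exp (ℓ t) ≤ exp (-ℓ t) := by
    nlinarith [exp_pos (ℓ t), exp_pos (-ℓ t), mul_self_nonneg (exp (ℓ t) - 1),
      show exp (ℓ t) * exp (-ℓ t) = 1 by rw [← exp_add, add_neg_cancel, exp_zero]]
  nlinarith [hν x]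

variable [Fintype G]

/-- The Fourier coefficient `∑ a(x) γ(x)`; this is the transform of `a` at the character `γ⁻¹`. -/
noncomputable def charSum (a : G → ℝ) (γ : AddChar G ℂ) : ℂ := ∑ x, (a x : ℂ) * γ x

lemma sum_norm_charSum_sq (a : G → ℝ) :
    ∑ γ : AddChar G ℂ, ‖charSum a γ‖ ^ 2 = Fintype.card G * ∑ x, a x ^ 2 := by
  classical
  have hcomplex : ∑ γ : AddChar G ℂ, (‖charSum a γ‖ : ℂ) ^ 2 =
      (Fintype.card G : ℂ) * ∑ x, (a x : ℂ) ^ 2 :=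
    calc ∑ γ : AddChar G ℂ, (‖charSum a γ‖ : ℂ) ^ 2
        = ∑ γ : AddChar G ℂ, ∑ x, ∑ y, (a x : ℂ) * a y * γ (x - y) := by
          refine sum_congr rfl fun γ _ => ?_
          rw [← Complex.mul_conj', charSum, map_sum, sum_mul_sum]
          refine sum_congr rfl fun x _ => sum_congr rfl fun y _ => ?_
          rw [map_mul, Complex.conj_ofReal, ← AddChar.map_neg_eq_conj, sub_eq_add_neg,
            AddChar.map_add_eq_mul]
          ring
      _ = ∑ x, ∑ y, (a x : ℂ) * a y * ∑ γ : AddChar G ℂ, γ (x - y) := by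
          simp only [mul_sum]
          rw [sum_comm]
          exact sum_congr rfl fun x _ => sum_comm
      _ = (Fintype.card G : ℂ) * ∑ x, (a x : ℂ) ^ 2 := by
          simp only [AddChar.sum_apply_eq_ite, sub_eq_zero, mul_ite, mul_zero, sum_ite_eq, mem_univ,
            if_true, mul_sum]
          exact sum_congr rfl fun x _ => by ring
  exact_mod_cast hcomplex

lemma charSum_weightedAvg (φ a : G → ℝ) (γ : AddChar G ℂ) :
    charSum (weightedAvg φ a) γ = conj (charSum φ γ) * charSum a γ := by
  simp only [charSum, weightedAvg, Complex.ofReal_sum, Complex.ofReal_mul, map_sum, sum_mul]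
  rw [sum_comm]
  refine sum_congr rfl fun s _ => ?_
  rw [mul_sum, ← Equiv.sum_comp (Equiv.addRight s) fun y => conj (φ s * γ s : ℂ) * (a y * γ y)]
  refine sum_congr rfl fun y _ => ?_
  rw [Equiv.coe_addRight, map_mul, Complex.conj_ofReal, ← AddChar.map_neg_eq_conj,
    show γ y = γ (-s) * γ (y + s) by rw [← AddChar.map_add_eq_mul, neg_add_cancel_comm_assoc]]
  simp only
  ring

lemma norm_charSum_weightedAvg (φ a : G → ℝ) (γ : AddChar G ℂ) :
    ‖charSum (weightedAvg φ a) γ‖ = ‖charSum φ γ‖ * ‖charSum a γ‖ := by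
  rw [charSum_weightedAvg, norm_mul, Complex.norm_conj]

lemma norm_charSum_iterate_weightedAvg (ρ b : G → ℝ) (m : ℕ) (γ : AddChar G ℂ) :
    ‖charSum ((weightedAvg ρ)^[m] b) γ‖ = ‖charSum ρ γ‖ ^ m * ‖charSum b γ‖ := by
  induction m with
  | zero => simp
  | succ m ih => rw [Function.iterate_succ_apply', norm_charSum_weightedAvg, ih]; ring

variable {φ ρ μ : G → ℝ}

lemma norm_charSum_le_one (hφ : φ ∈ stdSimplex ℝ G) (γ : AddChar G ℂ) : ‖charSum φ γ‖ ≤ 1 := by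
  refine (norm_sum_le _ _).trans_eq ?_
  rw [← hφ.2]
  exact sum_congr rfl fun s _ => by
    rw [norm_mul, AddChar.norm_apply, mul_one, Complex.norm_real, norm_of_nonneg (hφ.1 s)]

lemma one_sub_le_norm_charSum (hμ : μ ∈ stdSimplex ℝ G) (γ : AddChar G ℂ) :
    1 - ∑ t, μ t * charLength γ t ≤ ‖charSum μ γ‖ := by
  have hdecomp : charSum μ γ + ∑ t, (μ t : ℂ) * (1 - γ t) = 1 := by
    rw [charSum, ← sum_add_distrib]
    simp only [← mul_add, add_sub_cancel, mul_one]
    rw [← Complex.ofReal_sum, hμ.2, Complex.ofReal_one]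
  have herror : ‖∑ t, (μ t : ℂ) * (1 - γ t)‖ ≤ ∑ t, μ t * charLength γ t :=
    (norm_sum_le _ _).trans_eq <| sum_congr rfl fun t _ => by
      rw [norm_mul, Complex.norm_real, norm_of_nonneg (hμ.1 t), charLength]
  have htriangle := norm_add_le (charSum μ γ) (∑ t, (μ t : ℂ) * (1 - γ t))
  rw [hdecomp, norm_one] at htriangle
  linarith

lemma autocorr_weightedAvg (ρ b : G → ℝ) (z : G) :
    autocorr (weightedAvg ρ b) z = diffAvg ρ (fun t => autocorr b (t + z)) := by
  have hcorr (u v : G) :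
      autocorr b (u - v + z) = ∑ x, b (x + v) * b (x + z + u) := by
    rw [autocorr, ← Equiv.sum_comp (Equiv.addRight v)]
    refine sum_congr rfl fun x _ => ?_
    rw [Equiv.coe_addRight, show x + v + (u - v + z) = x + z + u by abel]
  calc autocorr (weightedAvg ρ b) z
      = ∑ x, ∑ u, ∑ v, ρ u * ρ v * (b (x + v) * b (x + z + u)) := by
        refine sum_congr rfl fun x _ => ?_
        rw [mul_comm, weightedAvg, weightedAvg, sum_mul_sum]
        exact sum_congr rfl fun u _ => sum_congr rfl fun v _ => by ring
    _ = ∑ u, ∑ v, ρ u * ρ v * autocorr b (u - v + z) := by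
        simp only [hcorr, mul_sum]
        rw [sum_comm]
        exact sum_congr rfl fun u _ => sum_comm

lemma le_sum_iterate_weightedAvg_sq (hρ : ρ ∈ stdSimplex ℝ G) {T : Set G}
    (hT : Function.support ρ ⊆ T) {c : ℝ} {b : G → ℝ} {m : ℕ}
    (hb : ∀ z ∈ iterDiff T m, c ≤ autocorr b z) : c ≤ ∑ x, ((weightedAvg ρ)^[m] b) x ^ 2 := by
  induction m generalizing b with
  | zero => simpa [autocorr, sq] using hb 0 rfl
  | succ m ih =>
    rw [Function.iterate_succ_apply]
    refine ih fun z hz => ?_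
    rw [autocorr_weightedAvg]
    calc c = diffAvg ρ (fun _ => c) := by rw [diffAvg_const, hρ.2, one_pow, one_mul]
      _ ≤ diffAvg ρ (fun t => autocorr b (t + z)) := by
        refine sum_le_sum fun u _ => sum_le_sum fun v _ => ?_
        by_cases huv : ρ u * ρ v = 0
        · rw [huv, zero_mul, zero_mul]
        · obtain ⟨hu, hv⟩ := mul_ne_zero_iff.1 huv
          refine mul_le_mul_of_nonneg_left (hb _ ?_) (mul_nonneg (hρ.1 u) (hρ.1 v))
          rw [add_comm (u - v)]
          exact Set.add_mem_add hz (Set.sub_mem_sub (hT hu) (hT hv))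

/-- The characters at which the measure `ρ` has a Fourier coefficient of size at least `1 / 2`. -/
def largeSpectrum (ρ : G → ℝ) : Set (AddChar G ℂ) := {γ | 1 / 2 ≤ ‖charSum ρ γ‖}

lemma mul_sq_le_sq_add_quarter_pow {r q s δ : ℝ} (hr : 0 ≤ r) (hr' : r ≤ 1) (hq : 0 ≤ q)
    (hq' : q ≤ 1) (hδ₀ : 0 ≤ δ) (hδ : δ ≤ 1 / 2) (hs : 1 / 2 ≤ r → 1 - δ ≤ s) (m : ℕ) :
    (1 - 2 * δ) * (r ^ m * q) ^ 2 ≤ s ^ 2 + (1 - 2 * δ) * (1 / 4) ^ m := by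
  have hδ' : 0 ≤ 1 - 2 * δ := by linarith
  have hle : (r ^ m * q) ^ 2 ≤ (r ^ 2) ^ m := by
    rw [mul_pow, pow_right_comm]
    exact mul_le_of_le_one_right (by positivity) (pow_le_one₀ hq hq')
  rcases le_or_gt (1 / 2) r with hlarge | hsmall
  · have hone : (r ^ 2) ^ m ≤ 1 := pow_le_one₀ (sq_nonneg r) (pow_le_one₀ hr hr')
    have hsq : 1 - 2 * δ ≤ s ^ 2 := by nlinarith [hs hlarge]
    calc (1 - 2 * δ) * (r ^ m * q) ^ 2 ≤ (1 - 2 * δ) * 1 :=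
          mul_le_mul_of_nonneg_left (hle.trans hone) hδ'
      _ ≤ s ^ 2 + (1 - 2 * δ) * (1 / 4) ^ m := by
          rw [mul_one]; exact hsq.trans (le_add_of_nonneg_right (by positivity))
  · have hquarter : (r ^ 2) ^ m ≤ (1 / 4) ^ m :=
      pow_le_pow_left₀ (sq_nonneg r) (by nlinarith) m
    exact (mul_le_mul_of_nonneg_left (hle.trans hquarter) hδ').trans
      (le_add_of_nonneg_left (sq_nonneg s))

/- Convolving `m` times with `ρ` kills the frequencies outside the large spectrum, and on the large
spectrum `μ` has Fourier coefficients close to `1`. -/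
lemma mul_energy_sub_le_sum_weightedAvg_sq (hρ : ρ ∈ stdSimplex ℝ G) (hφ : φ ∈ stdSimplex ℝ G)
    (hμ : μ ∈ stdSimplex ℝ G) {δ : ℝ} (hδ₀ : 0 ≤ δ) (hδ : δ ≤ 1 / 2)
    (hspec : ∀ γ ∈ largeSpectrum ρ, ∑ t, μ t * charLength γ t ≤ δ) (a : G → ℝ) (m : ℕ) :
    (1 - 2 * δ) * (∑ x, ((weightedAvg ρ)^[m] (weightedAvg φ a)) x ^ 2 -
      (1 / 4) ^ m * ∑ x, a x ^ 2) ≤ ∑ x, weightedAvg μ a x ^ 2 := by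
  have hpoint (γ : AddChar G ℂ) :
      (1 - 2 * δ) * ‖charSum ((weightedAvg ρ)^[m] (weightedAvg φ a)) γ‖ ^ 2 ≤
        ‖charSum (weightedAvg μ a) γ‖ ^ 2 +
          (1 - 2 * δ) * (1 / 4) ^ m * ‖charSum a γ‖ ^ 2 := by
    have hfactor := mul_sq_le_sq_add_quarter_pow (norm_nonneg _) (norm_charSum_le_one hρ γ)
      (norm_nonneg _) (norm_charSum_le_one hφ γ) hδ₀ hδ (s := ‖charSum μ γ‖)
      (fun hγ => (sub_le_sub_left (hspec γ hγ) 1).trans (one_sub_le_norm_charSum hμ γ)) m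
    rw [norm_charSum_iterate_weightedAvg, norm_charSum_weightedAvg, norm_charSum_weightedAvg,
      ← mul_assoc (_ ^ m), mul_pow _ ‖charSum a γ‖, mul_pow _ ‖charSum a γ‖, ← mul_assoc,
      ← add_mul]
    gcongr
  have hsum := sum_le_sum fun γ (_ : γ ∈ univ) => hpoint γ
  simp only [sum_add_distrib, ← mul_sum, sum_norm_charSum_sq] at hsum
  have hcard : (0 : ℝ) < Fintype.card G := by exact_mod_cast Fintype.card_pos
  refine le_of_mul_le_mul_left ?_ hcard
  linarith

end Fourier

section Chang

variable {G : Type*} [AddCommGroup G] {c : AddChar G ℂ → ℂ} {σ ρ ν ℓ : G → ℝ}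

/-- The Riesz product `∏ (1 + Re (c(γ) γ(x)) / 4)` over `γ ∈ Λ`. -/
noncomputable def rieszProduct (c : AddChar G ℂ → ℂ) (Λ : Finset (AddChar G ℂ)) (x : G) : ℝ :=
  ∏ γ ∈ Λ, (1 + 1 / 4 * (c γ * γ x).re)

lemma abs_re_mul_addChar_le [Finite G] (hc : ∀ γ, ‖c γ‖ ≤ 1) (γ : AddChar G ℂ) (x : G) :
    |(c γ * γ x).re| ≤ 1 := by
  refine (Complex.abs_re_le_norm _).trans ?_
  rw [norm_mul, AddChar.norm_apply, mul_one]
  exact hc γ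

lemma rieszProduct_nonneg [Finite G] (hc : ∀ γ, ‖c γ‖ ≤ 1) (Λ : Finset (AddChar G ℂ)) (x : G) :
    0 ≤ rieszProduct c Λ x :=
  prod_nonneg fun γ _ => by linarith [(abs_le.1 (abs_re_mul_addChar_le hc γ x)).1]

lemma rieszProduct_translate_le [Finite G] (hc : ∀ γ, ‖c γ‖ ≤ 1) (Λ : Finset (AddChar G ℂ))
    (x t : G) :
    rieszProduct c Λ (x + t) ≤ exp (∑ γ ∈ Λ, charLength γ t) * rieszProduct c Λ x := by
  rw [rieszProduct, rieszProduct, exp_sum, ← prod_mul_distrib]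
  refine prod_le_prod (fun γ _ => ?_) fun γ _ => ?_
  · linarith [(abs_le.1 (abs_re_mul_addChar_le hc γ (x + t))).1]
  · have hlower := (abs_le.1 (abs_re_mul_addChar_le hc γ x)).1
    have hdiff : (c γ * γ (x + t)).re - (c γ * γ x).re ≤ charLength γ t := by
      rw [← Complex.sub_re, AddChar.map_add_eq_mul,
        show c γ * (γ x * γ t) - c γ * γ x = -(c γ * γ x * (1 - γ t)) by ring]
      refine (Complex.re_le_norm _).trans ?_
      rw [norm_neg, norm_mul, norm_mul, AddChar.norm_apply, mul_one]
      exact mul_le_of_le_one_left (norm_nonneg _) (hc γ)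
    nlinarith [add_one_le_exp (charLength γ t), (isLength_charLength γ).nonneg t]

lemma exp_sub_twelfth_le_one_add {u : ℝ} (hu : |u| ≤ 1 / 4) : exp (u - 1 / 12) ≤ 1 + u := by
  obtain ⟨hlower, hupper⟩ := abs_le.1 hu
  have hpos : 0 < 1 + u := by linarith
  rw [← le_log_iff_exp_le hpos]
  refine le_trans ?_ (one_sub_inv_le_log_of_pos hpos)
  rw [show 1 - (1 + u)⁻¹ = u / (1 + u) by field_simp; ring, le_div_iff₀ hpos]
  nlinarith

lemma exp_sum_le_rieszProduct [Finite G] (hc : ∀ γ, ‖c γ‖ ≤ 1) (Λ : Finset (AddChar G ℂ))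
    (x : G) : exp (∑ γ ∈ Λ, (1 / 4 * (c γ * γ x).re - 1 / 12)) ≤ rieszProduct c Λ x := by
  rw [rieszProduct, exp_sum]
  refine prod_le_prod (fun γ _ => (exp_pos _).le) fun γ _ => exp_sub_twelfth_le_one_add ?_
  rw [abs_mul, abs_of_pos (by norm_num : (0 : ℝ) < 1 / 4)]
  linarith [abs_re_mul_addChar_le hc γ x]

variable [Fintype G]

lemma re_mul_charSum (c : ℂ) (a : G → ℝ) (γ : AddChar G ℂ) :
    (c * charSum a γ).re = ∑ x, a x * (c * γ x).re := by
  rw [charSum, mul_sum, Complex.re_sum]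
  exact sum_congr rfl fun x _ => by rw [mul_left_comm, Complex.re_ofReal_mul]

/-- No Riesz product over `Λ` correlates with `σ` much more than the constant function does. This
weak form of dissociativity is tailored to the greedy proof of Chang's theorem. -/
def IsRieszBounded (σ : G → ℝ) (Λ : Finset (AddChar G ℂ)) : Prop :=
  ∀ c : AddChar G ℂ → ℂ, (∀ γ, ‖c γ‖ ≤ 1) →
    ∑ x, σ x * rieszProduct c Λ x ≤ 2 * (1 + 1 / 100) ^ #Λ

lemma IsRieszBounded.card_le (hσ : ∀ s, 0 ≤ σ s) (hρ : ρ ∈ stdSimplex ℝ G) {τ : ℝ} (hτ : 0 < τ)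
    (hρσ : ∀ s, ρ s ≤ τ⁻¹ * σ s) {Λ : Finset (AddChar G ℂ)} (hΛ : IsRieszBounded σ Λ)
    (hspec : ∀ γ ∈ Λ, γ ∈ largeSpectrum ρ) : (#Λ : ℝ) ≤ 32 * log (2 / τ) := by
  choose c hc hcρ using fun γ => Complex.exists_norm_eq_mul_self (charSum ρ γ)
  have hc' (γ : AddChar G ℂ) : ‖c γ‖ ≤ 1 := (hc γ).le
  set g : G → ℝ := fun x => ∑ γ ∈ Λ, (1 / 4 * (c γ * γ x).re - 1 / 12)
  have hmean : (#Λ : ℝ) / 24 ≤ ∑ x, ρ x * g x := by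
    have hg : ∑ x, ρ x * g x = ∑ γ ∈ Λ, (1 / 4 * ‖charSum ρ γ‖ - 1 / 12) := by
      simp only [g, mul_sum]
      rw [sum_comm]
      refine sum_congr rfl fun γ _ => ?_
      rw [← Complex.ofReal_re ‖charSum ρ γ‖, hcρ, re_mul_charSum]
      simp only [mul_sub, sum_sub_distrib, ← sum_mul, hρ.2, one_mul, mul_sum,
        mul_left_comm (ρ _)]
    rw [hg, div_eq_mul_one_div, ← nsmul_eq_mul]
    exact card_nsmul_le_sum _ _ _ fun γ hγ => by
      linarith [show 1 / 2 ≤ ‖charSum ρ γ‖ from hspec γ hγ]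
  have hpow : (1 + 1 / 100 : ℝ) ^ #Λ ≤ exp (#Λ / 100) := by
    rw [div_eq_mul_one_div (#Λ : ℝ), exp_nat_mul]
    exact pow_le_pow_left₀ (by norm_num) (by linarith [add_one_le_exp (1 / 100 : ℝ)]) _
  have hexp : exp (#Λ / 24) ≤ 2 / τ * exp (#Λ / 100) :=
    calc exp (#Λ / 24) ≤ exp (∑ x, ρ x * g x) := exp_le_exp.2 hmean
      _ ≤ ∑ x, ρ x * exp (g x) := by
          simpa only [smul_eq_mul] using
            convexOn_exp.map_sum_le (p := g) (fun x _ => hρ.1 x) hρ.2 fun _ _ => Set.mem_univ _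
      _ ≤ ∑ x, τ⁻¹ * σ x * rieszProduct c Λ x := sum_le_sum fun x _ =>
          mul_le_mul (hρσ x) (exp_sum_le_rieszProduct hc' Λ x) (exp_pos _).le
            (mul_nonneg (inv_nonneg.2 hτ.le) (hσ x))
      _ = τ⁻¹ * ∑ x, σ x * rieszProduct c Λ x := by simp only [mul_assoc, mul_sum]
      _ ≤ τ⁻¹ * (2 * exp (#Λ / 100)) := by
          gcongr; exact (hΛ c hc').trans (by gcongr)
      _ = 2 / τ * exp (#Λ / 100) := by ring
  rw [← div_le_iff₀ (exp_pos _), ← exp_sub, ← le_log_iff_exp_le (by positivity)] at hexp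
  linarith [(#Λ).cast_nonneg (α := ℝ)]

lemma charLength_mul_norm_charSum_le (hℓ : ∀ t, ℓ (-t) = ℓ t) (hν : ∀ x, 0 ≤ ν x)
    (hνℓ : ∀ x t, ν (x + t) ≤ exp (ℓ t) * ν x) (γ : AddChar G ℂ) (t : G) :
    charLength γ t * ‖charSum ν γ‖ ≤ (exp (ℓ t) - 1) * ∑ x, ν x := by
  have hshift : charSum ν γ = γ t * ∑ x, (ν (x + t) : ℂ) * γ x := by
    rw [charSum, ← Equiv.sum_comp (Equiv.addRight t), mul_sum]
    refine sum_congr rfl fun x _ => ?_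
    rw [Equiv.coe_addRight, AddChar.map_add_eq_mul]; ring
  have hdiff : (1 - γ t) * ∑ x, (ν (x + t) : ℂ) * γ x =
      ∑ x, ((ν (x + t) : ℂ) - ν x) * γ x := by
    simp only [sub_mul, sum_sub_distrib, one_mul, ← hshift, charSum]
  calc charLength γ t * ‖charSum ν γ‖ = ‖∑ x, ((ν (x + t) : ℂ) - ν x) * γ x‖ := by
        rw [hshift, norm_mul, AddChar.norm_apply, one_mul, charLength, ← norm_mul, hdiff]
    _ ≤ ∑ x, |ν (x + t) - ν x| := (norm_sum_le _ _).trans_eq <| sum_congr rfl fun x _ => by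
        rw [norm_mul, AddChar.norm_apply, mul_one, ← Complex.ofReal_sub, Complex.norm_real,
          norm_eq_abs]
    _ ≤ (exp (ℓ t) - 1) * ∑ x, ν x := by
        rw [mul_sum]; exact sum_le_sum fun x _ => abs_translate_sub_le hℓ hν hνℓ x t

lemma sum_mul_rieszProduct_insert [DecidableEq (AddChar G ℂ)] (c : AddChar G ℂ → ℂ) (σ : G → ℝ)
    {Λ : Finset (AddChar G ℂ)} {γ : AddChar G ℂ} (hγ : γ ∉ Λ) :
    ∑ x, σ x * rieszProduct c (insert γ Λ) x = ∑ x, σ x * rieszProduct c Λ x +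
      1 / 4 * (c γ * charSum (fun x => σ x * rieszProduct c Λ x) γ).re := by
  rw [re_mul_charSum, mul_sum, ← sum_add_distrib]
  refine sum_congr rfl fun x _ => ?_
  rw [rieszProduct, prod_insert hγ, rieszProduct]
  ring

lemma IsRieszBounded.charLength_le (hσ : IsSlowMeasure σ ℓ)
    {Λ : Finset (AddChar G ℂ)} (hΛ : IsRieszBounded σ Λ) [DecidableEq (AddChar G ℂ)]
    {γ : AddChar G ℂ} (hγ : γ ∉ Λ) (hins : ¬ IsRieszBounded σ (insert γ Λ)) (t : G) :
    charLength γ t ≤ 25 * (exp (ℓ t + ∑ δ ∈ Λ, charLength δ t) - 1) := by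
  obtain ⟨c, hc, hbig⟩ : ∃ c : AddChar G ℂ → ℂ, (∀ γ, ‖c γ‖ ≤ 1) ∧
      2 * (1 + 1 / 100 : ℝ) ^ (#Λ + 1) < ∑ x, σ x * rieszProduct c (insert γ Λ) x := by
    simpa [IsRieszBounded, card_insert_of_notMem hγ] using hins
  set ν : G → ℝ := fun x => σ x * rieszProduct c Λ x
  have hν (x : G) : 0 ≤ ν x := mul_nonneg (hσ.nonneg x) (rieszProduct_nonneg hc Λ x)
  have hνℓ (x t : G) : ν (x + t) ≤ exp (ℓ t + ∑ δ ∈ Λ, charLength δ t) * ν x :=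
    (mul_le_mul (hσ.le_exp_mul x t) (rieszProduct_translate_le hc Λ x t)
      (rieszProduct_nonneg hc Λ _) (mul_nonneg (exp_pos _).le (hσ.nonneg x))).trans_eq
      (by rw [exp_add]; ring)
  have hlarge : 1 / 100 * (2 * (1 + 1 / 100) ^ #Λ) < 1 / 4 * ‖charSum ν γ‖ := by
    have hre : (c γ * charSum ν γ).re ≤ ‖charSum ν γ‖ := by
      refine (Complex.re_le_norm _).trans ?_
      rw [norm_mul]
      exact mul_le_of_le_one_left (norm_nonneg _) (hc γ)
    rw [sum_mul_rieszProduct_insert c σ hγ, pow_succ] at hbig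
    linarith [hΛ c hc]
  have hpos : 0 < ‖charSum ν γ‖ := by
    linarith [show 0 < (1 + 1 / 100 : ℝ) ^ #Λ by positivity]
  have hℓ₀ : 0 ≤ exp (ℓ t + ∑ δ ∈ Λ, charLength δ t) - 1 :=
    sub_nonneg.2 <| one_le_exp <| add_nonneg (hσ.isLength.nonneg t) <|
      sum_nonneg fun δ _ => (isLength_charLength δ).nonneg t
  refine le_of_mul_le_mul_right ?_ hpos
  calc charLength γ t * ‖charSum ν γ‖
      ≤ (exp (ℓ t + ∑ δ ∈ Λ, charLength δ t) - 1) * ∑ x, ν x :=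
        charLength_mul_norm_charSum_le (ℓ := fun t => ℓ t + ∑ δ ∈ Λ, charLength δ t)
          (fun t => by simp only [hσ.isLength.map_neg, (isLength_charLength _).map_neg]) hν hνℓ γ t
    _ ≤ (exp (ℓ t + ∑ δ ∈ Λ, charLength δ t) - 1) * (25 * ‖charSum ν γ‖) := by
        gcongr; linarith [hΛ c hc]
    _ = 25 * (exp (ℓ t + ∑ δ ∈ Λ, charLength δ t) - 1) * ‖charSum ν γ‖ := by ring

/- A relative version of Chang's theorem: take a maximal Riesz bounded set in the large spectrum. -/
theorem exists_card_le_charLength_le (hσ : IsSlowMeasure σ ℓ) (hρ : ρ ∈ stdSimplex ℝ G) {τ : ℝ}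
    (hτ : 0 < τ) (hρσ : ∀ s, ρ s ≤ τ⁻¹ * σ s) :
    ∃ Λ : Finset (AddChar G ℂ), (#Λ : ℝ) ≤ 32 * log (2 / τ) ∧ ∀ γ ∈ largeSpectrum ρ, ∀ t,
      charLength γ t ≤ 25 * (exp (ℓ t + ∑ δ ∈ Λ, charLength δ t) - 1) := by
  classical
  obtain ⟨Λ, hΛmem, hmax⟩ := exists_max_image
    (univ.filter fun Λ => IsRieszBounded σ Λ ∧ ∀ γ ∈ Λ, γ ∈ largeSpectrum ρ) card
    ⟨∅, by simpa [IsRieszBounded, rieszProduct] using fun _ _ => hσ.sum_le_two⟩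
  obtain ⟨hΛ, hspec⟩ := (mem_filter.1 hΛmem).2
  refine ⟨Λ, hΛ.card_le hσ.nonneg hρ hτ hρσ hspec, fun γ hγ t => ?_⟩
  by_cases hmem : γ ∈ Λ
  · have hsingle : charLength γ t ≤ ∑ δ ∈ Λ, charLength δ t :=
      single_le_sum (f := fun δ : AddChar G ℂ => charLength δ t)
        (fun δ _ => (isLength_charLength δ).nonneg t) hmem
    linarith [add_one_le_exp (ℓ t + ∑ δ ∈ Λ, charLength δ t), hσ.isLength.nonneg t,
      (isLength_charLength γ).nonneg t]
  · refine hΛ.charLength_le hσ hmem (fun hins => ?_) t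
    have hcard := hmax (insert γ Λ) (mem_filter.2 ⟨mem_univ _, hins, fun δ hδ => by
      rcases mem_insert.1 hδ with rfl | hδ
      exacts [hγ, hspec δ hδ]⟩)
    rw [card_insert_of_notMem hmem] at hcard
    omega

end Chang

section BohrLength

variable {G : Type*} [AddCommGroup G] {r r' b b' : ℝ} {ℓ ℓ' : G → ℝ}

lemma charLength_sub [Finite G] (γ : AddChar G ℂ) (x y : G) :
    charLength γ (x - y) = ‖γ x - γ y‖ := by
  rw [norm_sub_rev, show γ y - γ x = γ y * (1 - γ (x - y)) by
    rw [mul_sub, mul_one, ← AddChar.map_add_eq_mul, add_sub_cancel], norm_mul, AddChar.norm_apply,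
    one_mul, charLength]

lemma charLength_le_two [Finite G] (γ : AddChar G ℂ) (x : G) : charLength γ x ≤ 2 := by
  refine (norm_sub_le _ _).trans ?_
  rw [AddChar.norm_apply, norm_one]
  norm_num

/-- `ℓ` is a combination of at most `r` of the lengths `charLength γ`, with coefficients in
`[0, b]`. The sublevel sets of `ℓ` play the role of a Bohr set of rank `r` and its dilates, and `b`
that of the reciprocal of its radius. -/
def IsBohrLength (r b : ℝ) (ℓ : G → ℝ) : Prop :=
  ∃ (n : ℕ) (γ : Fin n → AddChar G ℂ) (c : Fin n → ℝ), (n : ℝ) ≤ r ∧ (∀ i, 0 ≤ c i ∧ c i ≤ b) ∧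
    ∀ t, ℓ t = ∑ i, c i * charLength (γ i) t

namespace IsBohrLength

lemma zero : IsBohrLength 0 0 (0 : G → ℝ) :=
  ⟨0, Fin.elim0, Fin.elim0, by simp, fun i => i.elim0, by simp⟩

lemma rank_nonneg (h : IsBohrLength r b ℓ) : 0 ≤ r := by
  obtain ⟨n, -, -, hn, -⟩ := h
  exact n.cast_nonneg.trans hn

lemma mono (h : IsBohrLength r b ℓ) (hr : r ≤ r') (hb : b ≤ b') : IsBohrLength r' b' ℓ := by
  obtain ⟨n, γ, c, hn, hc, hℓ⟩ := h
  exact ⟨n, γ, c, hn.trans hr, fun i => ⟨(hc i).1, (hc i).2.trans hb⟩, hℓ⟩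

lemma const_mul (h : IsBohrLength r b ℓ) {k : ℝ} (hk : 0 ≤ k) :
    IsBohrLength r (k * b) (fun t => k * ℓ t) := by
  obtain ⟨n, γ, c, hn, hc, hℓ⟩ := h
  refine ⟨n, γ, fun i => k * c i, hn, fun i =>
    ⟨mul_nonneg hk (hc i).1, mul_le_mul_of_nonneg_left (hc i).2 hk⟩, fun t => ?_⟩
  simp only [hℓ, mul_sum, mul_assoc]

lemma comp (h : IsBohrLength r b ℓ) (φ : G →+ G) : IsBohrLength r b (fun t => ℓ (φ t)) := by
  obtain ⟨n, γ, c, hn, hc, hℓ⟩ := h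
  exact ⟨n, fun i => (γ i).compAddMonoidHom φ, c, hn, hc, fun t => hℓ _⟩

lemma add (h : IsBohrLength r b ℓ) (h' : IsBohrLength r' b ℓ') :
    IsBohrLength (r + r') b (fun t => ℓ t + ℓ' t) := by
  obtain ⟨n, γ, c, hn, hc, hℓ⟩ := h
  obtain ⟨n', γ', c', hn', hc', hℓ'⟩ := h'
  refine ⟨n + n', Fin.append γ γ', Fin.append c c', by push_cast; linarith,
    Fin.addCases (fun i => by simpa using hc i) fun i => by simpa using hc' i, fun t => ?_⟩
  simp only [hℓ, hℓ', Fin.sum_univ_add, Fin.append_left, Fin.append_right]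

lemma sum_charLength (Λ : Finset (AddChar G ℂ)) :
    IsBohrLength (#Λ : ℝ) 1 (fun t => ∑ γ ∈ Λ, charLength γ t) := by
  refine ⟨#Λ, fun i => (Λ.equivFin.symm i : AddChar G ℂ), fun _ => 1, le_rfl,
    fun _ => ⟨zero_le_one, le_rfl⟩, fun t => ?_⟩
  simp only [one_mul]
  rw [Λ.equivFin.symm.sum_comp fun γ : Λ => charLength (γ : AddChar G ℂ) t, sum_coe_sort Λ
    fun γ => charLength γ t]

lemma isLength [Finite G] (h : IsBohrLength r b ℓ) : IsLength ℓ := by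
  obtain ⟨n, γ, c, -, hc, hℓ⟩ := h
  refine ⟨?_, fun x => ?_, fun x y => ?_⟩
  · simp only [hℓ, (isLength_charLength _).map_zero, mul_zero, sum_const_zero]
  · simp only [hℓ, (isLength_charLength _).map_neg]
  · simp only [hℓ, ← sum_add_distrib, ← mul_add]
    exact sum_le_sum fun i _ =>
      mul_le_mul_of_nonneg_left ((isLength_charLength (γ i)).map_add_le x y) (hc i).1

lemma le_rank_of_le_half [Finite G] (h : IsBohrLength r b ℓ) (hb : b ≤ 1 / 2) (x : G) :
    ℓ x ≤ r := by
  obtain ⟨n, γ, c, hn, hc, hℓ⟩ := h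
  rw [hℓ]
  refine (sum_le_card_nsmul _ _ 1 fun i _ => ?_).trans (by simpa using hn)
  nlinarith [hc i, charLength_le_two (γ i) x, (isLength_charLength (γ i)).nonneg x]

end IsBohrLength

end BohrLength

section Doubling

/-- A summable weight on the cells `[n, n + 1)`, which on the cell of `a` is at least
`exp (-|a| / 4)`. -/
noncomputable def floorWeight : ℤ → ℝ
  | .ofNat n => (4 / 5) ^ n
  | .negSucc n => (4 / 5) ^ n

lemma floorWeight_nonneg : ∀ n, 0 ≤ floorWeight n
  | .ofNat n => pow_nonneg (by norm_num) n
  | .negSucc n => pow_nonneg (by norm_num) n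

lemma sum_floorWeight_le (t : Finset ℤ) : ∑ n ∈ t, floorWeight n ≤ 10 := by
  have hgeom : HasSum (fun n : ℕ => (4 / 5 : ℝ) ^ n) 5 := by
    convert hasSum_geometric_of_lt_one (r := (4 / 5 : ℝ)) (by norm_num) (by norm_num) using 1
    norm_num
  have hsum : HasSum floorWeight (5 + 5) := by
    convert hgeom.int_rec hgeom using 1
    funext n
    cases n <;> rfl
  exact (sum_le_hasSum t (fun n _ => floorWeight_nonneg n) hsum).trans_eq (by norm_num)

lemma exp_neg_abs_div_four_le_floorWeight (a : ℝ) : exp (-(|a| / 4)) ≤ floorWeight ⌊a⌋ := by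
  have hbase : exp (-(1 / 4)) ≤ 4 / 5 := by
    rw [exp_neg, inv_le_comm₀ (exp_pos _) (by norm_num)]
    linarith [add_one_le_exp (1 / 4 : ℝ)]
  have hpow (n : ℕ) (hn : (n : ℝ) ≤ |a|) : exp (-(|a| / 4)) ≤ (4 / 5) ^ n :=
    calc exp (-(|a| / 4)) ≤ exp (n * -(1 / 4)) := exp_le_exp.2 (by linarith)
      _ = exp (-(1 / 4)) ^ n := exp_nat_mul _ _
      _ ≤ (4 / 5) ^ n := pow_le_pow_left₀ (exp_pos _).le hbase n
  cases hfloor : ⌊a⌋ with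
  | ofNat n =>
    have hn := (Int.floor_eq_iff.1 hfloor).1
    exact hpow n (le_trans (by simpa using hn) (le_abs_self a))
  | negSucc n =>
    have hn := (Int.floor_eq_iff.1 hfloor).2
    rw [Int.cast_negSucc] at hn
    push_cast at hn
    exact hpow n (by linarith [neg_abs_le a])

lemma sum_prod_comp_le_mul_pow {X ι β : Type*} [Fintype X] [Fintype ι] [DecidableEq β]
    (J : X → ι → β) {g : β → ℝ} (hg : ∀ j, 0 ≤ g j) {C M : ℝ} (hM : 0 ≤ M)
    (hC : ∀ t : Finset β, ∑ j ∈ t, g j ≤ C) (hfiber : ∀ j, (#{x | J x = j} : ℝ) ≤ M) :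
    ∑ x, ∏ i, g (J x i) ≤ M * C ^ Fintype.card ι := by
  classical
  set t : Finset β := univ.image fun p : X × ι => J p.1 p.2
  have hJ (x : X) : J x ∈ Fintype.piFinset fun _ : ι => t :=
    Fintype.mem_piFinset.2 fun i => mem_image_of_mem (fun p : X × ι => J p.1 p.2) (mem_univ (x, i))
  calc ∑ x, ∏ i, g (J x i)
      = ∑ j ∈ Fintype.piFinset fun _ : ι => t, ∑ x with J x = j, ∏ i, g (J x i) :=
        (sum_fiberwise_of_maps_to (fun x _ => hJ x) _).symm
    _ ≤ ∑ j ∈ Fintype.piFinset fun _ : ι => t, M * ∏ i, g (j i) := by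
        refine sum_le_sum fun j _ => ?_
        rw [sum_congr rfl fun x hx => by rw [(mem_filter.1 hx).2], sum_const, nsmul_eq_mul]
        exact mul_le_mul_of_nonneg_right (hfiber j) (prod_nonneg fun i _ => hg _)
    _ = M * (∑ j ∈ t, g j) ^ Fintype.card ι := by
        rw [← mul_sum, ← prod_univ_sum, prod_const, card_univ]
    _ ≤ M * C ^ Fintype.card ι := by
        gcongr
        exacts [sum_nonneg fun j _ => hg j, hC t]

variable {G : Type*} [Fintype G] {r b : ℝ} {ℓ : G → ℝ}

/-- The partition function of `exp (-ℓ)`, a smooth version of the size of the unit ball of `ℓ`. -/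
noncomputable def expMass (ℓ : G → ℝ) : ℝ := ∑ x, exp (-ℓ x)

/-- The probability weight proportional to `exp (-ℓ)`, a smooth version of the uniform measure on
the unit ball of `ℓ`. -/
noncomputable def expMeasure (ℓ : G → ℝ) (x : G) : ℝ := exp (-ℓ x) / expMass ℓ

lemma card_le_exp_mul_expMass {n : ℕ} {S : Finset G} (hS : ∀ x ∈ S, ℓ x ≤ 2 * n) :
    #S ≤ exp (2 * n) * expMass ℓ := by
  have hsum : #S * exp (-(2 * n)) ≤ expMass ℓ :=
    calc #S * exp (-(2 * n)) ≤ ∑ x ∈ S, exp (-ℓ x) := by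
          rw [← nsmul_eq_mul]
          exact card_nsmul_le_sum _ _ _ fun x hx => exp_le_exp.2 (neg_le_neg (hS x hx))
      _ ≤ expMass ℓ := sum_le_univ_sum_of_nonneg fun x => (exp_pos _).le
  rwa [exp_neg, ← div_eq_mul_inv, div_le_iff₀' (exp_pos _)] at hsum

lemma expMass_pos [Nonempty G] (ℓ : G → ℝ) : 0 < expMass ℓ :=
  sum_pos (fun _ _ => exp_pos _) univ_nonempty

lemma expMeasure_pos [Nonempty G] (ℓ : G → ℝ) (x : G) : 0 < expMeasure ℓ x :=
  div_pos (exp_pos _) (expMass_pos ℓ)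

lemma expMeasure_mem_stdSimplex [Nonempty G] (ℓ : G → ℝ) : expMeasure ℓ ∈ stdSimplex ℝ G :=
  ⟨fun x => (expMeasure_pos ℓ x).le, by
    simp only [expMeasure, ← sum_div]
    exact div_self (expMass_pos ℓ).ne'⟩

variable [AddCommGroup G]

namespace IsLength

lemma expMeasure_add_le (h : IsLength ℓ) (x t : G) :
    expMeasure ℓ (x + t) ≤ exp (ℓ t) * expMeasure ℓ x := by
  rw [expMeasure, expMeasure, ← mul_div_assoc, ← exp_add]
  have hpos := expMass_pos ℓ
  gcongr
  have hsub := h.map_sub_le (x + t) t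
  rw [add_sub_cancel_right] at hsub
  linarith

lemma expMeasure_le (h : IsLength ℓ) (x : G) : expMeasure ℓ x ≤ 1 / expMass ℓ := by
  have hpos := expMass_pos ℓ
  rw [expMeasure]
  gcongr
  exact exp_le_one_iff.2 (neg_nonpos.2 (h.nonneg x))

end IsLength

/-- The cell of the unit grid in `ℂ` that contains `z`. -/
noncomputable def gridCell (z : ℂ) : ℤ × ℤ := (⌊z.re⌋, ⌊z.im⌋)

lemma norm_sub_le_two_of_gridCell_eq {z z' : ℂ} (h : gridCell z = gridCell z') :
    ‖z - z'‖ ≤ 2 := by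
  obtain ⟨hre, him⟩ := Prod.mk.inj h
  refine (Complex.norm_le_abs_re_add_abs_im _).trans ?_
  rw [Complex.sub_re, Complex.sub_im]
  linarith [Int.abs_sub_lt_one_of_floor_eq_floor hre, Int.abs_sub_lt_one_of_floor_eq_floor him]

lemma exp_neg_norm_div_two_le_gridCell (z : ℂ) :
    exp (-(‖z‖ / 2)) ≤ floorWeight (gridCell z).1 * floorWeight (gridCell z).2 := by
  calc exp (-(‖z‖ / 2)) ≤ exp (-(|z.re| / 4)) * exp (-(|z.im| / 4)) := by
        rw [← exp_add]
        exact exp_le_exp.2 (by linarith [Complex.abs_re_le_norm z, Complex.abs_im_le_norm z])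
    _ ≤ floorWeight (gridCell z).1 * floorWeight (gridCell z).2 :=
        mul_le_mul (exp_neg_abs_div_four_le_floorWeight _) (exp_neg_abs_div_four_le_floorWeight _)
          (exp_pos _).le (floorWeight_nonneg _)

lemma sum_floorWeight_mul_floorWeight_le (t : Finset (ℤ × ℤ)) :
    ∑ j ∈ t, floorWeight j.1 * floorWeight j.2 ≤ 100 := by
  refine (sum_le_sum_of_subset_of_nonneg subset_product fun j _ _ =>
    mul_nonneg (floorWeight_nonneg j.1) (floorWeight_nonneg j.2)).trans ?_
  simp only [sum_product, ← mul_sum, ← sum_mul]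
  calc (∑ i ∈ t.image Prod.fst, floorWeight i) * ∑ j ∈ t.image Prod.snd, floorWeight j
      ≤ 10 * 10 := mul_le_mul (sum_floorWeight_le _) (sum_floorWeight_le _)
        (sum_nonneg fun j _ => floorWeight_nonneg j) (by norm_num)
    _ = 100 := by norm_num

lemma hundred_le_exp_five : (100 : ℝ) ≤ exp 5 :=
  calc (100 : ℝ) ≤ 2.7 ^ 5 := by norm_num
    _ ≤ exp 1 ^ 5 := by gcongr; linarith [exp_one_gt_d9]
    _ = exp 5 := by rw [← exp_nat_mul]; norm_num

namespace IsBohrLength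

/- Two points whose images under `x ↦ (c i * (1 - γ i x))ᵢ` share a grid cell differ by a point
where each `c i * charLength (γ i)` is at most `2`, so the fibres of the cell map are no larger than
the set of all such points. -/
lemma expMass_half_le (h : IsBohrLength r b ℓ) :
    expMass (fun x => ℓ x / 2) ≤ exp (7 * r) * expMass ℓ := by
  classical
  obtain ⟨n, γ, c, hn, hc, hℓ⟩ := h
  set z : G → Fin n → ℂ := fun x i => c i * (1 - γ i x)
  have hnorm (x : G) (i : Fin n) : ‖z x i‖ = c i * charLength (γ i) x := by
    rw [norm_mul, Complex.norm_real, norm_of_nonneg (hc i).1, charLength]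
  set S : Finset G := {t | ∀ i, c i * charLength (γ i) t ≤ 2}
  have hS : #S ≤ exp (2 * n) * expMass ℓ := card_le_exp_mul_expMass fun x hx => by
    rw [hℓ]
    refine (sum_le_card_nsmul _ _ 2 fun i _ => (mem_filter.1 hx).2 i).trans_eq ?_
    rw [card_univ, Fintype.card_fin, nsmul_eq_mul, mul_comm]
  have hfiber (j : Fin n → ℤ × ℤ) : (#{x | (fun i => gridCell (z x i)) = j} : ℝ) ≤ #S := by
    rcases Finset.eq_empty_or_nonempty {x | (fun i => gridCell (z x i)) = j} with hempty | ⟨y, hy⟩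
    · simp [hempty]
    · refine Nat.cast_le.2 <| card_le_card_of_injOn (fun x => x - y) (fun x hx => ?_)
        fun _ _ _ _ hxy => sub_left_injective hxy
      refine mem_filter.2 ⟨mem_univ _, fun i => ?_⟩
      have hcell := congrFun ((mem_filter.1 hx).2.trans (mem_filter.1 hy).2.symm) i
      refine le_trans (le_of_eq ?_) (norm_sub_le_two_of_gridCell_eq hcell)
      rw [← mul_sub, sub_sub_sub_cancel_left, norm_mul, Complex.norm_real,
        norm_of_nonneg (hc i).1, charLength_sub, norm_sub_rev]
  have hpoint (x : G) : exp (-(ℓ x / 2)) ≤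
      ∏ i, floorWeight (gridCell (z x i)).1 * floorWeight (gridCell (z x i)).2 := by
    rw [hℓ, sum_div, ← sum_neg_distrib, exp_sum]
    exact prod_le_prod (fun i _ => (exp_pos _).le) fun i _ => by
      rw [← hnorm]; exact exp_neg_norm_div_two_le_gridCell _
  have hmass := expMass_pos ℓ
  calc expMass (fun x => ℓ x / 2)
      ≤ #S * 100 ^ Fintype.card (Fin n) := (sum_le_sum fun x _ => hpoint x).trans <|
        sum_prod_comp_le_mul_pow (fun x i => gridCell (z x i))
          (g := fun j => floorWeight j.1 * floorWeight j.2)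
          (fun j => mul_nonneg (floorWeight_nonneg _) (floorWeight_nonneg _)) (Nat.cast_nonneg _)
          sum_floorWeight_mul_floorWeight_le hfiber
    _ ≤ exp (2 * n) * expMass ℓ * exp 5 ^ n := by
        rw [Fintype.card_fin]
        gcongr
        exact hundred_le_exp_five
    _ = exp (7 * n) * expMass ℓ := by
        rw [← exp_nat_mul, mul_right_comm, ← exp_add]; ring_nf
    _ ≤ exp (7 * r) * expMass ℓ := by
        gcongr

lemma sum_expMeasure_mul_exp_le (h : IsBohrLength r b ℓ) {θ : ℝ} (hθ₀ : 0 ≤ θ) (hθ : θ ≤ 1 / 2)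
    {g : G → ℝ} (hg : ∀ x, g x ≤ θ * ℓ x) :
    ∑ x, expMeasure ℓ x * exp (g x) ≤ exp (14 * r * θ) := by
  have hmass := expMass_pos ℓ
  have hmeasure := expMeasure_mem_stdSimplex ℓ
  have hhalf : ∑ x, expMeasure ℓ x * exp (ℓ x / 2) ≤ exp (7 * r) := by
    have heq : ∑ x, expMeasure ℓ x * exp (ℓ x / 2) = expMass (fun x => ℓ x / 2) / expMass ℓ := by
      rw [expMass, sum_div]
      refine sum_congr rfl fun x _ => ?_
      rw [expMeasure, div_mul_eq_mul_div, ← exp_add]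
      ring_nf
    rw [heq, div_le_iff₀ hmass]
    exact h.expMass_half_le
  calc ∑ x, expMeasure ℓ x * exp (g x)
      ≤ ∑ x, expMeasure ℓ x * exp (ℓ x / 2) ^ (2 * θ) := sum_le_sum fun x _ => by
        rw [← exp_mul]
        exact mul_le_mul_of_nonneg_left (exp_le_exp.2 (by linarith [hg x])) (hmeasure.1 x)
    _ ≤ (∑ x, expMeasure ℓ x * exp (ℓ x / 2)) ^ (2 * θ) := by
        simpa only [smul_eq_mul] using
          (concaveOn_rpow (p := 2 * θ) (by linarith) (by linarith)).le_map_sum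
            (fun x _ => hmeasure.1 x) hmeasure.2 fun x _ => (exp_pos (ℓ x / 2)).le
    _ ≤ exp (7 * r) ^ (2 * θ) := by
        refine rpow_le_rpow ?_ hhalf (by linarith)
        exact sum_nonneg fun x _ => mul_nonneg (hmeasure.1 x) (exp_pos _).le
    _ = exp (14 * r * θ) := by rw [← exp_mul]; ring_nf

lemma sum_expMeasure_mul_exp_le_one_add (h : IsBohrLength r b ℓ) {θ ε : ℝ} (hθ₀ : 0 ≤ θ)
    (hθ : θ ≤ 1 / 2) (hε : 28 * r * θ ≤ ε) (hε₂ : ε ≤ 2) {g : G → ℝ} (hg : ∀ x, g x ≤ θ * ℓ x) :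
    ∑ x, expMeasure ℓ x * exp (g x) ≤ 1 + ε := by
  have hr : 0 ≤ 14 * r * θ := mul_nonneg (mul_nonneg (by norm_num) h.rank_nonneg) hθ₀
  have hexp := abs_exp_sub_one_le (x := 14 * r * θ) (by rw [abs_of_nonneg hr]; linarith)
  rw [abs_of_nonneg hr] at hexp
  linarith [h.sum_expMeasure_mul_exp_le hθ₀ hθ hg, le_abs_self (exp (14 * r * θ) - 1)]

lemma card_mul_exp_le_expMass (h : IsBohrLength r b ℓ) {n : ℕ} (hn : 2 * b ≤ 2 ^ n) :
    Fintype.card G * exp (-(7 * r * n + r)) ≤ expMass ℓ := by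
  induction n generalizing b ℓ with
  | zero =>
    rw [← nsmul_eq_mul, ← card_univ, Nat.cast_zero, mul_zero, zero_add]
    exact card_nsmul_le_sum _ _ _ fun x _ => exp_le_exp.2 <| neg_le_neg <|
      h.le_rank_of_le_half (by linarith) x
  | succ n ih =>
    have hhalf := ih (h.const_mul (k := 1 / 2) (by norm_num)) (by rw [pow_succ] at hn; linarith)
    simp only [one_div_mul_eq_div] at hhalf
    calc Fintype.card G * exp (-(7 * r * (n + 1 : ℕ) + r))
        = exp (-(7 * r)) * (Fintype.card G * exp (-(7 * r * n + r))) := by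
          rw [mul_left_comm, ← exp_add]; push_cast; ring_nf
      _ ≤ exp (-(7 * r)) * (exp (7 * r) * expMass ℓ) := by
          exact mul_le_mul_of_nonneg_left (hhalf.trans h.expMass_half_le) (exp_pos _).le
      _ = expMass ℓ := by rw [← mul_assoc, ← exp_add, neg_add_cancel, exp_zero, one_mul]

end IsBohrLength

end Doubling

section SiftedMeasure

variable {G : Type*} [AddCommGroup G] [Fintype G] {η l : G → ℝ}

lemma IsLength.diffAvg_exp_mul_le (hl : IsLength l) (hη : ∀ u, 0 ≤ η u) {K : ℝ} (hK : 0 ≤ K) :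
    diffAvg η (fun t => exp (K * l t)) ≤ (∑ x, η x * exp (K * l x)) ^ 2 := by
  rw [sq, sum_mul_sum]
  refine sum_le_sum fun u _ => sum_le_sum fun v _ => ?_
  rw [mul_mul_mul_comm, ← exp_add, ← mul_add]
  exact mul_le_mul_of_nonneg_left
    (exp_le_exp.2 (mul_le_mul_of_nonneg_left (hl.map_sub_le u v) hK)) (mul_nonneg (hη u) (hη v))

lemma IsLength.diffAvg_le (hl : IsLength l) (hη : η ∈ stdSimplex ℝ G) :
    diffAvg η l ≤ 2 * ∑ x, η x * l x :=
  calc diffAvg η l ≤ ∑ u, ∑ v, (η u * l u * η v + η u * (η v * l v)) := by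
        refine sum_le_sum fun u _ => sum_le_sum fun v _ => ?_
        refine (mul_le_mul_of_nonneg_left (hl.map_sub_le u v)
          (mul_nonneg (hη.1 u) (hη.1 v))).trans_eq ?_
        ring
    _ = 2 * ∑ x, η x * l x := by
        simp only [sum_add_distrib, ← mul_sum, ← sum_mul, hη.2]
        ring

lemma IsBohrLength.sum_expMeasure_mul_le {r b θ : ℝ} {ℓ : G → ℝ} (h : IsBohrLength r b ℓ)
    (hθ₀ : 0 ≤ θ) (hθ : θ ≤ 1 / 2) (hrθ : 28 * r * θ ≤ 2) (hl : ∀ x, l x ≤ θ * ℓ x) :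
    ∑ x, expMeasure ℓ x * l x ≤ 28 * r * θ := by
  have hμ := expMeasure_mem_stdSimplex ℓ
  have hle : ∑ x, expMeasure ℓ x * l x ≤ ∑ x, (expMeasure ℓ x * exp (l x) - expMeasure ℓ x) :=
    sum_le_sum fun x _ => by nlinarith [add_one_le_exp (l x), hμ.1 x]
  rw [sum_sub_distrib, hμ.2] at hle
  linarith [h.sum_expMeasure_mul_exp_le_one_add hθ₀ hθ le_rfl hrθ hl]

lemma half_pow_le_exp_neg_div_two {L : ℕ} (hL : 1 ≤ L) :
    (1 / 2 : ℝ) ^ (200 * L) ≤ exp (-L) / 2 := by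
  have hexp : (1 / 2 : ℝ) ^ 200 ≤ exp (-1) / 2 := by
    have := exp_neg_one_gt_d9
    norm_num at this ⊢
    linarith
  calc (1 / 2 : ℝ) ^ (200 * L) ≤ (exp (-1) / 2) ^ L := by
        rw [pow_mul]; exact pow_le_pow_left₀ (by norm_num) hexp L
    _ ≤ exp (-L) / 2 := by
        rw [div_pow, ← exp_nat_mul, mul_neg_one]
        gcongr
        exact le_self_pow₀ one_le_two (by omega)

lemma exp_neg_mul_sq_le_pow_div_four {L : ℕ} (hL : 1 ≤ L) {x : ℝ} (hx : exp (-(2 * L)) ≤ x) :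
    exp (-(4800 * L ^ 2)) ≤ x ^ (1600 * L) / 4 := by
  have hL' : (1 : ℝ) ≤ L := by exact_mod_cast hL
  have hfour : 4 ≤ exp 2 := by
    linarith [quadratic_le_exp_of_nonneg (zero_le_two (α := ℝ))]
  rw [le_div_iff₀ four_pos]
  calc exp (-(4800 * L ^ 2)) * 4 ≤ exp (-(4800 * L ^ 2)) * exp 2 := by gcongr
    _ ≤ exp ((1600 * L : ℕ) * -(2 * L)) := by
        rw [← exp_add]
        refine exp_le_exp.2 ?_
        push_cast
        nlinarith
    _ = exp (-(2 * L)) ^ (1600 * L) := exp_nat_mul _ _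
    _ ≤ x ^ (1600 * L) := pow_le_pow_left₀ (exp_pos _).le hx _

/- The moment exponent `200 * L` is a multiple of the logarithm of the densities involved, so that
the lower bounds for the moments only lose constant factors after taking roots. -/
theorem WeightedDensity.exists_sifted_expMeasure {f w l ℓ : G → ℝ} {α r b θ : ℝ}
    (h : WeightedDensity f w l α) (hfree : ThreeAPFree (Function.support f)) {half : G → G}
    (hhalf : ∀ t, half t + half t = t) {L : ℕ} (hL : 1 ≤ L) (hℓ : IsBohrLength r b ℓ)
    (hθ₀ : 0 ≤ θ) (hlθ : ∀ t, l t ≤ θ * ℓ t) (hθ : 16000000 * L * (r + 1) * exp L * θ ≤ 1)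
    (hβ : exp (-L) / 2 ≤ diffAvg (expMeasure ℓ) (fun t => f (half t)))
    (hw : ∀ x, w x ^ 2 ≤ α ^ 2 / 4) (hα : exp (-(2 * L)) ≤ 1.03 * α ^ 2) :
    ∃ φ ∈ stdSimplex ℝ G, (∀ s, φ s ≤ (exp (-(4800 * L ^ 2)))⁻¹ *
      (expMeasure ℓ s * exp ((1600 * L : ℕ) * l s))) ∧
      diffAvg φ ({t | autocorr (f * w) t ≤ 1.02 * α ^ 2}.indicator 1) ≤ 1 / 1000 := by
  have hμ := expMeasure_mem_stdSimplex ℓ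
  have hL' : (1 : ℝ) ≤ L := by exact_mod_cast hL
  have hr := hℓ.rank_nonneg
  have hLθ : 16000000 * (L * (r + 1) * θ) ≤ 1 := by
    nlinarith [one_le_exp (zero_le_one.trans hL'), show 0 ≤ L * (r + 1) * θ by positivity]
  have hLθ' : 16000000 * (L * θ) ≤ 1 := by nlinarith [show 0 ≤ L * (r * θ) by positivity]
  have hθ' : θ ≤ L * θ := le_mul_of_one_le_left hθ₀ hL'
  have hrθ : 16000000 * (r * θ) ≤ exp (-L) := by
    rw [exp_neg, inv_eq_one_div, le_div_iff₀ (exp_pos _)]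
    nlinarith [show 0 ≤ r * θ * exp L * (L - 1) from
      mul_nonneg (by positivity) (by linarith), show 0 ≤ L * θ * exp L by positivity]
  have hE : diffAvg (expMeasure ℓ) (fun t => exp (120 * (8 * (200 * L) : ℕ) * l t)) ≤ 2 := by
    have hmoment := hℓ.sum_expMeasure_mul_exp_le_one_add (θ := 120 * (8 * (200 * L) : ℕ) * θ)
      (ε := 0.4) (by positivity) (by push_cast; linarith)
      (by push_cast; nlinarith [show 0 ≤ L * θ by positivity]) (by norm_num)
      (fun x => (mul_le_mul_of_nonneg_left (hlθ x) (by positivity)).trans_eq (mul_assoc _ _ _).symm)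
    refine (h.isLength.diffAvg_exp_mul_le hμ.1 (by positivity)).trans ?_
    refine (pow_le_pow_left₀ (sum_nonneg fun x _ => mul_nonneg (hμ.1 x) (exp_pos _).le)
      hmoment 2).trans ?_
    norm_num
  have hl : diffAvg (expMeasure ℓ) l ≤ diffAvg (expMeasure ℓ) (fun t => f (half t)) / 8 := by
    have hmean := hℓ.sum_expMeasure_mul_le hθ₀ (by linarith)
      (by nlinarith [exp_le_one_iff.2 (show -(L : ℝ) ≤ 0 by linarith)]) hlθ
    linarith [h.isLength.diffAvg_le hμ, exp_pos (-(L : ℝ))]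
  have hbalanced := h.pow_le_diffAvg_autocorr_balanced_pow hfree hμ.1 (p := 200 * L)
    ⟨100 * L, by ring⟩ hhalf ((half_pow_le_exp_neg_div_two hL).trans hβ) hw hl
  have hmoment := h.pow_le_diffAvg_autocorr_pow hμ.1 (by omega) hE hbalanced
  rw [show 8 * (200 * L) = 1600 * L by ring] at hmoment
  exact h.exists_sifted hμ (by omega) (exp_pos _) (exp_neg_mul_sq_le_pow_div_four hL hα) hmoment

end SiftedMeasure

section EnergyIncrement

variable {G : Type*} [Fintype G]

lemma exists_mem_stdSimplex_support_subset {σ : G → ℝ} (hσ : ∀ t, 0 ≤ σ t) {T : Set G} {τ : ℝ}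
    (hτ : 0 < τ) (hT : τ ≤ ∑ t, σ t * T.indicator 1 t) :
    ∃ ρ ∈ stdSimplex ℝ G, Function.support ρ ⊆ T ∧ ∀ t, ρ t ≤ τ⁻¹ * σ t := by
  set S := ∑ t, σ t * T.indicator 1 t
  have hS : 0 < S := hτ.trans_le hT
  have hind (t : G) : 0 ≤ T.indicator (1 : G → ℝ) t ∧ T.indicator (1 : G → ℝ) t ≤ 1 := by
    by_cases ht : t ∈ T <;> simp [ht]
  refine ⟨fun t => S⁻¹ * (σ t * T.indicator 1 t),
    ⟨fun t => mul_nonneg (inv_nonneg.2 hS.le) (mul_nonneg (hσ t) (hind t).1), ?_⟩,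
    fun t ht => by_contra fun htT => ht (by simp [htT]), fun t => ?_⟩
  · rw [← mul_sum, inv_mul_cancel₀ hS.ne']
  · exact mul_le_mul (inv_anti₀ hτ hT) (mul_le_of_le_one_right (hσ t) (hind t).2)
      (mul_nonneg (hσ t) (hind t).1) (inv_nonneg.2 hτ.le)

/- Markov's inequality: `1 ≤ exp (T * (c * h t - 1))` wherever `1 < c * h t`. -/
lemma sum_mul_exp_mul_indicator_le {μ h : G → ℝ} {k c T : ℝ} (hμ : ∀ t, 0 ≤ μ t) (hT : 0 ≤ T) :
    ∑ t, μ t * exp (k * h t) * {t | 1 < c * h t}.indicator 1 t ≤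
      exp (-T) * ∑ t, μ t * exp ((k + c * T) * h t) := by
  rw [mul_sum]
  refine sum_le_sum fun t _ => ?_
  by_cases ht : 1 < c * h t
  · rw [Set.indicator_of_mem (by exact ht), Pi.one_apply, mul_one, mul_left_comm, ← exp_add]
    refine mul_le_mul_of_nonneg_left (exp_le_exp.2 ?_) (hμ t)
    nlinarith
  · rw [Set.indicator_of_notMem (by exact ht), mul_zero]
    exact mul_nonneg (exp_pos _).le (mul_nonneg (hμ t) (exp_pos _).le)

variable [AddCommGroup G]

lemma IsBohrLength.isSlowMeasure_expMeasure_mul_exp {r b θ : ℝ} {ℓ g : G → ℝ}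
    (hℓ : IsBohrLength r b ℓ) (hg : IsLength g) (hθ₀ : 0 ≤ θ) (hθ : θ ≤ 1 / 2)
    (hrθ : 28 * r * θ ≤ 1) (hgθ : ∀ t, g t ≤ θ * ℓ t) :
    IsSlowMeasure (fun t => expMeasure ℓ t * exp (g t)) (fun t => 2 * ℓ t) where
  isLength := (hℓ.const_mul zero_le_two).isLength
  nonneg t := mul_nonneg (expMeasure_pos ℓ t).le (exp_pos _).le
  sum_le_two := by
    linarith [hℓ.sum_expMeasure_mul_exp_le_one_add hθ₀ hθ hrθ one_le_two hgθ]
  le_exp_mul x t := by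
    have hgℓ : g t ≤ ℓ t := (hgθ t).trans (mul_le_of_le_one_left (hℓ.isLength.nonneg t)
      (by linarith))
    calc expMeasure ℓ (x + t) * exp (g (x + t)) ≤
          (exp (ℓ t) * expMeasure ℓ x) * (exp (ℓ t) * exp (g x)) := by
          refine mul_le_mul (hℓ.isLength.expMeasure_add_le x t) ?_ (exp_pos _).le
            (mul_nonneg (exp_pos _).le (expMeasure_pos ℓ x).le)
          rw [← exp_add]
          exact exp_le_exp.2 (by linarith [hg.map_add_le x t])
      _ = exp (2 * ℓ t) * (expMeasure ℓ x * exp (g x)) := by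
          rw [two_mul, exp_add]
          ring

lemma IsBohrLength.sum_expMeasure_mul_exp_mul_indicator_le {r b θ k c T : ℝ} {ℓ g : G → ℝ}
    (hℓ : IsBohrLength r b ℓ) (hθ₀ : 0 ≤ θ) (hθ : θ ≤ 1 / 2) (hrθ : 28 * r * θ ≤ 1) (hT : 0 ≤ T)
    (hgθ : ∀ t, (k + c * T) * g t ≤ θ * ℓ t) :
    ∑ t, expMeasure ℓ t * exp (k * g t) * {t | 1 < c * g t}.indicator 1 t ≤ 2 * exp (-T) := by
  have hmoment := hℓ.sum_expMeasure_mul_exp_le_one_add hθ₀ hθ hrθ one_le_two hgθ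
  refine (sum_mul_exp_mul_indicator_le (fun t => (expMeasure_pos _ t).le) hT).trans ?_
  rw [mul_comm (2 : ℝ)]
  exact mul_le_mul_of_nonneg_left (hmoment.trans_eq one_add_one_eq_two) (exp_pos _).le

lemma one_sub_le_diffAvg_indicator_lt {φ A : G → ℝ} {c ε : ℝ} (hφ : φ ∈ stdSimplex ℝ G)
    (h : diffAvg φ ({t | A t ≤ c}.indicator 1) ≤ ε) :
    1 - ε ≤ diffAvg φ ({t | c < A t}.indicator 1) := by
  have hcompl (t : G) : ({t | c < A t}.indicator 1 t : ℝ) + {t | A t ≤ c}.indicator 1 t = 1 := by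
    rcases le_or_gt (A t) c with ht | ht <;> simp [ht, not_lt.2, not_le.2]
  have hsum := diffAvg_add φ ({t | c < A t}.indicator 1) ({t | A t ≤ c}.indicator 1)
  simp only [hcompl, diffAvg_const, hφ.2, one_pow, one_mul] at hsum
  linarith

lemma mul_le_autocorr_weightedAvg {φ a : G → ℝ} {c δ : ℝ} {z : G} (hφ : φ ∈ stdSimplex ℝ G)
    (ha : ∀ x, 0 ≤ a x) (hc : 0 ≤ c)
    (hδ : δ ≤ diffAvg φ (fun t => {t | c < autocorr a t}.indicator 1 (t + z))) :
    c * δ ≤ autocorr (weightedAvg φ a) z := by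
  rw [autocorr_weightedAvg]
  refine (mul_le_mul_of_nonneg_left hδ hc).trans ?_
  rw [← diffAvg_const_mul]
  refine diffAvg_mono hφ.1 fun t => ?_
  by_cases ht : c < autocorr a (t + z)
  · simp [ht, ht.le]
  · simp [ht, autocorr_nonneg ha]

lemma two_mul_exp_neg_le_pow_div_eight {L : ℕ} (hL : 1 ≤ L) :
    2 * exp (-(5 * 10 ^ 18 * L ^ 6)) ≤
      (exp (-(4800 * L ^ 2)) / 2) ^ (10 ^ 15 * L ^ 4) / 8 := by
  have hL' : (1 : ℝ) ≤ L := by exact_mod_cast hL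
  have hdiv_two (x : ℝ) : exp (x - 1) ≤ exp x / 2 := by
    rw [exp_sub]
    gcongr
    linarith [exp_one_gt_d9]
  have hpow : exp ((10 ^ 15 * L ^ 4 : ℕ) * (-(4800 * L ^ 2) - 1)) ≤
      (exp (-(4800 * L ^ 2)) / 2) ^ (10 ^ 15 * L ^ 4) := by
    rw [exp_nat_mul]
    exact pow_le_pow_left₀ (exp_pos _).le (hdiv_two _) _
  have hfour : exp (-4) ≤ 1 / 16 := by
    have h1 := hdiv_two 0
    have h2 := hdiv_two (0 - 1)
    have h3 := hdiv_two (0 - 1 - 1)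
    have h4 := hdiv_two (0 - 1 - 1 - 1)
    norm_num at h1 h2 h3 h4
    linarith
  have hle : exp (-(5 * 10 ^ 18 * L ^ 6)) ≤
      exp ((10 ^ 15 * L ^ 4 : ℕ) * (-(4800 * L ^ 2) - 1)) * exp (-4) := by
    rw [← exp_add]
    refine exp_le_exp.2 ?_
    have hL₄ : (L : ℝ) ^ 4 ≤ L ^ 6 := pow_le_pow_right₀ hL' (by norm_num)
    have hL₆ : (1 : ℝ) ≤ L ^ 6 := one_le_pow₀ hL'
    push_cast
    linarith
  have hmul := hle.trans (mul_le_mul hpow hfour (exp_pos _).le (pow_nonneg (by positivity) _))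
  generalize (exp (-(4800 * (L : ℝ) ^ 2)) / 2) ^ (10 ^ 15 * L ^ 4) = p at hmul ⊢
  linarith

lemma exp_neg_sq_le_exp_neg_mul {L : ℕ} (hL : 1 ≤ L) :
    exp (-((10 ^ 15 * L ^ 4 : ℕ) * (1 / (80000 * L) : ℝ) ^ 2 / 4)) ≤
      exp (-(4800 * L ^ 2)) * (1 / (80000 * L)) / 8 := by
  have hL' : (1 : ℝ) ≤ L := by exact_mod_cast hL
  have hexponent : -((10 ^ 15 * L ^ 4 : ℕ) * (1 / (80000 * L) : ℝ) ^ 2 / 4) =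
      -(4800 * L ^ 2) - 34262.5 * (L : ℝ) ^ 2 := by
    push_cast
    field_simp
    ring
  rw [hexponent, exp_sub, div_eq_mul_inv, mul_div_assoc]
  refine mul_le_mul_of_nonneg_left ?_ (exp_pos _).le
  rw [div_div, ← one_div]
  refine one_div_le_one_div_of_le (by positivity) ?_
  have hquad := quadratic_le_exp_of_nonneg (x := 34262.5 * (L : ℝ) ^ 2) (by positivity)
  nlinarith [le_self_pow₀ hL' two_ne_zero]

lemma sampling_scale_le {L : ℕ} (hL : 1 ≤ L) {R : ℝ} (hR : 0 < R) :
    ((10 ^ 15 * L ^ 4 : ℕ) + 2 * (10 * L : ℕ) * (5 * 10 ^ 18 * L ^ 6)) * 2 ≤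
      1 / (1000 * R) * (10 ^ 24 * R * L ^ 7) := by
  have hcancel : 1 / (1000 * R) * (10 ^ 24 * R * L ^ 7) = 10 ^ 21 * L ^ 7 := by
    field_simp
    norm_num
  have hL₇ : (L : ℝ) ^ 4 ≤ L ^ 7 := pow_le_pow_right₀ (by exact_mod_cast hL) (by norm_num)
  rw [hcancel]
  push_cast
  linarith [pow_nonneg (Nat.cast_nonneg (α := ℝ) L) 7]

lemma log_two_div_le {τ T : ℝ} (hτ : 0 < τ) (h : 2 * exp (-T) ≤ τ) : log (2 / τ) ≤ T := by
  rw [log_le_iff_le_exp (by positivity), div_le_iff₀ hτ, ← div_le_iff₀' (exp_pos T),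
    div_eq_mul_inv, ← exp_neg]
  exact h

lemma quarter_pow_le {L : ℕ} (hL : 1 ≤ L) : (1 / 4 : ℝ) ^ (10 * L) ≤ exp (-L) / 2000 := by
  have hbase : (1 / 4 : ℝ) ^ 10 ≤ exp (-1) / 2000 := by
    have := exp_neg_one_gt_d9
    norm_num at this ⊢
    linarith
  calc (1 / 4 : ℝ) ^ (10 * L) ≤ (exp (-1) / 2000) ^ L := by
        rw [pow_mul]
        exact pow_le_pow_left₀ (by norm_num) hbase L
    _ ≤ exp (-L) / 2000 := by
        rw [div_pow, ← exp_nat_mul, mul_neg_one]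
        gcongr
        exact le_self_pow₀ (by norm_num) (by omega)

/- The random sampling behind `exists_almostPeriods` uses `10 ^ 15 * L ^ 4` samples, so its
translates are controlled only at the much finer scale at which `10 ^ 24 * R * L ^ 7 * ℓ` is
bounded. -/
theorem IsBohrLength.exists_almostPeriods_largeSpectrum {r b R θ : ℝ} {ℓ l φ Y : G → ℝ} {L : ℕ}
    (hL : 1 ≤ L) (hℓ : IsBohrLength r b ℓ) (hrR : r + 1 ≤ R) (hl : IsLength l) (hθ₀ : 0 ≤ θ)
    (hθ : θ ≤ 1 / 2) (hrθ : 28 * r * θ ≤ 1) (hlθ : ∀ t, (1600 * L : ℕ) * l t ≤ θ * ℓ t)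
    (hφ : φ ∈ stdSimplex ℝ G) (hφω : ∀ s, φ s ≤ (exp (-(4800 * L ^ 2)))⁻¹ *
      (expMeasure ℓ s * exp ((1600 * L : ℕ) * l s))) (hY : ∀ t, Y t ∈ Set.Icc 0 1) :
    ∃ ρ ∈ stdSimplex ℝ G, ∃ T : Set G, Function.support ρ ⊆ T ∧
      (∀ z ∈ iterDiff T (10 * L), diffAvg φ Y - 1 / 1000 ≤ diffAvg φ (fun t => Y (t + z))) ∧
      ∃ Λ : Finset (AddChar G ℂ), (#Λ : ℝ) ≤ 2 * 10 ^ 20 * L ^ 6 ∧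
        ∀ γ ∈ largeSpectrum ρ, ∀ t, charLength γ t ≤
          25 * (exp (2 * (10 ^ 24 * R * L ^ 7 * ℓ t) + ∑ δ ∈ Λ, charLength δ t) - 1) := by
  have hr := hℓ.rank_nonneg
  have hR : 0 < R := by linarith
  have hK₀ : 0 ≤ 10 ^ 24 * R * L ^ 7 := by positivity
  set k : ℕ := 10 ^ 15 * L ^ 4
  set K : ℝ := 10 ^ 24 * R * L ^ 7
  set T₀ : ℝ := 5 * 10 ^ 18 * L ^ 6 with hT₀
  set θ' : ℝ := 1 / (1000 * R) with hθ'
  set τ : ℝ := (exp (-(4800 * L ^ 2)) / 2) ^ k / 8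
  have hτT : 2 * exp (-T₀) ≤ τ := two_mul_exp_neg_le_pow_div_eight hL
  have hτ : 0 < τ := by positivity
  have hKℓ := hℓ.const_mul hK₀
  have hscale (t : G) : (k + 2 * (10 * L : ℕ) * T₀) * (2 * ℓ t) ≤ θ' * (K * ℓ t) := by
    have hkT : (k + 2 * (10 * L : ℕ) * T₀) * 2 ≤ θ' * K := sampling_scale_le hL hR
    nlinarith [mul_le_mul_of_nonneg_right hkT (hℓ.isLength.nonneg t)]
  have hrθ' : 28 * r * θ' ≤ 1 := by
    rw [hθ', mul_one_div, div_le_one (by positivity)]; linarith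
  have hθ'₀ : 0 ≤ θ' := by positivity
  have hθ'₁ : θ' ≤ 1 / 2 := one_div_le_one_div_of_le two_pos (by linarith)
  have hω := hℓ.isSlowMeasure_expMeasure_mul_exp (hl.const_mul (Nat.cast_nonneg (1600 * L)))
    hθ₀ hθ hrθ hlθ
  have hσ := hKℓ.isSlowMeasure_expMeasure_mul_exp
    (hω.isLength.const_mul (Nat.cast_nonneg k)) hθ'₀ hθ'₁ hrθ' fun t => by
      have := hω.isLength.nonneg t
      have : 0 ≤ 2 * ((10 * L : ℕ) : ℝ) * T₀ * (2 * ℓ t) := by positivity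
      linarith [hscale t]
  have htail := (hKℓ.sum_expMeasure_mul_exp_mul_indicator_le (k := k) (c := 2 * (10 * L : ℕ))
    hθ'₀ hθ'₁ hrθ' (by positivity) hscale).trans hτT
  obtain ⟨T, hT, hperiod⟩ := exists_almostPeriods hφ hω (exp_pos _) hφω hY
    (expMeasure_mem_stdSimplex _) (m := 10 * L) (k := k) (ε := 1 / (80000 * L)) (by omega)
    (by positivity) (by positivity) (by push_cast; field_simp; norm_num)
    (exp_neg_sq_le_exp_neg_mul hL) htail
  obtain ⟨ρ, hρ, hρT, hρσ⟩ := exists_mem_stdSimplex_support_subset hσ.nonneg hτ hT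
  obtain ⟨Λ, hΛ, hspec⟩ := exists_card_le_charLength_le hσ hρ hτ hρσ
  refine ⟨ρ, hρ, T, hρT, hperiod, Λ, hΛ.trans ?_, hspec⟩
  linarith [log_two_div_le hτ hτT, hT₀]

theorem WeightedDensity.exists_card_le_energy {f w l ℓ φ : G → ℝ} {α r b R θ : ℝ} {L : ℕ}
    (h : WeightedDensity f w l α) (hL : 1 ≤ L) (hℓ : IsBohrLength r b ℓ) (hrR : r + 1 ≤ R)
    (hθ₀ : 0 ≤ θ) (hθ : θ ≤ 1 / 2) (hrθ : 28 * r * θ ≤ 1)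
    (hlθ : ∀ t, (1600 * L : ℕ) * l t ≤ θ * ℓ t) (hα : exp (-L) ≤ 1.01 * α)
    (hφ : φ ∈ stdSimplex ℝ G) (hφω : ∀ s, φ s ≤ (exp (-(4800 * L ^ 2)))⁻¹ *
      (expMeasure ℓ s * exp ((1600 * L : ℕ) * l s)))
    (hbad : diffAvg φ ({t | autocorr (f * w) t ≤ 1.02 * α ^ 2}.indicator 1) ≤ 1 / 1000) :
    ∃ Λ : Finset (AddChar G ℂ), (#Λ : ℝ) ≤ 2 * 10 ^ 20 * L ^ 6 ∧ ∀ μ ∈ stdSimplex ℝ G,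
      ∑ t, μ t * exp (2 * (10 ^ 24 * R * L ^ 7 * ℓ t) + ∑ γ ∈ Λ, charLength γ t) ≤ 1 + 0.00002 →
      1.014 * α ^ 2 ≤ ∑ x, weightedAvg μ (f * w) x ^ 2 := by
  have hα₀ := h.density_pos
  have ha (x : G) : 0 ≤ (f * w) x := mul_nonneg (h.f_nonneg x) (h.pos x).le
  obtain ⟨ρ, hρ, T, hρT, hperiod, Λ, hΛ, hspec⟩ := hℓ.exists_almostPeriods_largeSpectrum hL hrR
    h.isLength hθ₀ hθ hrθ hlθ hφ hφω (Y := {t | 1.02 * α ^ 2 < autocorr (f * w) t}.indicator 1)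
    fun t => by by_cases ht : 1.02 * α ^ 2 < autocorr (f * w) t <;> simp [ht]
  refine ⟨Λ, hΛ, fun μ hμ hμΛ => ?_⟩
  have hautocorr : ∀ z ∈ iterDiff T (10 * L),
      1.017 * α ^ 2 ≤ autocorr (weightedAvg φ (f * w)) z := fun z hz => by
    have hlower := mul_le_autocorr_weightedAvg (c := 1.02 * α ^ 2) (δ := 1 - 1 / 1000 - 1 / 1000)
      (z := z) hφ ha (by positivity)
      (by linarith [one_sub_le_diffAvg_indicator_lt hφ hbad, hperiod z hz])
    linarith [sq_nonneg α]
  have hiterate := le_sum_iterate_weightedAvg_sq hρ hρT hautocorr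
  have hcharLength : ∀ γ ∈ largeSpectrum ρ, ∑ t, μ t * charLength γ t ≤ 0.0005 := fun γ hγ =>
    calc ∑ t, μ t * charLength γ t ≤ ∑ t, μ t * (25 * (exp (2 * (10 ^ 24 * R * L ^ 7 * ℓ t) +
            ∑ δ ∈ Λ, charLength δ t) - 1)) :=
          sum_le_sum fun t _ => mul_le_mul_of_nonneg_left (hspec γ hγ t) (hμ.1 t)
      _ = 25 * (∑ t, μ t * exp (2 * (10 ^ 24 * R * L ^ 7 * ℓ t) + ∑ δ ∈ Λ, charLength δ t) -
            ∑ t, μ t) := by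
          rw [← sum_sub_distrib, mul_sum]
          exact sum_congr rfl fun t _ => by ring
      _ ≤ 0.0005 := by
          rw [hμ.2]
          linarith
  have henergy : ∑ x, (f * w) x ^ 2 ≤ α := h.sum_eq ▸ sum_le_sum fun x _ => by
    simp only [Pi.mul_apply, mul_pow]
    exact mul_le_mul_of_nonneg_right (pow_le_of_le_one (h.f_nonneg x) (h.f_le_one x) two_ne_zero)
      (sq_nonneg _)
  have htail : (1 / 4 : ℝ) ^ (10 * L) * ∑ x, (f * w) x ^ 2 ≤ 0.001 * α ^ 2 :=
    calc (1 / 4 : ℝ) ^ (10 * L) * ∑ x, (f * w) x ^ 2 ≤ 1.01 * α / 2000 * α :=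
          mul_le_mul ((quarter_pow_le hL).trans (by linarith)) henergy
            (sum_nonneg fun x _ => sq_nonneg _) (by positivity)
      _ ≤ 0.001 * α ^ 2 := by nlinarith
  have := mul_energy_sub_le_sum_weightedAvg_sq hρ hφ hμ (by norm_num) (by norm_num) hcharLength
    (f * w) (10 * L)
  linarith [sq_nonneg α]

end EnergyIncrement

section Translates

variable {G : Type*} [AddCommGroup G] [Fintype G] {r b α K K₁ K₂ ε : ℝ} {ℓ f : G → ℝ}

lemma IsLength.exp_neg_mul_weightedAvg_le (hℓ : IsLength ℓ) (hf : ∀ x, 0 ≤ f x) (x₀ t : G) :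
    exp (-ℓ t) * weightedAvg (expMeasure ℓ) f x₀ ≤
      weightedAvg (expMeasure ℓ) (fun y => f (y + t)) x₀ := by
  rw [weightedAvg, mul_sum, ← Equiv.sum_comp (Equiv.addRight t)]
  refine sum_le_sum fun x _ => ?_
  have hx := mul_le_mul_of_nonneg_left (hℓ.expMeasure_add_le x t) (exp_pos (-ℓ t)).le
  rw [← mul_assoc, ← exp_add, neg_add_cancel, exp_zero, one_mul] at hx
  rw [Equiv.coe_addRight, ← add_assoc, ← mul_assoc]
  exact mul_le_mul_of_nonneg_right hx (hf _)

lemma IsLength.mul_weightedAvg_le {ι : Type*} [Fintype ι] (hℓ : IsLength ℓ) (hf : ∀ x, 0 ≤ f x)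
    {ν : ι → ℝ} (hν : ν ∈ stdSimplex ℝ ι) (s : ι → G)
    (hs : ∑ j, ν j * exp (ℓ (s j)) ≤ 1 + ε) (x₀ : G) :
    (1 - ε) * weightedAvg (expMeasure ℓ) f x₀ ≤
      weightedAvg (expMeasure ℓ) (fun y => ∑ j, ν j * f (y + s j)) x₀ := by
  have havg : 0 ≤ weightedAvg (expMeasure ℓ) f x₀ :=
    sum_nonneg fun x _ => mul_nonneg (expMeasure_pos ℓ x).le (hf _)
  have hexp : 1 - ε ≤ ∑ j, ν j * exp (-ℓ (s j)) :=
    calc 1 - ε ≤ ∑ j, ν j * (2 - exp (ℓ (s j))) := by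
          simp only [mul_sub, sum_sub_distrib, ← sum_mul, hν.2]
          linarith
      _ ≤ ∑ j, ν j * exp (-ℓ (s j)) := sum_le_sum fun j _ =>
          mul_le_mul_of_nonneg_left (two_sub_exp_le_exp_neg _) (hν.1 j)
  calc (1 - ε) * weightedAvg (expMeasure ℓ) f x₀
      ≤ ∑ j, ν j * (exp (-ℓ (s j)) * weightedAvg (expMeasure ℓ) f x₀) := by
        simp only [← mul_assoc, ← sum_mul]
        exact mul_le_mul_of_nonneg_right hexp havg
    _ ≤ ∑ j, ν j * weightedAvg (expMeasure ℓ) (fun y => f (y + s j)) x₀ := sum_le_sum fun j _ =>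
        mul_le_mul_of_nonneg_left (hℓ.exp_neg_mul_weightedAvg_le hf x₀ (s j)) (hν.1 j)
    _ = weightedAvg (expMeasure ℓ) (fun y => ∑ j, ν j * f (y + s j)) x₀ := by
        simp only [weightedAvg, mul_sum, mul_left_comm (ν _)]
        exact sum_comm

lemma IsBohrLength.sum_expMeasure_const_mul_mul_exp_le (hℓ : IsBohrLength r b ℓ) (hK : 2 ≤ K)
    (hrK : 28 * r ≤ ε * K) (hε : ε ≤ 2) :
    ∑ x, expMeasure (fun t => K * ℓ t) x * exp (ℓ x) ≤ 1 + ε := by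
  have hK₀ : 0 < K := by linarith
  refine (hℓ.const_mul hK₀.le).sum_expMeasure_mul_exp_le_one_add (θ := 1 / K) (by positivity)
    (one_div_le_one_div_of_le two_pos hK) ?_ hε fun x => ?_
  · rwa [mul_one_div, div_le_iff₀ hK₀]
  · rw [← mul_assoc, one_div_mul_cancel hK₀.ne', one_mul]

lemma diffAvg_translate_le {φ : G → ℝ} (hφ : φ ∈ stdSimplex ℝ G) {c : ℝ}
    (hc : ∀ y, weightedAvg φ f y ≤ c) (x : G) : diffAvg φ (fun t => f (x + t)) ≤ c := by
  calc diffAvg φ (fun t => f (x + t)) = ∑ v, φ v * weightedAvg φ f (x - v) := by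
        rw [diffAvg, sum_comm]
        refine sum_congr rfl fun v _ => ?_
        rw [weightedAvg, mul_sum]
        refine sum_congr rfl fun u _ => ?_
        rw [show x + (u - v) = x - v + u by abel]
        ring
    _ ≤ ∑ v, φ v * c := sum_le_sum fun v _ => mul_le_mul_of_nonneg_left (hc _) (hφ.1 v)
    _ = c := by rw [← sum_mul, hφ.2, one_mul]

lemma exists_le_of_le_weightedAvg {φ g₁ g₂ : G → ℝ} (hφ : φ ∈ stdSimplex ℝ G) {c M : ℝ} {x₀ : G}
    (hg₁ : ∀ x, g₁ x ≤ M) (hg₂ : ∀ x, g₂ x ≤ M) (h₁ : c ≤ weightedAvg φ g₁ x₀)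
    (h₂ : c ≤ weightedAvg φ g₂ x₀) : ∃ x, 2 * c - M ≤ g₁ x ∧ 2 * c - M ≤ g₂ x := by
  by_contra! hcon
  have hlt (x : G) : g₁ x + g₂ x < 2 * c := by
    by_contra! hx
    exact (hcon x (by linarith [hg₂ x])).not_ge (by linarith [hg₁ x])
  obtain ⟨s, hs⟩ : ∃ s, 0 < φ s := by
    by_contra! hs
    linarith [hφ.2, sum_nonpos fun s (_ : s ∈ univ) => hs s]
  have hsum : ∑ s, φ s * (g₁ (x₀ + s) + g₂ (x₀ + s)) < ∑ s, φ s * (2 * c) :=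
    sum_lt_sum (fun s _ => mul_le_mul_of_nonneg_left (hlt _).le (hφ.1 s))
      ⟨s, mem_univ s, mul_lt_mul_of_pos_left (hlt _) hs⟩
  simp only [mul_add, sum_add_distrib, ← sum_mul, hφ.2] at hsum
  simp only [weightedAvg] at h₁ h₂
  linarith

lemma IsBohrLength.exists_translate (hℓ : IsBohrLength r b ℓ) (hf : ∀ x, 0 ≤ f x) {x₀ : G}
    (hα : weightedAvg (expMeasure ℓ) f x₀ = α) (hK₁ : 2 ≤ K₁) (hrK₁ : 56000 * r ≤ K₁)
    (hK₂ : 2 ≤ K₂) (hrK₂ : 140000 * r ≤ K₂)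
    (hα₁ : ∀ x, weightedAvg (expMeasure fun t => K₁ * ℓ t) f x ≤ 1.0005 * α)
    (hα₂ : ∀ x, weightedAvg (expMeasure fun t => K₂ * ℓ t) f x ≤ 1.0005 * α) :
    ∃ X, 0.9985 * α ≤ weightedAvg (expMeasure fun t => K₁ * ℓ t) f X ∧
      0.9985 * α ≤ diffAvg (expMeasure fun t => K₂ * ℓ t) (fun t => f (X + t)) := by
  set μ₁ := expMeasure fun t => K₁ * ℓ t
  set μ₂ := expMeasure fun t => K₂ * ℓ t
  have hμ₁ : μ₁ ∈ stdSimplex ℝ G := expMeasure_mem_stdSimplex _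
  have hμ₂ : μ₂ ∈ stdSimplex ℝ G := expMeasure_mem_stdSimplex _
  have hμ₂₂ : (fun p : G × G => μ₂ p.1 * μ₂ p.2) ∈ stdSimplex ℝ (G × G) :=
    ⟨fun p => mul_nonneg (hμ₂.1 _) (hμ₂.1 _), by
      rw [Fintype.sum_prod_type, ← sum_mul_sum, hμ₂.2, one_mul]⟩
  have hexp₁ : ∑ x, μ₁ x * exp (ℓ x) ≤ 1 + 0.0005 :=
    hℓ.sum_expMeasure_const_mul_mul_exp_le hK₁ (by linarith) (by norm_num)
  have hexp₂ : ∑ p : G × G, μ₂ p.1 * μ₂ p.2 * exp (ℓ (p.1 - p.2)) ≤ 1 + 0.0005 :=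
    calc _ = diffAvg μ₂ (fun t => exp (1 * ℓ t)) := by
          simp only [Fintype.sum_prod_type, diffAvg, one_mul]
      _ ≤ (∑ x, μ₂ x * exp (1 * ℓ x)) ^ 2 := hℓ.isLength.diffAvg_exp_mul_le hμ₂.1 zero_le_one
      _ ≤ (1 + 0.0002) ^ 2 := by
          simp only [one_mul]
          gcongr
          · exact sum_nonneg fun x _ => mul_nonneg (hμ₂.1 x) (exp_pos _).le
          · exact hℓ.sum_expMeasure_const_mul_mul_exp_le hK₂ (by linarith) (by norm_num)
      _ ≤ 1 + 0.0005 := by norm_num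
  have havg₁ := hℓ.isLength.mul_weightedAvg_le hf hμ₁ id hexp₁ x₀
  have havg₂ := hℓ.isLength.mul_weightedAvg_le hf hμ₂₂ (fun p => p.1 - p.2) hexp₂ x₀
  simp only [Fintype.sum_prod_type] at havg₂
  have hα₀ : 0 ≤ α := hα ▸ sum_nonneg fun x _ => mul_nonneg (expMeasure_pos ℓ x).le (hf _)
  obtain ⟨X, hX₁, hX₂⟩ := exists_le_of_le_weightedAvg (expMeasure_mem_stdSimplex ℓ) hα₁
    (diffAvg_translate_le hμ₂ hα₂) (hα ▸ havg₁) (hα ▸ havg₂)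
  exact ⟨X, by linarith [hα₀], by linarith [hα₀]⟩

lemma bijective_of_add_self_eq {M : Type*} [Add M] [Finite M] {half : M → M}
    (hhalf : ∀ t, half t + half t = t) : Function.Bijective half :=
  Function.Injective.bijective_of_finite fun x y hxy => by rw [← hhalf x, hxy, hhalf]

lemma diffAvg_expMeasure_comp {H : G →+ G} (hH : Function.Bijective H) (ℓ F : G → ℝ) :
    diffAvg (expMeasure fun t => ℓ (H t)) (fun t => F (H t)) = diffAvg (expMeasure ℓ) F := by
  have hmeas (u : G) : expMeasure (fun t => ℓ (H t)) u = expMeasure ℓ (H u) := by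
    rw [expMeasure, expMeasure, expMass, expMass, hH.sum_comp fun x => exp (-ℓ x)]
  simp only [diffAvg, hmeas, map_sub]
  rw [← hH.sum_comp fun u => ∑ v, expMeasure ℓ u * expMeasure ℓ v * F (u - v)]
  exact sum_congr rfl fun u _ =>
    hH.sum_comp fun v => expMeasure ℓ (H u) * expMeasure ℓ v * F (H u - v)

end Translates

section DensityIncrement

/-- Upper bound for the rank of all Bohr lengths in the density increment argument. -/
def maxRank (L : ℕ) : ℝ := 10 ^ 24 * L ^ 7

/-- The dilation of the current length whose measure carries the density of `f`. -/
def densityScale (L : ℕ) : ℝ := 56000 * maxRank L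

/-- The dilation of the current length at which the differences in the sifting step live. -/
noncomputable def differenceScale (L : ℕ) : ℝ :=
  16000000 * L * maxRank L * exp L * densityScale L

/-- The further dilation needed for the set of almost periods. -/
def periodScale (L : ℕ) : ℝ := 10 ^ 24 * maxRank L * L ^ 7

/-- The dilation applied to a length after adding the characters of the large spectrum. -/
noncomputable def spectrumScale (L : ℕ) : ℝ := 2 * 10 ^ 6 * maxRank L * exp L

/-- The factor by which one density increment multiplies the scale of a Bohr length. -/
noncomputable def scaleGrowth (L : ℕ) : ℝ :=
  spectrumScale L * (2 * periodScale L * differenceScale L + 1)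

variable {L : ℕ}

lemma one_le_maxRank (hL : 1 ≤ L) : 1 ≤ maxRank L := by
  have hpow : (1 : ℝ) ≤ L ^ 7 := one_le_pow₀ (by exact_mod_cast hL)
  rw [maxRank]
  linarith

lemma le_spectrumScale (hL : 1 ≤ L) : 2 * 10 ^ 6 * maxRank L ≤ spectrumScale L :=
  le_mul_of_one_le_right (by linarith [one_le_maxRank hL]) (one_le_exp L.cast_nonneg)

lemma one_le_periodScale (hL : 1 ≤ L) : 1 ≤ periodScale L := by
  have hpow : (1 : ℝ) ≤ L ^ 7 := one_le_pow₀ (by exact_mod_cast hL)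
  exact one_le_mul_of_one_le_of_one_le (by linarith [one_le_maxRank hL]) hpow

lemma mul_densityScale_le_differenceScale (hL : 1 ≤ L) :
    16000000 * maxRank L * densityScale L ≤ differenceScale L := by
  have hL' : (1 : ℝ) ≤ L := by exact_mod_cast hL
  have hR := one_le_maxRank hL
  have hLexp : 1 ≤ L * exp L := one_le_mul_of_one_le_of_one_le hL' (one_le_exp L.cast_nonneg)
  refine mul_le_mul_of_nonneg_right ?_ (by rw [densityScale]; linarith)
  nlinarith

lemma densityScale_le_differenceScale (hL : 1 ≤ L) : densityScale L ≤ differenceScale L := by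
  have hR := one_le_maxRank hL
  refine le_trans ?_ (mul_densityScale_le_differenceScale hL)
  rw [densityScale]
  nlinarith

lemma differenceScale_pos (hL : 1 ≤ L) : 0 < differenceScale L := by
  have hle := densityScale_le_differenceScale hL
  rw [densityScale] at hle
  linarith [one_le_maxRank hL]

lemma mul_maxRank_le_differenceScale (hL : 1 ≤ L) : 140000 * maxRank L ≤ differenceScale L := by
  have hR := one_le_maxRank hL
  refine le_trans ?_ (mul_densityScale_le_differenceScale hL)
  rw [densityScale]
  nlinarith

lemma spectrumScale_mul_le_scaleGrowth_mul {b : ℝ} (hL : 1 ≤ L) (hb : 0 ≤ b) :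
    spectrumScale L * (2 * (periodScale L * (differenceScale L * b)) + 1) ≤
      scaleGrowth L * (b + 1) := by
  have hspec := le_spectrumScale hL
  have hR := one_le_maxRank hL
  have hmul : 0 ≤ periodScale L * differenceScale L :=
    mul_nonneg (by linarith [one_le_periodScale hL]) (differenceScale_pos hL).le
  rw [scaleGrowth, mul_assoc]
  exact mul_le_mul_of_nonneg_left (by nlinarith) (by linarith)

lemma differenceScale_mul_le_scaleGrowth_mul {b : ℝ} (hL : 1 ≤ L) (hb : 0 ≤ b) :
    differenceScale L * b ≤ scaleGrowth L * (b + 1) := by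
  refine le_trans ?_ (spectrumScale_mul_le_scaleGrowth_mul hL hb)
  have hdiff := mul_nonneg (differenceScale_pos hL).le hb
  have hperiod := le_mul_of_one_le_left hdiff (one_le_periodScale hL)
  have hspec : 1 ≤ spectrumScale L := by linarith [le_spectrumScale hL, one_le_maxRank hL]
  exact (by linarith : _ ≤ 2 * (periodScale L * (differenceScale L * b)) + 1).trans
    (le_mul_of_one_le_left (by linarith) hspec)

variable {G : Type*} [AddCommGroup G] {f w l g ℓ μ : G → ℝ} {α r R b c ε θ K M : ℝ}

lemma threeAPFree_support_translate (hfree : ThreeAPFree (Function.support f)) (X : G) :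
    ThreeAPFree (Function.support fun y => f (X + y)) :=
  fun _ hx _ hy _ hz hxyz => add_left_cancel <|
    hfree hx hy hz (by rw [add_add_add_comm, hxyz, add_add_add_comm])

lemma IsBohrLength.add_sum_charLength (hℓ : IsBohrLength r b ℓ) (hK : 0 ≤ K) (hb : 0 ≤ b)
    {Λ : Finset (AddChar G ℂ)} (hΛ : #Λ ≤ M) :
    IsBohrLength (r + M) (2 * (K * b) + 1)
      (fun t => 2 * (K * ℓ t) + ∑ γ ∈ Λ, charLength γ t) := by
  have hKb : 0 ≤ 2 * (K * b) := by positivity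
  exact (((hℓ.const_mul hK).const_mul zero_le_two).mono le_rfl (by linarith)).add
    ((IsBohrLength.sum_charLength Λ).mono hΛ (by linarith))

variable [Fintype G]

lemma IsLength.isSlowWeight_sqrt_expMeasure (hℓ : IsLength ℓ) :
    IsSlowWeight (fun x => √(expMeasure ℓ x)) (fun t => 1 / 2 * ℓ t) where
  isLength := hℓ.const_mul (by norm_num)
  pos x := sqrt_pos.2 (expMeasure_pos ℓ x)
  map_neg x := by rw [expMeasure, expMeasure, hℓ.map_neg]
  sum_sq := by
    simp only [sq_sqrt (expMeasure_pos ℓ _).le]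
    exact (expMeasure_mem_stdSimplex ℓ).2
  le_exp_mul x t := by
    rw [show exp (1 / 2 * ℓ t) = √(exp (ℓ t)) by rw [← exp_half, one_div_mul_eq_div],
      ← sqrt_mul (exp_pos _).le]
    exact sqrt_le_sqrt (hℓ.expMeasure_add_le x t)

lemma IsLength.weightedDensity_translate (hℓ : IsLength ℓ) (hf₀ : ∀ x, 0 ≤ f x)
    (hf₁ : ∀ x, f x ≤ 1) {X : G} (hX : 0 < weightedAvg (expMeasure ℓ) f X) :
    WeightedDensity (fun y => f (X + y)) (fun x => √(expMeasure ℓ x)) (fun t => 1 / 2 * ℓ t)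
      (weightedAvg (expMeasure ℓ) f X) where
  toIsSlowWeight := hℓ.isSlowWeight_sqrt_expMeasure
  f_nonneg _ := hf₀ _
  f_le_one _ := hf₁ _
  sum_eq := by simp only [sq_sqrt (expMeasure_pos ℓ _).le, weightedAvg, mul_comm (f _)]
  density_pos := hX

lemma IsSlowWeight.weightedAvg_mul_le (hw : IsSlowWeight w l) (hf₀ : ∀ x, 0 ≤ f x)
    (hf₁ : ∀ x, f x ≤ 1) (hμ : μ ∈ stdSimplex ℝ G) (hlg : ∀ t, l t ≤ g t)
    (hg : ∑ t, μ t * exp (g t) ≤ 1 + ε) (y : G) :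
    weightedAvg μ (f * w) y ≤ (weightedAvg μ f y + ε) * w y := by
  have hterm (t : G) : f (y + t) * w (y + t) ≤ (f (y + t) + (exp (g t) - 1)) * w y := by
    have hexp : 1 ≤ exp (g t) := one_le_exp ((hw.isLength.nonneg t).trans (hlg t))
    have hslow : w (y + t) ≤ exp (g t) * w y := (hw.le_exp_mul y t).trans
      (mul_le_mul_of_nonneg_right (exp_le_exp.2 (hlg t)) (hw.pos y).le)
    calc f (y + t) * w (y + t) ≤ f (y + t) * (exp (g t) * w y) :=
          mul_le_mul_of_nonneg_left hslow (hf₀ _)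
      _ = (f (y + t) + f (y + t) * (exp (g t) - 1)) * w y := by ring
      _ ≤ (f (y + t) + (exp (g t) - 1)) * w y := by
          have hpos := hw.pos y
          gcongr
          exact mul_le_of_le_one_left (by linarith) (hf₁ _)
  calc weightedAvg μ (f * w) y ≤ ∑ t, μ t * ((f (y + t) + (exp (g t) - 1)) * w y) :=
        sum_le_sum fun t _ => mul_le_mul_of_nonneg_left (hterm t) (hμ.1 t)
    _ = (weightedAvg μ f y + (∑ t, μ t * exp (g t) - 1)) * w y := by
        simp only [weightedAvg, ← mul_assoc, ← sum_mul, mul_add, mul_sub, mul_one,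
          sum_add_distrib, sum_sub_distrib, hμ.2]
    _ ≤ (weightedAvg μ f y + ε) * w y :=
        mul_le_mul_of_nonneg_right (by linarith) (hw.pos y).le

lemma IsSlowWeight.sum_weightedAvg_mul_sq_le (hw : IsSlowWeight w l) (hf₀ : ∀ x, 0 ≤ f x)
    (hf₁ : ∀ x, f x ≤ 1) (hμ : μ ∈ stdSimplex ℝ G) (hlg : ∀ t, l t ≤ g t)
    (hg : ∑ t, μ t * exp (g t) ≤ 1 + ε) (hc : ∀ x, weightedAvg μ f x ≤ c) :
    ∑ x, weightedAvg μ (f * w) x ^ 2 ≤ (c + ε) ^ 2 :=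
  calc ∑ x, weightedAvg μ (f * w) x ^ 2 ≤ ∑ x, ((c + ε) * w x) ^ 2 :=
        sum_le_sum fun x _ => pow_le_pow_left₀
          (sum_nonneg fun t _ => mul_nonneg (hμ.1 t) (mul_nonneg (hf₀ _) (hw.pos _).le))
          ((hw.weightedAvg_mul_le hf₀ hf₁ hμ hlg hg x).trans
            (mul_le_mul_of_nonneg_right (add_le_add_left (hc x) ε) (hw.pos x).le)) 2
    _ = (c + ε) ^ 2 := by simp only [mul_pow, ← mul_sum, hw.sum_sq, mul_one]

lemma WeightedDensity.exists_card_le_energy_of_threeAPFree (h : WeightedDensity f w l α)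
    (hfree : ThreeAPFree (Function.support f)) {half : G → G} (hhalf : ∀ t, half t + half t = t)
    (hL : 1 ≤ L) (hℓ : IsBohrLength r b ℓ) (hrR : r + 1 ≤ R) (hθ₀ : 0 ≤ θ)
    (hlθ : ∀ t, l t ≤ θ * ℓ t) (hθ : 16000000 * L * R * exp L * θ ≤ 1)
    (hβ : exp (-L) / 2 ≤ diffAvg (expMeasure ℓ) (fun t => f (half t)))
    (hw : ∀ x, w x ^ 2 ≤ exp (-L) ^ 2 / 16) (hα : exp (-L) ≤ 1.01 * α) :
    ∃ Λ : Finset (AddChar G ℂ), (#Λ : ℝ) ≤ 2 * 10 ^ 20 * L ^ 6 ∧ ∀ μ ∈ stdSimplex ℝ G,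
      ∑ t, μ t * exp (2 * (10 ^ 24 * R * L ^ 7 * ℓ t) + ∑ γ ∈ Λ, charLength γ t) ≤ 1 + 0.00002 →
      1.014 * α ^ 2 ≤ ∑ x, weightedAvg μ (f * w) x ^ 2 := by
  have hr := hℓ.rank_nonneg
  have hexp : 1 ≤ exp (L : ℝ) := one_le_exp L.cast_nonneg
  have hαsq : exp (-L) ^ 2 ≤ (1.01 * α) ^ 2 := pow_le_pow_left₀ (exp_pos _).le hα 2
  have hexpsq : exp (-(2 * L)) = exp (-L) ^ 2 := by rw [← exp_nat_mul]; congr 1; push_cast; ring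
  have hLR : 16000000 * L * R * θ ≤ 1 := by
    refine le_trans ?_ hθ
    rw [mul_right_comm _ (exp _)]
    exact le_mul_of_one_le_right (mul_nonneg (mul_nonneg (by positivity) (by linarith)) hθ₀) hexp
  have hLθ : 0 ≤ L * θ := by positivity
  obtain ⟨φ, hφ, hφω, hbad⟩ := h.exists_sifted_expMeasure hfree hhalf hL hℓ hθ₀ hlθ
    (le_trans (by gcongr) hθ) hβ (fun x => by nlinarith [hw x, sq_nonneg α])
    (by rw [hexpsq]; nlinarith [sq_nonneg α])
  exact h.exists_card_le_energy hL hℓ hrR (θ := 1600 * (L * θ)) (by positivity) (by nlinarith)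
    (by nlinarith) (fun t => by
      push_cast
      linarith [mul_le_mul_of_nonneg_left (hlθ t) (by positivity : (0 : ℝ) ≤ 1600 * L)])
    hα hφ hφω hbad

lemma exists_card_le_energy_translate (hf₀ : ∀ x, 0 ≤ f x) (hf₁ : ∀ x, f x ≤ 1)
    (hfree : ThreeAPFree (Function.support f)) {H : G →+ G} (hH : ∀ t, H t + H t = t)
    (hL : 1 ≤ L) (hℓ : IsBohrLength r b ℓ) (hr : r + 1 ≤ maxRank L) {X : G}
    (hα : exp (-L) ≤ 1.01 * weightedAvg (expMeasure fun t => densityScale L * ℓ t) f X)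
    (hβ : exp (-L) / 2 ≤
      diffAvg (expMeasure fun t => differenceScale L * ℓ t) (fun t => f (X + t)))
    (hmass : 16 * exp (2 * L) ≤ expMass fun t => densityScale L * ℓ t) :
    ∃ Λ : Finset (AddChar G ℂ), (#Λ : ℝ) ≤ 2 * 10 ^ 20 * L ^ 6 ∧ ∀ μ ∈ stdSimplex ℝ G,
      ∑ t, μ t * exp (2 * (periodScale L * (differenceScale L * ℓ (H t))) +
        ∑ γ ∈ Λ, charLength γ t) ≤ 1 + 0.00002 →
      1.014 * weightedAvg (expMeasure fun t => densityScale L * ℓ t) f X ^ 2 ≤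
        ∑ x, weightedAvg μ ((fun y => f (X + y)) *
          fun y => √(expMeasure (fun t => densityScale L * ℓ t) y)) x ^ 2 := by
  have hK₁ : 0 < densityScale L := by rw [densityScale]; linarith [one_le_maxRank hL]
  have hK₂ := differenceScale_pos hL
  have hℓ₁ := (hℓ.const_mul hK₁.le).isLength
  have hα₀ : 0 < weightedAvg (expMeasure fun t => densityScale L * ℓ t) f X := by
    linarith [exp_pos (-(L : ℝ))]
  refine (hℓ₁.weightedDensity_translate hf₀ hf₁ hα₀).exists_card_le_energy_of_threeAPFree
    (threeAPFree_support_translate hfree X) hH hL ((hℓ.comp H).const_mul hK₂.le) hr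
    (θ := densityScale L / differenceScale L) (by positivity) (fun t => ?_) ?_ ?_ (fun x => ?_) hα
  · have hdouble := hℓ.isLength.map_add_le (H t) (H t)
    rw [hH] at hdouble
    rw [← mul_assoc (densityScale L / differenceScale L), div_mul_cancel₀ _ hK₂.ne']
    nlinarith
  · rw [← mul_div_assoc, ← differenceScale, div_self hK₂.ne']
  · rwa [diffAvg_expMeasure_comp (bijective_of_add_self_eq hH) (fun t => differenceScale L * ℓ t)
      (fun t => f (X + t))]
  · rw [sq_sqrt (expMeasure_pos _ x).le]
    calc expMeasure (fun t => densityScale L * ℓ t) x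
        ≤ 1 / expMass (fun t => densityScale L * ℓ t) := hℓ₁.expMeasure_le x
      _ ≤ 1 / (16 * exp (2 * L)) := one_div_le_one_div_of_le (by positivity) hmass
      _ = exp (-L) ^ 2 / 16 := by
          rw [← exp_nat_mul, Nat.cast_ofNat, mul_neg, exp_neg]
          field_simp

lemma IsBohrLength.exists_lt_weightedAvg_of_energy (hg : IsBohrLength r b g) (hL : 1 ≤ L)
    (hr : r ≤ maxRank L) (hw : IsSlowWeight w l) (hlg : ∀ t, l t ≤ g t) (hf₀ : ∀ x, 0 ≤ f x)
    (hf₁ : ∀ x, f x ≤ 1) (hα : exp (-L) ≤ α) (hαc : 0.9985 * α ≤ c)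
    (henergy : ∀ μ ∈ stdSimplex ℝ G, ∑ t, μ t * exp (g t) ≤ 1 + 0.00002 →
      1.014 * c ^ 2 ≤ ∑ x, weightedAvg μ (f * w) x ^ 2) :
    ∃ x, 1.0005 * α < weightedAvg (expMeasure fun t => spectrumScale L * g t) f x := by
  by_contra! hcon
  have hR := one_le_maxRank hL
  have hK := le_spectrumScale hL
  have hexp : exp (-L) / 2000 * spectrumScale L = 1000 * maxRank L := by
    rw [spectrumScale, exp_neg]
    field_simp
    norm_num
  have hexp_le : exp (-(L : ℝ)) ≤ 1 := exp_le_one_iff.2 (neg_nonpos.2 L.cast_nonneg)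
  have hμ := expMeasure_mem_stdSimplex fun t => spectrumScale L * g t
  have hlower := henergy _ hμ
    (hg.sum_expMeasure_const_mul_mul_exp_le (by linarith) (by linarith) (by norm_num))
  have hupper := hw.sum_weightedAvg_mul_sq_le hf₀ hf₁ hμ hlg
    (hg.sum_expMeasure_const_mul_mul_exp_le (ε := exp (-L) / 2000) (by linarith) (by linarith)
      (by linarith)) hcon
  have hα₀ : 0 < α := (exp_pos _).trans_le hα
  have hc_sq : (0.9985 * α) ^ 2 ≤ c ^ 2 := pow_le_pow_left₀ (by linarith) hαc 2
  have hα_sq : (1.0005 * α + exp (-L) / 2000) ^ 2 ≤ (1.001 * α) ^ 2 :=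
    pow_le_pow_left₀ (by linarith [exp_pos (-(L : ℝ))]) (by linarith) 2
  nlinarith [pow_pos hα₀ 2]

theorem IsBohrLength.exists_density_increment (hℓ : IsBohrLength r b ℓ) (hb : 0 ≤ b) (hL : 1 ≤ L)
    (hf₀ : ∀ x, 0 ≤ f x) (hf₁ : ∀ x, f x ≤ 1) (hfree : ThreeAPFree (Function.support f))
    {H : G →+ G} (hH : ∀ t, H t + H t = t) (hr : r + 2 * 10 ^ 20 * L ^ 6 + 1 ≤ maxRank L)
    {x₀ : G} (hα : exp (-L) ≤ weightedAvg (expMeasure ℓ) f x₀)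
    (hmass : ∀ ℓ' : G → ℝ, IsBohrLength (maxRank L) (scaleGrowth L * (b + 1)) ℓ' →
      16 * exp (2 * L) ≤ expMass ℓ') :
    ∃ (ℓ' : G → ℝ) (x : G),
      IsBohrLength (r + 2 * 10 ^ 20 * L ^ 6) (scaleGrowth L * (b + 1)) ℓ' ∧
      1.0005 * weightedAvg (expMeasure ℓ) f x₀ < weightedAvg (expMeasure ℓ') f x := by
  by_contra! hcon
  have hR := one_le_maxRank hL
  have hM : (0 : ℝ) ≤ 2 * 10 ^ 20 * L ^ 6 := by positivity
  have hK₁ : densityScale L = 56000 * maxRank L := rfl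
  have hK₂ := mul_maxRank_le_differenceScale hL
  have hK₁₂ := densityScale_le_differenceScale hL
  have hK := one_le_periodScale hL
  have hK₄ := le_spectrumScale hL
  have hdiff := differenceScale_mul_le_scaleGrowth_mul hL hb
  have hℓ₁ := (hℓ.const_mul (k := densityScale L) (by linarith)).mono le_rfl
    ((mul_le_mul_of_nonneg_right hK₁₂ hb).trans hdiff)
  have hℓ₂ := (hℓ.const_mul (k := differenceScale L) (by linarith)).mono le_rfl hdiff
  have hα₀ := (exp_pos _).trans_le hα
  obtain ⟨X, hX₁, hX₂⟩ := hℓ.exists_translate hf₀ rfl (by linarith) (by linarith) (by linarith)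
    (by linarith) (fun x => hcon _ x (hℓ₁.mono (by linarith) le_rfl))
    (fun x => hcon _ x (hℓ₂.mono (by linarith) le_rfl))
  obtain ⟨Λ, hΛ, henergy⟩ := exists_card_le_energy_translate hf₀ hf₁ hfree hH hL hℓ
    (by linarith) (X := X) (by linarith) (by linarith) (hmass _ (hℓ₁.mono (by linarith) le_rfl))
  have hℓH := (hℓ.comp H).const_mul (k := differenceScale L) (by linarith)
  have hg := hℓH.add_sum_charLength (by linarith : 0 ≤ periodScale L)
    (mul_nonneg (by linarith) hb) hΛ
  have hlength : ∀ t, 1 / 2 * (densityScale L * ℓ t) ≤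
      2 * (periodScale L * (differenceScale L * ℓ (H t))) + ∑ γ ∈ Λ, charLength γ t := fun t => by
    have hdouble := hℓ.isLength.map_add_le (H t) (H t)
    rw [hH] at hdouble
    have hnonneg : 0 ≤ ∑ γ ∈ Λ, charLength γ t := sum_nonneg fun γ _ => norm_nonneg _
    have hℓHt := le_mul_of_one_le_left (hℓH.isLength.nonneg t) hK
    linarith [mul_le_mul_of_nonneg_left hdouble (by linarith : 0 ≤ densityScale L),
      mul_le_mul_of_nonneg_right hK₁₂ (hℓ.isLength.nonneg (H t)), hℓH.isLength.nonneg t]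
  obtain ⟨y, hy⟩ := hg.exists_lt_weightedAvg_of_energy hL (by linarith)
    hℓ₁.isLength.isSlowWeight_sqrt_expMeasure hlength (fun _ => hf₀ _) (fun _ => hf₁ _) hα
    hX₁ henergy
  refine hy.not_ge (le_of_eq_of_le ?_ (hcon _ (X + y) ((hg.const_mul (by linarith)).mono le_rfl
    (spectrumScale_mul_le_scaleGrowth_mul hL hb))))
  simp only [weightedAvg, add_assoc]

end DensityIncrement

section Iteration

variable {L : ℕ}

lemma ten_le_exp_three : 10 ≤ exp 3 :=
  calc (10 : ℝ) ≤ 2.7 ^ 3 := by norm_num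
    _ ≤ exp 1 ^ 3 := pow_le_pow_left₀ (by norm_num) (by linarith [exp_one_gt_d9]) 3
    _ = exp 3 := by rw [← exp_nat_mul]; norm_num

lemma one_le_scaleGrowth (hL : 1 ≤ L) : 1 ≤ scaleGrowth L := by
  have hspec : 1 ≤ spectrumScale L := by linarith [le_spectrumScale hL, one_le_maxRank hL]
  have hmul : 0 ≤ periodScale L * differenceScale L :=
    mul_nonneg (by linarith [one_le_periodScale hL]) (differenceScale_pos hL).le
  exact one_le_mul_of_one_le_of_one_le hspec (by linarith)

lemma natCast_le_exp (L : ℕ) : (L : ℝ) ≤ exp L := by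
  linarith [add_one_le_exp (L : ℝ)]

lemma maxRank_le (L : ℕ) : maxRank L ≤ 10 ^ 24 * exp L ^ 7 := by
  rw [maxRank]
  gcongr
  exact natCast_le_exp L

lemma spectrumScale_le (L : ℕ) : spectrumScale L ≤ 2 * 10 ^ 30 * exp L ^ 8 :=
  calc spectrumScale L ≤ 2 * 10 ^ 6 * (10 ^ 24 * exp L ^ 7) * exp L := by
        rw [spectrumScale]
        gcongr
        exact maxRank_le L
    _ = 2 * 10 ^ 30 * exp L ^ 8 := by ring

lemma periodScale_le (L : ℕ) : periodScale L ≤ 10 ^ 48 * exp L ^ 14 :=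
  calc periodScale L ≤ 10 ^ 24 * (10 ^ 24 * exp L ^ 7) * exp L ^ 7 := by
        rw [periodScale]
        gcongr
        exacts [maxRank_le L, natCast_le_exp L]
    _ = 10 ^ 48 * exp L ^ 14 := by ring

lemma differenceScale_le (hL : 1 ≤ L) : differenceScale L ≤ 10 ^ 60 * exp L ^ 16 := by
  have hR : 0 ≤ maxRank L := by linarith [one_le_maxRank hL]
  calc differenceScale L
      ≤ 16000000 * exp L * (10 ^ 24 * exp L ^ 7) * exp L *
          (56000 * (10 ^ 24 * exp L ^ 7)) := by
        rw [differenceScale, densityScale]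
        gcongr
        exacts [natCast_le_exp L, maxRank_le L, maxRank_le L]
    _ = 896 * 10 ^ 57 * exp L ^ 16 := by ring
    _ ≤ 10 ^ 60 * exp L ^ 16 := by gcongr; norm_num

lemma two_mul_scaleGrowth_le_exp (hL : 1 ≤ L) : 2 * scaleGrowth L ≤ exp (460 * L) := by
  have hdiff := (differenceScale_pos hL).le
  have hone : 1 ≤ exp (L : ℝ) ^ 30 := one_le_pow₀ (one_le_exp L.cast_nonneg)
  have hprod : 2 * periodScale L * differenceScale L + 1 ≤ 3 * 10 ^ 108 * exp L ^ 30 :=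
    calc 2 * periodScale L * differenceScale L + 1
        ≤ 2 * (10 ^ 48 * exp L ^ 14) * (10 ^ 60 * exp L ^ 16) + 1 := by
          gcongr
          exacts [periodScale_le L, differenceScale_le hL]
      _ = 2 * 10 ^ 108 * exp L ^ 30 + 1 := by ring
      _ ≤ 3 * 10 ^ 108 * exp L ^ 30 := by linarith
  have hperiod : 0 ≤ periodScale L := by linarith [one_le_periodScale hL]
  calc 2 * scaleGrowth L
      ≤ 2 * ((2 * 10 ^ 30 * exp L ^ 8) * (3 * 10 ^ 108 * exp L ^ 30)) := by
        rw [scaleGrowth]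
        gcongr
        exact spectrumScale_le L
    _ = 12 * 10 ^ 138 * exp L ^ 38 := by ring
    _ ≤ 10 ^ 140 * exp L ^ 38 := by gcongr; norm_num
    _ ≤ exp 3 ^ 140 * exp L ^ 38 := by gcongr; exact ten_le_exp_three
    _ = exp (420 + 38 * L) := by rw [← exp_nat_mul, ← exp_nat_mul, ← exp_add]; norm_num
    _ ≤ exp (460 * L) := by
        have hL' : (1 : ℝ) ≤ L := by exact_mod_cast hL
        exact exp_le_exp.2 (by linarith)

lemma two_mul_pow_scaleGrowth_le (hL : 1 ≤ L) :
    2 * (2 * scaleGrowth L) ^ (4000 * L) ≤ 2 ^ (4000000 * L ^ 2) := by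
  have hexp : exp 1 ≤ (2 : ℝ) ^ 2 := by linarith [exp_one_lt_three]
  calc 2 * (2 * scaleGrowth L) ^ (4000 * L) ≤ 2 * exp (460 * L) ^ (4000 * L) := by
        have hQ := one_le_scaleGrowth hL
        gcongr
        exact two_mul_scaleGrowth_le_exp hL
    _ = 2 * exp 1 ^ (1840000 * L ^ 2) := by
        rw [← exp_nat_mul, ← exp_nat_mul]
        push_cast
        ring_nf
    _ ≤ 2 * (2 ^ 2) ^ (1840000 * L ^ 2) := by gcongr
    _ = 2 ^ (1 + 2 * (1840000 * L ^ 2)) := by rw [pow_add, pow_mul 2 2, pow_one]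
    _ ≤ 2 ^ (4000000 * L ^ 2) := by
        have hLsq := Nat.one_le_pow 2 L hL
        exact pow_le_pow_right₀ one_le_two (by omega)

lemma mul_add_one_le_maxRank (hL : 1 ≤ L) {i : ℕ} (hi : i ≤ 4000 * L) :
    i * (2 * 10 ^ 20 * (L : ℝ) ^ 6) + 1 ≤ maxRank L := by
  have hi' : (i : ℝ) ≤ 4000 * L := by exact_mod_cast hi
  have hpow : (1 : ℝ) ≤ L ^ 7 := one_le_pow₀ (by exact_mod_cast hL)
  calc i * (2 * 10 ^ 20 * (L : ℝ) ^ 6) + 1 ≤ 4000 * L * (2 * 10 ^ 20 * L ^ 6) + 1 := by gcongr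
    _ = 8 * 10 ^ 23 * (L : ℝ) ^ 7 + 1 := by ring
    _ ≤ maxRank L := by rw [maxRank]; linarith

lemma exp_lt_pow_mul (hL : 1 ≤ L) : exp L < (1.0005 : ℝ) ^ (4000 * L) := by
  have hthree : (3 : ℝ) ≤ 1.0005 ^ 4000 := by
    have hbernoulli := one_add_mul_le_pow (a := (0.0005 : ℝ)) (by norm_num) 4000
    rw [show (1.0005 : ℝ) = 1 + 0.0005 by norm_num]
    exact le_trans (by norm_num) hbernoulli
  calc exp L = exp 1 ^ L := by rw [← exp_nat_mul, mul_one]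
    _ < 3 ^ L := pow_lt_pow_left₀ exp_one_lt_three (exp_pos 1).le (by omega)
    _ ≤ (1.0005 ^ 4000) ^ L := pow_le_pow_left₀ (by norm_num) hthree L
    _ = 1.0005 ^ (4000 * L) := (pow_mul _ _ _).symm

variable {G : Type*} [AddCommGroup G] [Fintype G] {f : G → ℝ}

lemma IsBohrLength.mul_exp_le_expMass {ℓ : G → ℝ} (hL : 1 ≤ L)
    (hG : exp (10 ^ 32 * L ^ 9) ≤ Fintype.card G)
    (hℓ : IsBohrLength (maxRank L) ((2 * scaleGrowth L) ^ (4000 * L)) ℓ) :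
    16 * exp (2 * L) ≤ expMass ℓ := by
  have hL' : (1 : ℝ) ≤ L := by exact_mod_cast hL
  have hpow₇ : (L : ℝ) ^ 7 ≤ L ^ 9 := pow_le_pow_right₀ hL' (by norm_num)
  have hpow₁ : (L : ℝ) ≤ L ^ 9 := le_self_pow₀ hL' (by norm_num)
  have hexponent : 6 + 2 * (L : ℝ) ≤ 10 ^ 32 * L ^ 9 +
      -(7 * maxRank L * (4000000 * L ^ 2 : ℕ) + maxRank L) :=
    calc 6 + 2 * (L : ℝ) ≤ 10 ^ 32 * L ^ 9 + -(28 * 10 ^ 30 * L ^ 9 + 10 ^ 24 * L ^ 7) := by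
          linarith
      _ = _ := by rw [maxRank]; push_cast; ring
  calc 16 * exp (2 * L) ≤ exp 3 ^ 2 * exp (2 * L) := by
        gcongr
        nlinarith [ten_le_exp_three]
    _ = exp (6 + 2 * L) := by rw [← exp_nat_mul, ← exp_add]; norm_num
    _ ≤ exp (10 ^ 32 * L ^ 9) *
          exp (-(7 * maxRank L * (4000000 * L ^ 2 : ℕ) + maxRank L)) := by
        rw [← exp_add]
        exact exp_le_exp.2 hexponent
    _ ≤ Fintype.card G * exp (-(7 * maxRank L * (4000000 * L ^ 2 : ℕ) + maxRank L)) := by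
        gcongr
    _ ≤ expMass ℓ := hℓ.card_mul_exp_le_expMass (two_mul_pow_scaleGrowth_le hL)

lemma weightedAvg_expMeasure_zero (f : G → ℝ) (x : G) :
    weightedAvg (expMeasure 0) f x = (∑ y, f y) / Fintype.card G := by
  simp only [weightedAvg, expMeasure, expMass, Pi.zero_apply, neg_zero, exp_zero, sum_const,
    card_univ, nsmul_one, ← mul_sum]
  rw [Fintype.sum_equiv (Equiv.addLeft x) (fun s => f (x + s)) f fun _ => rfl, one_div_mul_eq_div]

lemma exists_isBohrLength_of_threeAPFree (hL : 1 ≤ L) (hf₀ : ∀ x, 0 ≤ f x) (hf₁ : ∀ x, f x ≤ 1)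
    (hfree : ThreeAPFree (Function.support f)) {H : G →+ G} (hH : ∀ t, H t + H t = t)
    (hdensity : exp (-L) * Fintype.card G ≤ ∑ x, f x)
    (hG : exp (10 ^ 32 * L ^ 9) ≤ Fintype.card G) {i : ℕ} (hi : i ≤ 4000 * L) :
    ∃ (ℓ : G → ℝ) (x : G), IsBohrLength (i * (2 * 10 ^ 20 * L ^ 6)) ((2 * scaleGrowth L) ^ i) ℓ ∧
      1.0005 ^ i * exp (-L) ≤ weightedAvg (expMeasure ℓ) f x := by
  have hQ := one_le_scaleGrowth hL
  induction i with
  | zero =>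
    refine ⟨0, 0, IsBohrLength.zero.mono (by simp) (by simp), ?_⟩
    rw [weightedAvg_expMeasure_zero, le_div_iff₀ (by exact_mod_cast Fintype.card_pos),
      pow_zero, one_mul]
    exact hdensity
  | succ i ih =>
    obtain ⟨ℓ, x, hℓ, hx⟩ := ih (by omega)
    have hpow : 1 ≤ (2 * scaleGrowth L) ^ i := one_le_pow₀ (by linarith)
    have hscale : scaleGrowth L * ((2 * scaleGrowth L) ^ i + 1) ≤
        (2 * scaleGrowth L) ^ (i + 1) := by
      rw [pow_succ]
      nlinarith
    have hrank := mul_add_one_le_maxRank hL hi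
    rw [Nat.cast_succ, add_mul, one_mul] at hrank ⊢
    obtain ⟨ℓ', x', hℓ', hx'⟩ := hℓ.exists_density_increment (by linarith) hL hf₀ hf₁ hfree hH hrank
      ((le_mul_of_one_le_left (exp_pos _).le (one_le_pow₀ (by norm_num))).trans hx)
      fun ℓ'' hℓ'' => (hℓ''.mono le_rfl
        (hscale.trans (pow_le_pow_right₀ (by linarith) hi))).mul_exp_le_expMass hL hG
    refine ⟨ℓ', x', hℓ'.mono le_rfl hscale, le_trans ?_ hx'.le⟩
    rw [pow_succ']
    linarith

/-- The **Kelley–Meka theorem**, with the exponent `9` of Bloom and Sisask. -/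
theorem card_lt_exp_of_threeAPFree (hL : 1 ≤ L) (hf₀ : ∀ x, 0 ≤ f x) (hf₁ : ∀ x, f x ≤ 1)
    (hfree : ThreeAPFree (Function.support f)) {H : G →+ G} (hH : ∀ t, H t + H t = t)
    (hdensity : exp (-L) * Fintype.card G ≤ ∑ x, f x) :
    Fintype.card G < exp (10 ^ 32 * L ^ 9) := by
  by_contra! hG
  obtain ⟨ℓ, x, -, hx⟩ := exists_isBohrLength_of_threeAPFree hL hf₀ hf₁ hfree hH hdensity hG le_rfl
  have hle : weightedAvg (expMeasure ℓ) f x ≤ 1 :=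
    (sum_le_sum fun s _ => mul_le_of_le_one_right (expMeasure_pos ℓ s).le (hf₁ _)).trans_eq
      (expMeasure_mem_stdSimplex ℓ).2
  have hlt := mul_lt_mul_of_pos_right (exp_lt_pow_mul hL) (exp_pos (-(L : ℝ)))
  rw [← exp_add, add_neg_cancel, exp_zero] at hlt
  linarith

end Iteration

section Integers

lemma threeAPFree_image_intCast {M : ℕ} {S : Finset ℤ} (hS : S ⊆ Icc 1 (M : ℤ))
    (hfree : ThreeAPFree (S : Set ℤ)) :
    ThreeAPFree (S.image ((↑) : ℤ → ZMod (2 * M + 1)) : Set (ZMod (2 * M + 1))) := by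
  simp only [coe_image]
  rintro _ ⟨a, ha, rfl⟩ _ ⟨b, hb, rfl⟩ _ ⟨c, hc, rfl⟩ habc
  refine congrArg _ (hfree ha hb hc ?_)
  have hdvd : ((2 * M + 1 : ℕ) : ℤ) ∣ a + c - (b + b) := by
    rw [← ZMod.intCast_zmod_eq_zero_iff_dvd]
    push_cast
    rw [habc, sub_self]
  have hbounds := fun x hx => mem_Icc.1 (@hS x hx)
  obtain ⟨⟨ha₁, ha₂⟩, ⟨hb₁, hb₂⟩, hc₁, hc₂⟩ :=
    And.intro (hbounds a ha) (And.intro (hbounds b hb) (hbounds c hc))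
  exact sub_eq_zero.1 (Int.eq_zero_of_abs_lt_dvd hdvd
    (abs_lt.2 (by push_cast; constructor <;> lia)))

lemma injOn_intCast {M : ℕ} {S : Finset ℤ} (hS : S ⊆ Icc 1 (M : ℤ)) :
    Set.InjOn ((↑) : ℤ → ZMod (2 * M + 1)) S := by
  intro a ha b hb hab
  have hdvd := (ZMod.intCast_eq_intCast_iff_dvd_sub a b _).1 hab
  have hbounds := fun x hx => mem_Icc.1 (@hS x hx)
  obtain ⟨⟨ha₁, ha₂⟩, hb₁, hb₂⟩ := And.intro (hbounds a ha) (hbounds b hb)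
  exact (sub_eq_zero.1 (Int.eq_zero_of_abs_lt_dvd hdvd
    (abs_lt.2 (by push_cast; constructor <;> lia)))).symm

lemma exists_addMonoidHom_add_self_eq {G : Type*} [AddCommGroup G] (hG : Odd (Nat.card G)) :
    ∃ H : G →+ G, ∀ t, H t + H t = t := by
  obtain ⟨k, hk⟩ := hG
  refine ⟨nsmulAddMonoidHom (k + 1), fun t => ?_⟩
  calc (k + 1) • t + (k + 1) • t = (2 * k + 1) • t + t := by module
    _ = t := by rw [← hk, card_nsmul_eq_zero', zero_add]

theorem card_le_exp_mul_of_threeAPFree {M L : ℕ} {S : Finset ℤ} (hS : S ⊆ Icc 1 (M : ℤ))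
    (hfree : ThreeAPFree (S : Set ℤ)) (hM : exp (10 ^ 32 * L ^ 9) ≤ M) :
    #S ≤ exp (-L) * (2 * M + 1) := by
  obtain rfl | hL := Nat.eq_zero_or_pos L
  · have hcard : #S ≤ M := by simpa using card_le_card hS
    have hcard' : (#S : ℝ) ≤ M := by exact_mod_cast hcard
    simp only [Nat.cast_zero, neg_zero, exp_zero, one_mul]
    linarith [(Nat.cast_nonneg M : (0 : ℝ) ≤ M)]
  by_contra! hcard
  set B := S.image ((↑) : ℤ → ZMod (2 * M + 1))
  have hBcard : #B = #S := card_image_of_injOn (injOn_intCast hS)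
  set f : ZMod (2 * M + 1) → ℝ := Set.indicator B 1
  have hfree' : ThreeAPFree (Function.support f) := by
    rw [Set.support_indicator, Function.support_one, Set.inter_univ]
    exact threeAPFree_image_intCast hS hfree
  have hsum : ∑ x, f x = #B := by simp [f, Set.indicator_apply]
  obtain ⟨H, hH⟩ := exists_addMonoidHom_add_self_eq (G := ZMod (2 * M + 1))
    (by rw [Nat.card_zmod]; exact odd_two_mul_add_one M)
  have hlt := card_lt_exp_of_threeAPFree (f := f) hL (Set.indicator_nonneg fun _ _ => zero_le_one)
    (fun x => Set.indicator_apply_le' (fun _ => le_rfl) fun _ => zero_le_one) hfree' hH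
    (by rw [hsum, hBcard, ZMod.card]; exact_mod_cast hcard.le)
  rw [ZMod.card] at hlt
  push_cast at hlt
  linarith [(Nat.cast_nonneg M : (0 : ℝ) ≤ M)]

/-- The linear equation `∑ i, c i * z i = 0` has no non-trivial solution with all `z i ∈ A`. -/
def OnlyTrivialSolutions {ι : Type*} [Fintype ι] (c : ι → ℤ) (A : Finset ℤ) : Prop :=
  ∀ v : ι → ℤ, (∀ i, v i ∈ A) → ∑ i, c i * v i = 0 → ∀ α, ∑ i with v i = α, c i = 0

variable {d : ℤ} {A A₁ A₂ : Finset ℤ}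

lemma OnlyTrivialSolutions.eq_of_add_eq (hA : OnlyTrivialSolutions ![1, 1, d, d, -2, -2 * d] A)
    (hd : d ≠ 0) (hA₁ : A₁ ⊆ A) (hA₂ : A₂ ⊆ A) (hdisj : Disjoint A₁ A₂) {x₁ x₂ x₃ y₁ y₂ y₃ : ℤ}
    (hx₁ : x₁ ∈ A₁) (hx₂ : x₂ ∈ A₁) (hx₃ : x₃ ∈ A₁) (hy₁ : y₁ ∈ A₂) (hy₂ : y₂ ∈ A₂)
    (hy₃ : y₃ ∈ A₂) (heq : (x₁ + d * y₁) + (x₃ + d * y₃) = (x₂ + d * y₂) + (x₂ + d * y₂)) :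
    x₁ = x₂ ∧ y₁ = y₂ := by
  have hne : ∀ {x y}, x ∈ A₁ → y ∈ A₂ → x ≠ y := fun hx hy h => disjoint_left.1 hdisj hx (h ▸ hy)
  have htriv (α : ℤ) : (if x₁ = α then 1 else 0) + (if x₃ = α then 1 else 0) +
      (if y₁ = α then d else 0) + (if y₃ = α then d else 0) + (if x₂ = α then -2 else 0) +
      (if y₂ = α then -2 * d else 0) = 0 := by
    have hsum := hA ![x₁, x₃, y₁, y₃, x₂, y₂]
      (by simpa [Fin.forall_fin_succ] using
        ⟨hA₁ hx₁, hA₁ hx₃, hA₂ hy₁, hA₂ hy₃, hA₁ hx₂, hA₂ hy₂⟩)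
      (by simp only [Fin.sum_univ_six, Matrix.cons_val]; linarith) α
    rwa [sum_filter, Fin.sum_univ_six] at hsum
  have hcoeff_x := htriv x₂
  have hcoeff_y := htriv y₂
  simp only [(hne hx₂ hy₁).symm, (hne hx₂ hy₂).symm, (hne hx₂ hy₃).symm, if_true, if_false]
    at hcoeff_x
  simp only [hne hx₁ hy₂, hne hx₂ hy₂, hne hx₃ hy₂, if_true, if_false] at hcoeff_y
  constructor <;> by_contra h
  · rw [if_neg h] at hcoeff_x
    split_ifs at hcoeff_x <;> lia
  · rw [if_neg h] at hcoeff_y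
    split_ifs at hcoeff_y <;> lia

lemma OnlyTrivialSolutions.threeAPFree_image₂
    (hA : OnlyTrivialSolutions ![1, 1, d, d, -2, -2 * d] A) (hd : d ≠ 0) (hA₁ : A₁ ⊆ A)
    (hA₂ : A₂ ⊆ A) (hdisj : Disjoint A₁ A₂) :
    ThreeAPFree (image₂ (fun x y => x + d * y) A₁ A₂ : Set ℤ) := by
  simp only [coe_image₂]
  rintro _ ⟨x₁, hx₁, y₁, hy₁, rfl⟩ _ ⟨x₂, hx₂, y₂, hy₂, rfl⟩ _ ⟨x₃, hx₃, y₃, hy₃, rfl⟩ heq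
  obtain ⟨rfl, rfl⟩ := hA.eq_of_add_eq hd hA₁ hA₂ hdisj hx₁ hx₂ hx₃ hy₁ hy₂ hy₃ heq
  rfl

lemma OnlyTrivialSolutions.card_image₂
    (hA : OnlyTrivialSolutions ![1, 1, d, d, -2, -2 * d] A) (hd : d ≠ 0) (hA₁ : A₁ ⊆ A)
    (hA₂ : A₂ ⊆ A) (hdisj : Disjoint A₁ A₂) :
    #(image₂ (fun x y => x + d * y) A₁ A₂) = #A₁ * #A₂ := by
  rw [card_image₂_iff]
  rintro ⟨x₁, y₁⟩ ⟨hx₁, hy₁⟩ ⟨x₂, y₂⟩ ⟨hx₂, hy₂⟩ heq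
  obtain ⟨hx, hy⟩ := hA.eq_of_add_eq hd hA₁ hA₂ hdisj hx₁ hx₂ hx₁ hy₁ hy₂ hy₁
    (congrArg₂ (· + ·) heq heq)
  exact Prod.ext hx hy

lemma image₂_subset_Icc {N d : ℕ} (hA₁ : A₁ ⊆ Icc 1 (N : ℤ)) (hA₂ : A₂ ⊆ Icc 1 (N : ℤ)) :
    image₂ (fun x y => x + (d : ℤ) * y) A₁ A₂ ⊆ Icc 1 (((d + 1) * N : ℕ) : ℤ) := by
  refine image₂_subset_iff.2 fun x hx y hy => ?_
  obtain ⟨hx₁, hx₂⟩ := mem_Icc.1 (hA₁ hx)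
  obtain ⟨hy₁, hy₂⟩ := mem_Icc.1 (hA₂ hy)
  rw [mem_Icc]
  push_cast
  constructor <;> nlinarith

lemma exists_disjoint_sq_card_le {α : Type*} (A : Finset α) :
    ∃ A₁ ⊆ A, ∃ A₂ ⊆ A, Disjoint A₁ A₂ ∧ #A ^ 2 ≤ 4 * (#A₁ * #A₂) + 1 := by
  classical
  obtain ⟨A₁, hA₁, hcard⟩ := exists_subset_card_eq (Nat.div_le_self #A 2)
  refine ⟨A₁, hA₁, A \ A₁, sdiff_subset, disjoint_sdiff, ?_⟩
  rw [card_sdiff_of_subset hA₁, hcard]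
  obtain ⟨k, hk | hk⟩ := Nat.even_or_odd' #A
  · rw [show #A - #A / 2 = k by lia, show #A / 2 = k by lia, hk]
    nlinarith
  · rw [show #A - #A / 2 = k + 1 by lia, show #A / 2 = k by lia, hk]
    nlinarith

theorem OnlyTrivialSolutions.sq_card_le {d N L : ℕ} (hd : 1 ≤ d) (hAN : A ⊆ Icc 1 (N : ℤ))
    (hA : OnlyTrivialSolutions ![1, 1, (d : ℤ), (d : ℤ), -2, -2 * (d : ℤ)] A)
    (hN : exp (10 ^ 32 * L ^ 9) ≤ N) : (#A : ℝ) ^ 2 ≤ 21 * d * exp (-L) * N := by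
  have hd' : (1 : ℝ) ≤ d := by exact_mod_cast hd
  have hd₀ : (d : ℤ) ≠ 0 := by exact_mod_cast (by lia : d ≠ 0)
  have hexpN : 1 ≤ exp (-L) * N := by
    have hLpow : (L : ℝ) ≤ 10 ^ 32 * L ^ 9 := by
      exact_mod_cast
        (Nat.le_self_pow (by norm_num) L).trans (Nat.le_mul_of_pos_left _ (by norm_num))
    calc 1 = exp (-L) * exp L := by rw [← exp_add, neg_add_cancel, exp_zero]
      _ ≤ exp (-L) * N := by gcongr; exact (exp_le_exp.2 hLpow).trans hN
  have hN₁ : 1 ≤ (N : ℝ) := (one_le_exp (by positivity)).trans hN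
  obtain ⟨A₁, hA₁, A₂, hA₂, hdisj, hcard⟩ := exists_disjoint_sq_card_le A
  have himage := card_le_exp_mul_of_threeAPFree
    (image₂_subset_Icc (d := d) (hA₁.trans hAN) (hA₂.trans hAN))
    (hA.threeAPFree_image₂ hd₀ hA₁ hA₂ hdisj) (L := L) (hN.trans (by push_cast; nlinarith))
  rw [hA.card_image₂ hd₀ hA₁ hA₂ hdisj] at himage
  have hmodulus : 2 * (((d + 1) * N : ℕ) : ℝ) + 1 ≤ 5 * d * N := by
    push_cast
    nlinarith
  calc (#A : ℝ) ^ 2 ≤ 4 * (#A₁ * #A₂ : ℕ) + 1 := by exact_mod_cast hcard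
    _ ≤ 4 * (exp (-L) * (5 * d * N)) + d * (exp (-L) * N) := by
      gcongr
      · exact himage.trans (mul_le_mul_of_nonneg_left hmodulus (exp_pos _).le)
      · exact one_le_mul_of_one_le_of_one_le hd' hexpN
    _ = 21 * d * exp (-L) * N := by ring

lemma exists_natCast_pow_le_exp_neg_le {y : ℝ} (hy : 0 ≤ y) :
    ∃ L : ℕ, 10 ^ 32 * (L : ℝ) ^ 9 ≤ y ∧
      exp (-L) ≤ 3 * exp (-(1 / 20000) * y ^ ((1 : ℝ) / 9)) ^ 2 := by
  set x := y ^ ((1 : ℝ) / 9) with hx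
  have hx₀ : 0 ≤ x := rpow_nonneg hy _
  have hx₉ : x ^ 9 = y := by
    rw [hx, ← rpow_natCast, ← rpow_mul hy]
    norm_num
  refine ⟨⌊x / 10000⌋₊, ?_, ?_⟩
  · calc 10 ^ 32 * (⌊x / 10000⌋₊ : ℝ) ^ 9 ≤ 10 ^ 32 * (x / 10000) ^ 9 := by
          gcongr
          exact Nat.floor_le (div_nonneg hx₀ (by norm_num))
      _ = y / 10000 := by rw [div_pow, hx₉]; ring
      _ ≤ y := div_le_self hy (by norm_num)
  · calc exp (-⌊x / 10000⌋₊) ≤ exp (1 + -(x / 10000)) :=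
          exp_le_exp.2 (by linarith [Nat.lt_floor_add_one (x / 10000)])
      _ = exp 1 * exp (-(1 / 20000) * x) ^ 2 := by
          rw [exp_add, ← exp_nat_mul]
          ring_nf
      _ ≤ 3 * exp (-(1 / 20000) * x) ^ 2 := by
          gcongr
          exact exp_one_lt_three.le

end Integers

end KelleyMeka

/-- For every integer `d ≥ 1` there are constants `c, C > 0` such that for every
`N ≥ 2`, every `A ⊆ [N]` containing no non-trivial solutions (every solution with entries in
`A` is trivial) to `x₁ + x₂ + d·x₃ + d·x₄ = 2y₁ + 2d·y₂` satisfies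
`|A| ≤ C·e^{−c·(log N)^{1/9}}·N^{1/2}`. The coefficient vector is `(1, 1, d, d, −2, −2d)`. -/
theorem statement16 (d : ℕ) (hd : 1 ≤ d) :
    ∃ c C : ℝ, 0 < c ∧ 0 < C ∧ ∀ N : ℕ, 2 ≤ N → ∀ A : Finset ℤ,
      A ⊆ Finset.Icc 1 (N : ℤ) →
      (∀ v : Fin 6 → ℤ, (∀ i, v i ∈ A) →
        (∑ i, ![(1 : ℤ), 1, (d : ℤ), (d : ℤ), -2, -2 * (d : ℤ)] i * v i) = 0 →
        ∀ α : ℤ, (∑ i ∈ Finset.univ.filter (fun i => v i = α),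
          ![(1 : ℤ), 1, (d : ℤ), (d : ℤ), -2, -2 * (d : ℤ)] i) = 0) →
      (A.card : ℝ) ≤ C * Real.exp (-c * (Real.log N) ^ ((1 : ℝ) / 9)) *
        (N : ℝ) ^ ((1 : ℝ) / 2) := by
  refine ⟨1 / 20000, 63 * d, by norm_num, by positivity, fun N hN A hAN hA => ?_⟩
  have hN₀ : (0 : ℝ) < N := by positivity
  obtain ⟨L, hL, hexp⟩ := KelleyMeka.exists_natCast_pow_le_exp_neg_le (Real.log_natCast_nonneg N)
  have hcard : (A.card : ℝ) ^ 2 ≤ 21 * d * Real.exp (-L) * N :=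
    KelleyMeka.OnlyTrivialSolutions.sq_card_le hd hAN hA ((Real.le_log_iff_exp_le hN₀).1 hL)
  have hsq : ((N : ℝ) ^ ((1 : ℝ) / 2)) ^ 2 = N := by
    rw [← Real.sqrt_eq_rpow, Real.sq_sqrt hN₀.le]
  have hd_sq : (63 : ℝ) * d ≤ (63 * d) ^ 2 := le_self_pow₀ (by norm_cast; lia) two_ne_zero
  refine le_of_sq_le_sq ?_ (by positivity)
  rw [mul_pow, mul_pow, hsq]
  calc (A.card : ℝ) ^ 2
      ≤ 21 * d * (3 * Real.exp (-(1 / 20000) * Real.log N ^ ((1 : ℝ) / 9)) ^ 2) * N :=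
        hcard.trans (by gcongr)
    _ = 63 * d * Real.exp (-(1 / 20000) * Real.log N ^ ((1 : ℝ) / 9)) ^ 2 * N := by ring
    _ ≤ (63 * d) ^ 2 * Real.exp (-(1 / 20000) * Real.log N ^ ((1 : ℝ) / 9)) ^ 2 * N := by gcongr
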